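/- arXiv:1610.02446 — 3 statements merged into one kernel-verified Lean document; each statement's English description precedes it below -/
import Mathlib

section
/- Let k ≥ 2 be an integer and z ∈ (0, 1/k] a real number, and set e(k,z) = (1−z)(kz + k − 2)/(k−1) and t(k,z) = (1−z)²(k−2)(2zk + k − 3)/(k−1)². Assume e(k,z) ≥ 1/2. Then every graphon W with triangle density d₃(W) = t(k,z) satisfies d₂(W) ≤ (3/2)·(e(k,z) − t(k,z)). -/
/-!
The weight of triples inducing exactly one edge is nonnegative; in terms of the edge density `p`
and the triangle density `t` this gives `d₂ ≤ 3 / 2 * (p - t)` for every graphon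
(`TriDensity.goodman_aux`). Hence it suffices to show `p ≤ e`, which is the theorem of Razborov
on the minimum triangle density for given edge density.

Both densities are continuous in `L¹`, so graphons are replaced by finite weighted graphs
(`TriDensity.exists_weighted_graph`), and Razborov's theorem is proved for those
(`TriDensity.razborov`) by induction on the number `s + 1` of parts of the extremal graph. Suppose
some weighted graph lies below the extremal curve for `s + 1` parts, and take one that minimizes
the triangle density minus the curve. Goodman's bound excludes the end points of the interval, so
the first-order conditions hold: `3 c`, the slope of the curve, controls codegrees
(`TriDensity.Stationary.edge_cond`) and determines the number of triangles at each vertex as a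
function of its degree (`TriDensity.Stationary.vtri_eq`). The edge condition, weighted by the
common non-neighbours of the two ends of an edge, bounds the density of complete graphs on four
vertices from above (`TriDensity.Stationary.kfour_le`). The induction hypothesis and Goodman's
bound, applied in the link of each vertex, bound the same density from below
(`TriDensity.vertex_ineq`), and the two bounds contradict each other.

A graph of edge density above `e` is brought down to edge density `e` by scaling its edge weights
(`TriDensity.tri_mul_cube_le`), which gives the strict growth needed to pass to the limit.
-/


open MeasureTheory Real

/-- A graphon: a symmetric measurable function `W : ℝ → ℝ → ℝ` taking values in `[0,1]`
(only its values on `[0,1]²` matter). -/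
structure Graphon where
  W : ℝ → ℝ → ℝ
  measurable : Measurable (Function.uncurry W)
  mem_Icc : ∀ x y, W x y ∈ Set.Icc (0 : ℝ) 1
  symm : ∀ x y, W x y = W y x

/-- Density of the empty 3-vertex graph (co-triangle). -/
noncomputable def d0 (G : Graphon) : ℝ :=
  ∫ x in Set.Icc (0 : ℝ) 1, ∫ y in Set.Icc (0 : ℝ) 1, ∫ z in Set.Icc (0 : ℝ) 1,
    (1 - G.W x y) * (1 - G.W y z) * (1 - G.W x z)

/-- Density of the one-edge 3-vertex graph (co-cherry). -/
noncomputable def d1 (G : Graphon) : ℝ :=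
  3 * ∫ x in Set.Icc (0 : ℝ) 1, ∫ y in Set.Icc (0 : ℝ) 1, ∫ z in Set.Icc (0 : ℝ) 1,
    G.W x y * (1 - G.W y z) * (1 - G.W x z)

/-- Density of the two-edge 3-vertex graph (cherry). -/
noncomputable def d2 (G : Graphon) : ℝ :=
  3 * ∫ x in Set.Icc (0 : ℝ) 1, ∫ y in Set.Icc (0 : ℝ) 1, ∫ z in Set.Icc (0 : ℝ) 1,
    G.W x y * G.W x z * (1 - G.W y z)

/-- Triangle density. -/
noncomputable def d3 (G : Graphon) : ℝ :=
  ∫ x in Set.Icc (0 : ℝ) 1, ∫ y in Set.Icc (0 : ℝ) 1, ∫ z in Set.Icc (0 : ℝ) 1,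
    G.W x y * G.W y z * G.W x z

/-- Edge density. -/
noncomputable def dE (G : Graphon) : ℝ :=
  ∫ x in Set.Icc (0 : ℝ) 1, ∫ y in Set.Icc (0 : ℝ) 1, G.W x y

/-- Degree of a vertex `x` in a graphon. -/
noncomputable def deg (G : Graphon) (x : ℝ) : ℝ :=
  ∫ y in Set.Icc (0 : ℝ) 1, G.W x y

noncomputable def hA1 (σ : ℝ) : ℝ :=
  (9 - 48 * σ + 114 * σ ^ 2 - 120 * σ ^ 3
      + 3 * (1 - 2 * σ) * (4 * σ - 1) ^ 2 * Real.sqrt (5 - 12 * σ)) / (10 - 24 * σ)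

noncomputable def hA3 (σ : ℝ) : ℝ :=
  (2 - 18 * σ + 57 * σ ^ 2 - 60 * σ ^ 3) / (5 - 12 * σ)

def hB1 (σ : ℝ) : ℝ := 6 * σ - 18 * σ ^ 2 + 18 * σ ^ 3

def hB3 (σ : ℝ) : ℝ := 1 - 6 * σ + 12 * σ ^ 2 - 6 * σ ^ 3

/-- The objective function of the optimization problem from Proposition 10. -/
def F (α x1 x2 x3 y1 y2 y3 : ℝ) : ℝ :=
  (x1 ^ 3 * (3 - α - 3 * (3 - α) * y1 - 3 * (α - 1) * y1 ^ 2) + 3 * x1 ^ 2 * y1) +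
  (x2 ^ 3 * (3 - α - 3 * (3 - α) * y2 - 3 * (α - 1) * y2 ^ 2) + 3 * x2 ^ 2 * y2) +
  (x3 ^ 3 * (3 - α - 3 * (3 - α) * y3 - 3 * (α - 1) * y3 ^ 2) + 3 * x3 ^ 2 * y3)

namespace TriDensity

open Finset Filter Topology

/-! ### Densities of finite weighted graphs -/

section Finite

variable {ι : Type*} [Fintype ι]

/-- `(A, x)` is a weighted graph: `A` is a symmetric matrix of edge weights in `[0, 1]` and `x` a
vector of nonnegative vertex weights. Diagonal entries of `A` are not forced to vanish, so that a
step graphon is a weighted graph on its cells. -/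
structure Valid (A : ι → ι → ℝ) (x : ι → ℝ) : Prop where
  symm : ∀ i j, A i j = A j i
  nonneg : ∀ i j, 0 ≤ A i j
  le_one : ∀ i j, A i j ≤ 1
  wt : ∀ i, 0 ≤ x i

/-- The edge weight `∑ A i j x i x j` over ordered pairs; the edge density if `x` has total
weight one. -/
def edge (A : ι → ι → ℝ) (x : ι → ℝ) : ℝ := ∑ i, ∑ j, A i j * (x i * x j)

/-- The weighted degree of the vertex `i`. -/
def vdeg (A : ι → ι → ℝ) (x : ι → ℝ) (i : ι) : ℝ := ∑ j, A i j * x j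

/-- The weight of the common neighbourhood of `i` and `j`. -/
def codeg (A : ι → ι → ℝ) (x : ι → ℝ) (i j : ι) : ℝ := ∑ k, A i k * A j k * x k

/-- The weight of ordered triangles through the vertex `i`, the factor `x i` left out. -/
def vtri (A : ι → ι → ℝ) (x : ι → ℝ) (i : ι) : ℝ :=
  ∑ j, ∑ k, A i j * A i k * A j k * (x j * x k)

/-- The triangle weight over ordered triples; the triangle density if `x` has total weight one. -/
def tri (A : ι → ι → ℝ) (x : ι → ℝ) : ℝ :=
  ∑ i, ∑ j, ∑ k, A i j * A i k * A j k * (x i * x j * x k)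

/-- The weight of not necessarily induced cherries: the weighted sum of squared degrees. -/
def cherry (A : ι → ι → ℝ) (x : ι → ℝ) : ℝ := ∑ i, x i * vdeg A x i ^ 2

theorem edge_eq (A : ι → ι → ℝ) (x : ι → ℝ) : edge A x = ∑ i, x i * vdeg A x i := by
  simp only [edge, vdeg, mul_sum]
  exact sum_congr rfl fun i _ => sum_congr rfl fun j _ => by ring

theorem tri_eq (A : ι → ι → ℝ) (x : ι → ℝ) : tri A x = ∑ i, x i * vtri A x i := by
  simp only [tri, vtri, mul_sum]
  exact sum_congr rfl fun i _ => sum_congr rfl fun j _ => sum_congr rfl fun k _ => by ring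

theorem vtri_eq (A : ι → ι → ℝ) (x : ι → ℝ) (i : ι) :
    vtri A x i = ∑ j, A i j * x j * codeg A x i j := by
  simp only [vtri, codeg, mul_sum]
  exact sum_congr rfl fun j _ => sum_congr rfl fun k _ => by ring

/-- The link of `v` is the graph `A` with vertex weights `A v j * x j`; its edge weight counts the
triangles through `v`. -/
theorem edge_link (A : ι → ι → ℝ) (x : ι → ℝ) (v : ι) :
    edge A (fun j => A v j * x j) = vtri A x v := by
  simp only [edge, vtri]
  exact sum_congr rfl fun j _ => sum_congr rfl fun k _ => by ring

theorem sum3_swap23 (f : ι → ι → ι → ℝ) :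
    ∑ i, ∑ j, ∑ k, f i j k = ∑ i, ∑ j, ∑ k, f i k j :=
  sum_congr rfl fun _ _ => sum_comm

theorem sum3_swap12 (f : ι → ι → ι → ℝ) :
    ∑ i, ∑ j, ∑ k, f i j k = ∑ i, ∑ j, ∑ k, f j i k := sum_comm

theorem sum_vtri_vdeg {A : ι → ι → ℝ} {x : ι → ℝ} :
    ∑ i, ∑ j, ∑ k, A i j * A i k * A j k * (x i * x j * x k) * vdeg A x i =
      ∑ i, x i * vtri A x i * vdeg A x i := by
  simp only [vtri, mul_sum, sum_mul]
  exact sum_congr rfl fun i _ => sum_congr rfl fun j _ => sum_congr rfl fun k _ => by ring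

theorem cherry_eq (A : ι → ι → ℝ) (x : ι → ℝ) :
    ∑ i, ∑ j, ∑ k, A i j * A i k * (x i * x j * x k) = cherry A x := by
  rw [cherry]
  refine sum_congr rfl fun i _ => ?_
  rw [vdeg, pow_two, sum_mul_sum, mul_sum]
  refine sum_congr rfl fun j _ => ?_
  rw [mul_sum]
  exact sum_congr rfl fun k _ => by ring

/-- Goodman's inequality before Cauchy–Schwarz: the induced one-edge triples have nonnegative
weight. For total weight one it bounds the induced cherries, `3 (cherry - tri)`, by
`3 / 2 * (edge - tri)`. -/
theorem goodman_aux {A : ι → ι → ℝ} {x : ι → ℝ} (h : Valid A x) :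
    2 * cherry A x - (∑ i, x i) * edge A x ≤ tri A x := by
  have h0 : 0 ≤ ∑ i, ∑ j, ∑ k, A i j * (1 - A i k) * (1 - A j k) * (x i * x j * x k) := by
    refine sum_nonneg fun i _ => sum_nonneg fun j _ => sum_nonneg fun k _ => ?_
    have := h.nonneg i j
    have := sub_nonneg.2 (h.le_one i k)
    have := sub_nonneg.2 (h.le_one j k)
    have := h.wt i
    have := h.wt j
    have := h.wt k
    positivity
  have e1 : ∑ i, ∑ j, ∑ k, A i j * (x i * x j * x k) = (∑ i, x i) * edge A x := by
    simp only [edge, sum_mul, mul_sum]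
    exact sum_congr rfl fun i _ => sum_congr rfl fun j _ => sum_congr rfl fun k _ => by ring
  have e2 := cherry_eq A x
  have e3 : ∑ i, ∑ j, ∑ k, A i j * A j k * (x i * x j * x k) = cherry A x := by
    rw [← e2, sum3_swap12]
    exact sum_congr rfl fun i _ => sum_congr rfl fun j _ => sum_congr rfl fun k _ => by
      rw [h.symm j i]; ring
  have e4 : ∑ i, ∑ j, ∑ k, A i j * (1 - A i k) * (1 - A j k) * (x i * x j * x k)
      = ∑ i, ∑ j, ∑ k, A i j * (x i * x j * x k) - ∑ i, ∑ j, ∑ k, A i j * A i k * (x i * x j * x k)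
        - ∑ i, ∑ j, ∑ k, A i j * A j k * (x i * x j * x k) + tri A x := by
    simp only [tri, ← sum_sub_distrib, ← sum_add_distrib]
    exact sum_congr rfl fun i _ => sum_congr rfl fun j _ => sum_congr rfl fun k _ => by ring
  rw [e4, e1, e2, e3] at h0
  linarith

/-- Goodman's lower bound for the triangle weight, for arbitrary total vertex weight. -/
theorem goodman {A : ι → ι → ℝ} {x : ι → ℝ} (h : Valid A x) :
    edge A x * (2 * edge A x - (∑ i, x i) ^ 2) ≤ (∑ i, x i) * tri A x := by
  have h1 := mul_le_mul_of_nonneg_left (goodman_aux h) (sum_nonneg fun i (_ : i ∈ univ) => h.wt i)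
  have h2 : edge A x ^ 2 ≤ (∑ i, x i) * cherry A x := by
    rw [edge_eq, cherry]
    refine Finset.sum_sq_le_sum_mul_sum_of_sq_le_mul _ (fun i _ => h.wt i)
      (fun i _ => mul_nonneg (h.wt i) (sq_nonneg _)) (fun i _ => le_of_eq (by ring))
  nlinarith

/-- The weight of two triangles sharing an edge: the sum of squared codegrees over the edges. -/
def book (A : ι → ι → ℝ) (x : ι → ℝ) : ℝ :=
  ∑ i, ∑ j, A i j * (x i * x j) * codeg A x i j ^ 2

theorem sum_tri_codeg (A : ι → ι → ℝ) (x : ι → ℝ) :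
    ∑ i, ∑ j, ∑ k, A i j * A i k * A j k * (x i * x j * x k) * codeg A x i j = book A x := by
  simp only [book, pow_two]
  refine sum_congr rfl fun i _ => sum_congr rfl fun j _ => ?_
  rw [← mul_assoc]
  nth_rewrite 3 [codeg]
  simp only [mul_sum]
  exact sum_congr rfl fun k _ => by ring

/-- The weight of complete graphs on four vertices: the triangles in the links of all vertices. -/
def kfour (A : ι → ι → ℝ) (x : ι → ℝ) : ℝ := ∑ v, x v * tri A (fun j => A v j * x j)

/-- Inclusion–exclusion for the weight of triangles together with a vertex joined to none of the
three corners, which is nonnegative. -/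
theorem kfour_le {A : ι → ι → ℝ} {x : ι → ℝ} (h : Valid A x) (hx : ∑ i, x i = 1) :
    kfour A x + 3 * (∑ i, x i * vtri A x i * vdeg A x i) - tri A x ≤ 3 * book A x := by
  set K : ι → ι → ι → ℝ := fun i j k => A i j * A i k * A j k * (x i * x j * x k) with hK
  have K12 : ∀ i j k, K j i k = K i j k := fun i j k => by
    simp only [hK]; rw [h.symm j i]; ring
  have K23 : ∀ i j k, K i k j = K i j k := fun i j k => by
    simp only [hK]; rw [h.symm k j]; ring
  have h0 : 0 ≤ ∑ i, ∑ j, ∑ k, K i j k *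
      ∑ w, x w * ((1 - A i w) * (1 - A j w) * (1 - A k w)) := by
    refine sum_nonneg fun i _ => sum_nonneg fun j _ => sum_nonneg fun k _ =>
      mul_nonneg ?_ (sum_nonneg fun w _ => ?_)
    · have := h.nonneg i j
      have := h.nonneg i k
      have := h.nonneg j k
      have := h.wt i
      have := h.wt j
      have := h.wt k
      simp only [hK]
      positivity
    · have := sub_nonneg.2 (h.le_one i w)
      have := sub_nonneg.2 (h.le_one j w)
      have := sub_nonneg.2 (h.le_one k w)
      have := h.wt w
      positivity
  have e0 : ∀ i j k, ∑ w, x w * ((1 - A i w) * (1 - A j w) * (1 - A k w)) =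
      1 - vdeg A x i - vdeg A x j - vdeg A x k + codeg A x i j + codeg A x i k + codeg A x j k
        - ∑ w, x w * (A i w * A j w * A k w) := by
    intro i j k
    have : (1 : ℝ) = ∑ w, x w := hx.symm
    nth_rewrite 4 [this]
    simp only [vdeg, codeg, ← sum_sub_distrib, ← sum_add_distrib]
    exact sum_congr rfl fun w _ => by ring
  have e1 : ∑ i, ∑ j, ∑ k, K i j k * vdeg A x i = ∑ i, x i * vtri A x i * vdeg A x i :=
    sum_vtri_vdeg
  have e2 : ∑ i, ∑ j, ∑ k, K i j k * vdeg A x j = ∑ i, x i * vtri A x i * vdeg A x i := by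
    rw [← e1, sum3_swap12]; simp only [K12]
  have e3 : ∑ i, ∑ j, ∑ k, K i j k * vdeg A x k = ∑ i, x i * vtri A x i * vdeg A x i := by
    rw [← e2, sum3_swap23]; simp only [K23]
  have e4 : ∑ i, ∑ j, ∑ k, K i j k * codeg A x i j = book A x := sum_tri_codeg A x
  have e5 : ∑ i, ∑ j, ∑ k, K i j k * codeg A x i k = book A x := by
    rw [← e4, sum3_swap23]; simp only [K23]
  have e6 : ∑ i, ∑ j, ∑ k, K i j k * codeg A x j k = book A x := by
    rw [← e5, sum3_swap12]; simp only [K12]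
  have e7 : ∑ i, ∑ j, ∑ k, K i j k * ∑ w, x w * (A i w * A j w * A k w) = kfour A x := by
    have e7' : ∀ i, ∑ j, ∑ k, K i j k * ∑ w, x w * (A i w * A j w * A k w) =
        ∑ w, ∑ j, ∑ k, K i j k * (x w * (A i w * A j w * A k w)) := by
      intro i
      simp only [mul_sum]
      rw [sum3_swap23, sum3_swap12]
    simp only [e7']
    rw [sum_comm]
    simp only [kfour, tri, mul_sum]
    refine sum_congr rfl fun w _ => sum_congr rfl fun i _ => sum_congr rfl fun j _ =>
      sum_congr rfl fun k _ => ?_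
    simp only [hK]
    rw [h.symm w i, h.symm w j, h.symm w k]; ring
  have e8 : ∑ i, ∑ j, ∑ k, K i j k = tri A x := rfl
  simp only [e0] at h0
  simp only [mul_sub, mul_add, mul_one, sum_sub_distrib, sum_add_distrib, e1, e2, e3, e4, e5,
    e6, e7, e8] at h0
  linarith

/-! ### Variations -/

theorem sum_edge_codeg (A : ι → ι → ℝ) (x : ι → ℝ) :
    ∑ i, ∑ j, A i j * (x i * x j) * codeg A x i j = tri A x := by
  simp only [tri, codeg, mul_sum]
  exact sum_congr rfl fun i _ => sum_congr rfl fun j _ => sum_congr rfl fun k _ => by ring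

theorem codeg_symm (A : ι → ι → ℝ) (x : ι → ℝ) (i j : ι) : codeg A x i j = codeg A x j i :=
  sum_congr rfl fun k _ => by ring

/-- Cubic expansion of the triangle weight when the edge weights are lowered along `E`; the
coefficient of `ε` is its first variation. -/
theorem tri_sub (A E : ι → ι → ℝ) (x : ι → ℝ) (hA : ∀ i j, A i j = A j i) :
    ∃ r₂ r₃ : ℝ, ∀ ε : ℝ, tri (fun i j => A i j - ε * E i j) x =
      tri A x + ε * (-3 * ∑ i, ∑ j, E i j * (x i * x j) * codeg A x i j)
        + ε ^ 2 * r₂ + ε ^ 3 * r₃ := by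
  refine ⟨∑ i, ∑ j, ∑ k, (E i j * E i k * A j k + E i j * A i k * E j k + A i j * E i k * E j k)
    * (x i * x j * x k), -∑ i, ∑ j, ∑ k, E i j * E i k * E j k * (x i * x j * x k), fun ε => ?_⟩
  have e1 : ∑ i, ∑ j, E i j * (x i * x j) * codeg A x i j =
      ∑ i, ∑ j, ∑ k, E i j * A i k * A j k * (x i * x j * x k) := by
    simp only [codeg, mul_sum]
    exact sum_congr rfl fun i _ => sum_congr rfl fun j _ => sum_congr rfl fun k _ => by ring
  have e2 : ∑ i, ∑ j, ∑ k, E i j * A i k * A j k * (x i * x j * x k) =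
      ∑ i, ∑ j, ∑ k, A i j * E i k * A j k * (x i * x j * x k) := by
    rw [sum3_swap23]
    exact sum_congr rfl fun i _ => sum_congr rfl fun j _ => sum_congr rfl fun k _ => by
      rw [hA k j]; ring
  have e3 : ∑ i, ∑ j, ∑ k, A i j * E i k * A j k * (x i * x j * x k) =
      ∑ i, ∑ j, ∑ k, A i j * A i k * E j k * (x i * x j * x k) := by
    rw [sum3_swap12]
    exact sum_congr rfl fun i _ => sum_congr rfl fun j _ => sum_congr rfl fun k _ => by
      rw [hA j i]; ring
  have e4 : -3 * ∑ i, ∑ j, E i j * (x i * x j) * codeg A x i j =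
      -∑ i, ∑ j, ∑ k, (E i j * A i k * A j k + A i j * E i k * A j k + A i j * A i k * E j k)
        * (x i * x j * x k) := by
    simp only [add_mul, sum_add_distrib]
    rw [← e3, ← e2, ← e1]; ring
  rw [e4]
  simp only [tri, mul_sum, ← sum_neg_distrib, ← sum_add_distrib]
  exact sum_congr rfl fun i _ => sum_congr rfl fun j _ => sum_congr rfl fun k _ => by ring

theorem edge_sub (A E : ι → ι → ℝ) (x : ι → ℝ) (ε : ℝ) :
    edge (fun i j => A i j - ε * E i j) x = edge A x + ε * (-edge E x) := by
  simp only [edge, mul_sum, ← sum_neg_distrib, ← sum_add_distrib]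
  exact sum_congr rfl fun i _ => sum_congr rfl fun j _ => by ring

/-- Cubic expansion of the triangle weight when the vertex weights are multiplied by
`1 + ε * h i`. -/
theorem tri_reweight (A : ι → ι → ℝ) (x h : ι → ℝ) (hA : ∀ i j, A i j = A j i) :
    ∃ r₂ r₃ : ℝ, ∀ ε : ℝ, tri A (fun i => x i * (1 + ε * h i)) =
      tri A x + ε * (3 * ∑ i, x i * h i * vtri A x i) + ε ^ 2 * r₂ + ε ^ 3 * r₃ := by
  refine ⟨∑ i, ∑ j, ∑ k, A i j * A i k * A j k * (x i * x j * x k)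
      * (h i * h j + h i * h k + h j * h k),
    ∑ i, ∑ j, ∑ k, A i j * A i k * A j k * (x i * x j * x k) * (h i * h j * h k), fun ε => ?_⟩
  set K : ι → ι → ι → ℝ := fun i j k => A i j * A i k * A j k * (x i * x j * x k) with hK
  have K12 : ∀ i j k, K j i k = K i j k := fun i j k => by
    simp only [hK]; rw [hA j i]; ring
  have K23 : ∀ i j k, K i k j = K i j k := fun i j k => by
    simp only [hK]; rw [hA k j]; ring
  have e1 : ∑ i, x i * h i * vtri A x i = ∑ i, ∑ j, ∑ k, K i j k * h i := by
    simp only [vtri, mul_sum, hK]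
    exact sum_congr rfl fun i _ => sum_congr rfl fun j _ => sum_congr rfl fun k _ => by ring
  have e2 : ∑ i, ∑ j, ∑ k, K i j k * h j = ∑ i, ∑ j, ∑ k, K i j k * h i := by
    rw [sum3_swap12]; simp only [K12]
  have e3 : ∑ i, ∑ j, ∑ k, K i j k * h k = ∑ i, ∑ j, ∑ k, K i j k * h i := by
    rw [← e2, sum3_swap23]; simp only [K23]
  have e4 : 3 * ∑ i, x i * h i * vtri A x i = ∑ i, ∑ j, ∑ k, K i j k * (h i + h j + h k) := by
    simp only [mul_add, sum_add_distrib]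
    rw [e3, e2, ← e1]; ring
  rw [e4]
  simp only [tri, mul_sum, ← sum_add_distrib]
  exact sum_congr rfl fun i _ => sum_congr rfl fun j _ => sum_congr rfl fun k _ => by
    simp only [hK]; ring

theorem edge_reweight (A : ι → ι → ℝ) (x h : ι → ℝ) (hA : ∀ i j, A i j = A j i) :
    ∃ r₂ : ℝ, ∀ ε : ℝ, edge A (fun i => x i * (1 + ε * h i)) =
      edge A x + ε * (2 * ∑ i, x i * h i * vdeg A x i) + ε ^ 2 * r₂ := by
  refine ⟨∑ i, ∑ j, A i j * (x i * x j) * (h i * h j), fun ε => ?_⟩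
  have e1 : ∑ i, x i * h i * vdeg A x i = ∑ i, ∑ j, A i j * (x i * x j) * h i := by
    simp only [vdeg, mul_sum]
    exact sum_congr rfl fun i _ => sum_congr rfl fun j _ => by ring
  have e2 : ∑ i, ∑ j, A i j * (x i * x j) * h j = ∑ i, ∑ j, A i j * (x i * x j) * h i := by
    rw [sum_comm]
    exact sum_congr rfl fun i _ => sum_congr rfl fun j _ => by rw [hA]; ring
  have e4 : 2 * ∑ i, x i * h i * vdeg A x i = ∑ i, ∑ j, A i j * (x i * x j) * (h i + h j) := by
    simp only [mul_add, sum_add_distrib]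
    rw [e2, ← e1]; ring
  rw [e4]
  simp only [edge, mul_sum, ← sum_add_distrib]
  exact sum_congr rfl fun i _ => sum_congr rfl fun j _ => by ring

/-- One-sided first-order condition at `0` for a minimum of `T - Φ ∘ p` on `ε ≥ 0`. -/
theorem first_order {T p Φ : ℝ → ℝ} {T₁ p₁ φ : ℝ} (hΦ : HasDerivAt Φ φ (p 0))
    (hT : HasDerivAt T T₁ 0) (hp : HasDerivAt p p₁ 0)
    (hmin : ∀ᶠ ε in 𝓝[>] (0 : ℝ), T 0 - Φ (p 0) ≤ T ε - Φ (p ε)) : φ * p₁ ≤ T₁ := by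
  have hd : HasDerivAt (fun ε => T ε - Φ (p ε)) (T₁ - φ * p₁) 0 := hT.sub (hΦ.comp 0 hp)
  have ht := hd.tendsto_slope_zero_right
  have : 0 ≤ T₁ - φ * p₁ := by
    refine ge_of_tendsto ht ?_
    filter_upwards [hmin, self_mem_nhdsWithin] with ε h1 h2
    have h2' : (0 : ℝ) < ε := h2
    simp only [zero_add, smul_eq_mul]
    exact mul_nonneg (inv_nonneg.2 h2'.le) (by linarith)
  linarith

theorem hasDerivAt_cubic (r₀ r₁ r₂ r₃ : ℝ) :
    HasDerivAt (fun ε : ℝ => r₀ + ε * r₁ + ε ^ 2 * r₂ + ε ^ 3 * r₃) r₁ 0 := by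
  have h := ((((hasDerivAt_id (0 : ℝ)).mul_const r₁).const_add r₀).add
    (((hasDerivAt_id (0 : ℝ)).pow 2).mul_const r₂)).add
    (((hasDerivAt_id (0 : ℝ)).pow 3).mul_const r₃)
  exact h.congr_deriv (by simp)

/-! ### Stationary weighted graphs -/

/-- `(A, x)` minimizes `tri - Φ ∘ edge` among weighted graphs of total weight one with edge
density in `[lo, hi]`, its own edge density lies in the open interval, and the derivative of `Φ`
at that density is `3 * c`. -/
structure Stationary (Φ : ℝ → ℝ) (lo hi c : ℝ) (A : ι → ι → ℝ) (x : ι → ℝ) : Prop where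
  valid : Valid A x
  mass : ∑ i, x i = 1
  lo_lt : lo < edge A x
  lt_hi : edge A x < hi
  deriv : HasDerivAt Φ (3 * c) (edge A x)
  min : ∀ (A' : ι → ι → ℝ) (x' : ι → ℝ), Valid A' x' → ∑ i, x' i = 1 → lo ≤ edge A' x' →
    edge A' x' ≤ hi → tri A x - Φ (edge A x) ≤ tri A' x' - Φ (edge A' x')

variable {Φ : ℝ → ℝ} {lo hi c : ℝ} {A : ι → ι → ℝ} {x : ι → ℝ}

/-- First variation in the edge weights: on average over any subgraph `E` of `A`, codegrees are at
most `c`. -/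
theorem Stationary.edge_cond (S : Stationary Φ lo hi c A x) (E : ι → ι → ℝ)
    (hE : ∀ i j, E i j = E j i) (hE0 : ∀ i j, 0 ≤ E i j) (hEA : ∀ i j, E i j ≤ A i j) :
    ∑ i, ∑ j, E i j * (x i * x j) * codeg A x i j ≤ c * edge E x := by
  obtain ⟨r₂, r₃, hT⟩ := tri_sub A E x S.valid.symm
  have hp := edge_sub A E x
  have dT : HasDerivAt (fun ε => tri (fun i j => A i j - ε * E i j) x)
      (-3 * ∑ i, ∑ j, E i j * (x i * x j) * codeg A x i j) 0 := by
    simp only [hT]; exact hasDerivAt_cubic _ _ _ _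
  have dp : HasDerivAt (fun ε => edge (fun i j => A i j - ε * E i j) x) (-edge E x) 0 := by
    simp only [hp]; simpa using hasDerivAt_cubic (edge A x) (-edge E x) 0 0
  have hp0 : edge (fun i j => A i j - 0 * E i j) x = edge A x := by simp
  have hT0 : tri (fun i j => A i j - 0 * E i j) x = tri A x := by simp
  have := first_order (Φ := Φ) (φ := 3 * c) (by rw [hp0]; exact S.deriv) dT dp (by
    rw [hp0, hT0]
    have c1 := dp.continuousAt.tendsto
    rw [hp0] at c1
    have m1 := c1.eventually (lt_mem_nhds S.lo_lt)
    have m2 := c1.eventually (gt_mem_nhds S.lt_hi)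
    filter_upwards [self_mem_nhdsWithin, nhdsWithin_le_nhds m1, nhdsWithin_le_nhds m2,
      nhdsWithin_le_nhds (gt_mem_nhds (show (0 : ℝ) < 1 by norm_num))] with ε h0 h1 h2 h3
    have h0' : (0 : ℝ) < ε := h0
    refine S.min _ _ ⟨fun i j => ?_, fun i j => ?_, fun i j => ?_, S.valid.wt⟩ S.mass h1.le h2.le
    · rw [S.valid.symm i j, hE i j]
    · have := hE0 i j
      have := hEA i j
      nlinarith
    · have := mul_nonneg h0'.le (hE0 i j)
      have := S.valid.le_one i j
      linarith)
  linarith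

/-- First variation in the vertex weights, along directions preserving the total weight. -/
theorem Stationary.weight_cond (S : Stationary Φ lo hi c A x) (h : ι → ℝ)
    (hh : ∑ i, x i * h i = 0) : 0 ≤ ∑ i, x i * h i * (vtri A x i - 2 * c * vdeg A x i) := by
  obtain ⟨r₂, r₃, hT⟩ := tri_reweight A x h S.valid.symm
  obtain ⟨r, hp⟩ := edge_reweight A x h S.valid.symm
  have dT : HasDerivAt (fun ε => tri A (fun i => x i * (1 + ε * h i)))
      (3 * ∑ i, x i * h i * vtri A x i) 0 := by
    simp only [hT]; exact hasDerivAt_cubic _ _ _ _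
  have dp : HasDerivAt (fun ε => edge A (fun i => x i * (1 + ε * h i)))
      (2 * ∑ i, x i * h i * vdeg A x i) 0 := by
    simp only [hp]
    simpa using hasDerivAt_cubic (edge A x) (2 * ∑ i, x i * h i * vdeg A x i) r 0
  have hp0 : edge A (fun i => x i * (1 + 0 * h i)) = edge A x := by simp
  have hT0 : tri A (fun i => x i * (1 + 0 * h i)) = tri A x := by simp
  have := first_order (Φ := Φ) (φ := 3 * c) (by rw [hp0]; exact S.deriv) dT dp (by
    rw [hp0, hT0]
    have c1 := dp.continuousAt.tendsto
    rw [hp0] at c1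
    have m1 := c1.eventually (lt_mem_nhds S.lo_lt)
    have m2 := c1.eventually (gt_mem_nhds S.lt_hi)
    have m3 : ∀ᶠ ε in 𝓝 (0 : ℝ), ∀ i, 0 < 1 + ε * h i := by
      rw [eventually_all]
      intro i
      have : ContinuousAt (fun ε : ℝ => 1 + ε * h i) 0 := by fun_prop
      exact this.tendsto.eventually (lt_mem_nhds (by simp))
    filter_upwards [nhdsWithin_le_nhds m1, nhdsWithin_le_nhds m2, nhdsWithin_le_nhds m3]
      with ε h1 h2 h3
    refine S.min _ _ ⟨S.valid.symm, S.valid.nonneg, S.valid.le_one, fun i => ?_⟩ ?_ h1.le h2.le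
    · exact mul_nonneg (S.valid.wt i) (h3 i).le
    · have : ∑ i, x i * (1 + ε * h i) = ∑ i, x i + ε * ∑ i, x i * h i := by
        simp only [mul_sum, ← sum_add_distrib]
        exact sum_congr rfl fun i _ => by ring
      rw [this, hh, S.mass]; simp)
  have e : ∑ i, x i * h i * (vtri A x i - 2 * c * vdeg A x i) =
      ∑ i, x i * h i * vtri A x i - 2 * c * ∑ i, x i * h i * vdeg A x i := by
    simp only [mul_sum, ← sum_sub_distrib]
    exact sum_congr rfl fun i _ => by ring
  rw [e]
  linarith

/-- At a stationary graph `vtri - 2 c vdeg` takes the same value at all vertices of positive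
weight, namely its average. -/
theorem Stationary.vtri_eq (S : Stationary Φ lo hi c A x) (v : ι) (hv : x v ≠ 0) :
    vtri A x v = 2 * c * vdeg A x v - (2 * c * edge A x - tri A x) := by
  set m : ℝ := tri A x - 2 * c * edge A x with hm
  -- reweighting towards the vertices below the average gives minus the variance as first variation
  set h : ι → ℝ := fun i => m - (vtri A x i - 2 * c * vdeg A x i) with hh
  have hm' : ∑ i, x i * (vtri A x i - 2 * c * vdeg A x i) = m := by
    rw [hm, tri_eq, edge_eq]
    simp only [mul_sum, ← sum_sub_distrib]
    exact sum_congr rfl fun i _ => by ring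
  have h0 : ∑ i, x i * h i = 0 := by
    simp only [hh, mul_sub (_ : ℝ) m, sum_sub_distrib, ← sum_mul]
    rw [hm', S.mass]; ring
  have h1 := S.weight_cond h h0
  have h2 : ∑ i, x i * h i * (vtri A x i - 2 * c * vdeg A x i) = - ∑ i, x i * h i ^ 2 := by
    have : ∑ i, x i * h i * (vtri A x i - 2 * c * vdeg A x i)
        = m * ∑ i, x i * h i - ∑ i, x i * h i ^ 2 := by
      simp only [mul_sum, ← sum_sub_distrib]
      refine sum_congr rfl fun i _ => ?_
      simp only [hh]; ring
    rw [this, h0]; ring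
  have h3 : ∑ i, x i * h i ^ 2 = 0 :=
    le_antisymm (by linarith) (sum_nonneg fun i _ => mul_nonneg (S.valid.wt i) (sq_nonneg _))
  rw [sum_eq_zero_iff_of_nonneg fun i _ => mul_nonneg (S.valid.wt i) (sq_nonneg _)] at h3
  have h4 := h3 v (mem_univ v)
  have h5 : h v = 0 := by simpa [hv] using h4
  simp only [hh] at h5
  linarith

/-- The edge condition applied to the star at `v`: the link of `v` has at most `c * vdeg` edges. -/
theorem Stationary.vtri_le (S : Stationary Φ lo hi c A x) (v : ι) (hv : x v ≠ 0) :
    vtri A x v ≤ c * vdeg A x v := by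
  classical
  have hA := S.valid.symm
  have h := S.edge_cond (fun i j => A i j * (((if i = v then 1 else 0) + (if j = v then 1 else 0)) / 2))
    (fun i j => by rw [hA i j, add_comm])
    (fun i j => mul_nonneg (S.valid.nonneg i j) (by split_ifs <;> norm_num))
    (fun i j => mul_le_of_le_one_right (S.valid.nonneg i j) (by split_ifs <;> norm_num))
  have key : ∀ g : ι → ι → ℝ, (∀ i j, g i j = g j i) →
      ∑ i, ∑ j, A i j * (((if i = v then 1 else 0) + (if j = v then 1 else 0)) / 2) * (x i * x j)
        * g i j = x v * ∑ j, A v j * x j * g v j := by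
    intro g hg
    have e1 : ∑ i, ∑ j, (if i = v then A i j * (x i * x j) * g i j else 0)
        = x v * ∑ j, A v j * x j * g v j := by
      rw [sum_comm]
      simp only [sum_ite_eq', mem_univ, if_true, mul_sum]
      exact sum_congr rfl fun j _ => by ring
    have e2 : ∑ i, ∑ j, (if j = v then A i j * (x i * x j) * g i j else 0)
        = x v * ∑ j, A v j * x j * g v j := by
      rw [← e1, sum_comm]
      refine sum_congr rfl fun i _ => sum_congr rfl fun j _ => ?_
      rw [hA j i, hg j i, mul_comm (x j)]
    have e3 : x v * ∑ j, A v j * x j * g v j =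
        (∑ i, ∑ j, (if i = v then A i j * (x i * x j) * g i j else 0)
        + ∑ i, ∑ j, (if j = v then A i j * (x i * x j) * g i j else 0)) / 2 := by
      rw [e1, e2]; ring
    rw [e3, ← sum_add_distrib, sum_div]
    refine sum_congr rfl fun i _ => ?_
    rw [← sum_add_distrib, sum_div]
    refine sum_congr rfl fun j _ => ?_
    split_ifs <;> ring
  have k1 := key (codeg A x) (codeg_symm A x)
  have k2 := key (fun _ _ => 1) (fun _ _ => rfl)
  simp only [mul_one] at k2
  rw [k1, ← TriDensity.vtri_eq] at h
  have k2' : edge (fun i j => A i j * (((if i = v then 1 else 0) + (if j = v then 1 else 0)) / 2)) x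
    = x v * vdeg A x v := k2
  rw [k2'] at h
  have hx : 0 < x v := lt_of_le_of_ne (S.valid.wt v) (Ne.symm hv)
  refine le_of_mul_le_mul_left ?_ hx
  linarith

/-- Upper bound for the weight of complete graphs on four vertices at a stationary graph. The
edge condition is applied to `A i j` times the weight of the vertices joined to neither `i` nor
`j`, which bounds `book`; `TriDensity.kfour_le` turns this into a bound for `kfour`. The terms in
`cherry` cancel by `Stationary.vtri_eq`. -/
theorem Stationary.kfour_le (S : Stationary Φ lo hi c A x) :
    kfour A x ≤ 3 * c * edge A x * (1 - 2 * edge A x)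
      + (3 * c - 2 + 3 * edge A x) * tri A x := by
  have hA := S.valid.symm
  have hq : ∀ i j, ∑ k, x k * ((1 - A i k) * (1 - A j k)) =
      1 - vdeg A x i - vdeg A x j + codeg A x i j := by
    intro i j
    have : (1 : ℝ) = ∑ w, x w := S.mass.symm
    nth_rewrite 3 [this]
    simp only [vdeg, codeg, ← sum_sub_distrib, ← sum_add_distrib]
    exact sum_congr rfl fun w _ => by ring
  have hq0 : ∀ i j, 0 ≤ ∑ k, x k * ((1 - A i k) * (1 - A j k)) := fun i j =>
    sum_nonneg fun k _ => mul_nonneg (S.valid.wt k)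
      (mul_nonneg (sub_nonneg.2 (S.valid.le_one i k)) (sub_nonneg.2 (S.valid.le_one j k)))
  have hq1 : ∀ i j, ∑ k, x k * ((1 - A i k) * (1 - A j k)) ≤ 1 := fun i j => by
    refine le_trans (sum_le_sum fun k _ => mul_le_of_le_one_right (S.valid.wt k) ?_) S.mass.le
    have := S.valid.nonneg i k
    have := S.valid.nonneg j k
    have := S.valid.le_one i k
    have := S.valid.le_one j k
    nlinarith
  have h := S.edge_cond (fun i j => A i j * ∑ k, x k * ((1 - A i k) * (1 - A j k)))
    (fun i j => by
      rw [hA i j]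
      congr 1
      exact sum_congr rfl fun k _ => by ring)
    (fun i j => mul_nonneg (S.valid.nonneg i j) (hq0 i j))
    (fun i j => mul_le_of_le_one_right (S.valid.nonneg i j) (hq1 i j))
  simp only [hq] at h
  have e1 : ∑ i, ∑ j, A i j * (x i * x j) * codeg A x i j * vdeg A x i
      = ∑ i, x i * vtri A x i * vdeg A x i := by
    simp only [TriDensity.vtri_eq, mul_sum, sum_mul]
    exact sum_congr rfl fun i _ => sum_congr rfl fun j _ => by ring
  have e2 : ∑ i, ∑ j, A i j * (x i * x j) * codeg A x i j * vdeg A x j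
      = ∑ i, x i * vtri A x i * vdeg A x i := by
    rw [← e1, sum_comm]
    exact sum_congr rfl fun i _ => sum_congr rfl fun j _ => by
      rw [hA j i, codeg_symm A x j i]; ring
  have e3 : ∑ i, ∑ j, A i j * (1 - vdeg A x i - vdeg A x j + codeg A x i j) * (x i * x j)
      * codeg A x i j = tri A x - 2 * (∑ i, x i * vtri A x i * vdeg A x i) + book A x := by
    have : ∑ i, ∑ j, A i j * (1 - vdeg A x i - vdeg A x j + codeg A x i j) * (x i * x j)
      * codeg A x i j = tri A x - (∑ i, ∑ j, A i j * (x i * x j) * codeg A x i j * vdeg A x i)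
        - (∑ i, ∑ j, A i j * (x i * x j) * codeg A x i j * vdeg A x j) + book A x := by
      rw [← sum_edge_codeg]
      simp only [book, ← sum_sub_distrib, ← sum_add_distrib]
      exact sum_congr rfl fun i _ => sum_congr rfl fun j _ => by ring
    rw [this, e1, e2]; ring
  have f1 : ∑ i, ∑ j, A i j * (x i * x j) * vdeg A x i = cherry A x := by
    simp only [cherry]
    refine sum_congr rfl fun i _ => ?_
    rw [pow_two]; nth_rewrite 2 [vdeg]
    simp only [mul_sum, sum_mul]
    exact sum_congr rfl fun j _ => by ring
  have f2 : ∑ i, ∑ j, A i j * (x i * x j) * vdeg A x j = cherry A x := by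
    rw [← f1, sum_comm]
    exact sum_congr rfl fun i _ => sum_congr rfl fun j _ => by rw [hA j i]; ring
  have f3 : edge (fun i j => A i j * (1 - vdeg A x i - vdeg A x j + codeg A x i j)) x
      = edge A x - 2 * cherry A x + tri A x := by
    have : edge (fun i j => A i j * (1 - vdeg A x i - vdeg A x j + codeg A x i j)) x
      = edge A x - (∑ i, ∑ j, A i j * (x i * x j) * vdeg A x i)
        - (∑ i, ∑ j, A i j * (x i * x j) * vdeg A x j) + tri A x := by
      rw [← sum_edge_codeg]
      simp only [edge, ← sum_sub_distrib, ← sum_add_distrib]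
      exact sum_congr rfl fun i _ => sum_congr rfl fun j _ => by ring
    rw [this, f1, f2]; ring
  rw [e3, f3] at h
  have g1 : ∑ i, x i * vtri A x i * vdeg A x i
      = 2 * c * cherry A x - (2 * c * edge A x - tri A x) * edge A x := by
    have : ∀ i, x i * vtri A x i * vdeg A x i = 2 * c * (x i * vdeg A x i ^ 2)
        - (2 * c * edge A x - tri A x) * (x i * vdeg A x i) := by
      intro i
      by_cases hi : x i = 0
      · simp [hi]
      · rw [S.vtri_eq i hi]; ring
    simp only [this, sum_sub_distrib, ← mul_sum]
    rw [← edge_eq]; rfl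
  have g2 := TriDensity.kfour_le S.valid S.mass
  rw [g1] at h g2
  nlinarith

end Finite

/-! ### The inequality in the link of a vertex -/

/-- The numerical inequality behind `vertex_ineq`. Writing `u = (q + 2) a - 1 > 0` and
`v = 1 - (q + 1) a > 0`, one has `a = u + v` and `1 = (q + 1) u + (q + 2) v`; after
homogenizing, the difference of the two sides is a form in `u, v` with positive coefficients. -/
theorem key_ineq (q : ℕ) (hq : 1 ≤ q) (a : ℝ) (h1 : 1 < (q + 2) * a) (h2 : (q + 1) * a < 1) :
    ((q : ℝ) - 1) * (1 + q * a + q ^ 2 * a ^ 2) <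
      (3 * (q * a) - 2 + 3 * (2 * (q + 1) * a - (q + 1) * (q + 2) * a ^ 2)) * a * q ^ 2 := by
  obtain ⟨u, hu⟩ : ∃ u : ℝ, u = (q + 2) * a - 1 := ⟨_, rfl⟩
  obtain ⟨v, hv⟩ : ∃ v : ℝ, v = 1 - (q + 1) * a := ⟨_, rfl⟩
  have hu0 : 0 < u := by linarith
  have hv0 : 0 < v := by linarith
  have hone : ((q : ℝ) + 1) * u + (q + 2) * v = 1 := by rw [hu, hv]; ring
  have ha : a = u + v := by rw [hu, hv]; ring
  have hom : 0 < (3 * (q * (u + v)) * ((q + 1) * u + (q + 2) * v)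
      - 2 * ((q + 1) * u + (q + 2) * v) ^ 2
      + 3 * (2 * (q + 1) * (u + v) * ((q + 1) * u + (q + 2) * v)
        - (q + 1) * (q + 2) * (u + v) ^ 2)) * (u + v) * (q : ℝ) ^ 2
      - ((q : ℝ) - 1) * (((q + 1) * u + (q + 2) * v) ^ 2
        + q * (u + v) * ((q + 1) * u + (q + 2) * v) + q ^ 2 * (u + v) ^ 2)
        * ((q + 1) * u + (q + 2) * v) := by
    clear hone ha hu hv h1 h2
    rcases (show q = 1 ∨ q = 2 ∨ 3 ≤ q by omega) with rfl | rfl | h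
    · push_cast; ring_nf; positivity
    · push_cast; ring_nf; positivity
    · obtain ⟨r, rfl⟩ := Nat.exists_eq_add_of_le h
      push_cast; ring_nf; positivity
  rw [hone, ← ha] at hom
  linarith

set_option maxHeartbeats 1000000 in
/-- Lower bound, linear in `d`, for the triangle weight `τ` of the link of a vertex, where `d` is
the degree and `e` the edge weight of the link. The hypothesis `he` is the vertex condition at a
stationary graph whose triangle density is `δ` below the claimed minimum, `hec` the edge
condition, `hG` Goodman's bound in the link, and `hH` the minimum-triangle theorem for `q + 1`
parts in the link, scaled to total weight `d`. For `δ = 0` the left side is the value at `b = a`,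
so the content is that the loss is less than the stated multiple of `δ`. -/
theorem vertex_ineq (q : ℕ) (hq : 1 ≤ q) (a δ d e τ : ℝ)
    (h1 : 1 < (q + 2) * a) (h2 : (q + 1) * a < 1) (hδ : 0 < δ) (hd : 0 < d) (hd1 : d ≤ 1)
    (he : e = 2 * (q * a) * d - q * (q + 1) * a ^ 2 - δ) (hec : e ≤ q * a * d)
    (hG : e * (2 * e - d ^ 2) ≤ d * τ)
    (hH : ∀ b : ℝ, d ≤ (q + 1) * b → q * b ≤ d → e = 2 * q * b * d - q * (q + 1) * b ^ 2 →
      (q : ℝ) * (q - 1) * b ^ 2 * (3 * d - 2 * (q + 1) * b) ≤ τ) :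
    (q : ℝ) * (q - 1) * a ^ 2 * (3 * d - 2 * (q + 1) * a)
      - (3 * (q * a) - 2 + 3 * (2 * (q + 1) * a - (q + 1) * (q + 2) * a ^ 2)) * δ < τ := by
  have key := key_ineq q hq a h1 h2
  obtain ⟨C, hC⟩ : ∃ C : ℝ, C = 3 * (q * a) - 2 +
    3 * (2 * (q + 1) * a - (q + 1) * (q + 2) * a ^ 2) := ⟨_, rfl⟩
  rw [← hC] at key ⊢
  have hqR : (1 : ℝ) ≤ q := by exact_mod_cast hq
  clear hC
  generalize (q : ℝ) = Q at *
  have ha0 : 0 < a := by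
    by_contra h; push Not at h; nlinarith
  have hQ0 : 0 < Q := by linarith
  -- the form in which `key_ineq` is used, for part sizes `b ≤ 1 / Q`
  have key2 : ∀ b : ℝ, 0 < b → Q * b ≤ 1 → (Q - 1) * (b ^ 2 + a * b + a ^ 2) < C * a := by
    intro b hb0 hQb
    have h3 : (Q - 1) * (b ^ 2 + a * b + a ^ 2) * Q ^ 2 < C * a * Q ^ 2 := by
      refine lt_of_le_of_lt ?_ key
      rw [mul_assoc]
      refine mul_le_mul_of_nonneg_left ?_ (by linarith)
      have : (Q * b) ^ 2 ≤ 1 := by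
        have : 0 < Q * b := by positivity
        nlinarith
      nlinarith [mul_le_mul_of_nonneg_left hQb (show 0 ≤ Q * a by positivity)]
    exact lt_of_mul_lt_mul_right h3 (by positivity)
  by_cases hx : Q * e ≤ (Q - 1) * d ^ 2
  -- if `e` lies left of the scallop, Goodman's parabola is above the tangent line of the
  -- scallop at its left end
  · obtain ⟨b, hb⟩ : ∃ b, b = d / Q := ⟨_, rfl⟩
    have hdb : d = Q * b := by rw [hb]; field_simp
    have hb0 : 0 < b := by rw [hb]; positivity
    have hQb : Q * b ≤ 1 := by rw [← hdb]; exact hd1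
    have htan : (Q - 1) * b * (3 * e - (2 * Q - 1) * Q * b ^ 2) ≤ τ := by
      have : d * ((Q - 1) * b * (3 * e - (2 * Q - 1) * Q * b ^ 2)) ≤ d * τ := by
        refine le_trans ?_ hG
        have hx' : 0 ≤ (Q - 1) * (Q * b^2) - e := by
          rw [hdb] at hx
          by_contra hcon
          push Not at hcon
          nlinarith
        rw [hdb]
        nlinarith [sq_nonneg ((Q - 1) * (Q * b^2) - e),
          mul_nonneg hx' (show 0 ≤ Q * b^2 by positivity)]
      exact le_of_mul_le_mul_left this hd
    refine lt_of_lt_of_le ?_ htan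
    have hkb := key2 b hb0 hQb
    have hCb : 3 * (Q - 1) * b < C := by
      have : 3 * (Q - 1) * b * a < C * a := by
        refine lt_of_le_of_lt ?_ hkb
        nlinarith [mul_nonneg (show 0 ≤ Q - 1 by linarith) (sq_nonneg (b - a))]
      exact lt_of_mul_lt_mul_right this ha0.le
    have hid : (Q - 1) * b * (3 * e - (2 * Q - 1) * Q * b ^ 2)
        - (Q * (Q - 1) * a ^ 2 * (3 * d - 2 * (Q + 1) * a) - C * δ)
        = (Q - 1) * Q * (b - a) ^ 2 * ((2 * Q + 2) * a - (2 * Q - 1) * b)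
          + (C - 3 * (Q - 1) * b) * δ := by
      rw [he, hdb]; ring
    have hpos : 0 < (C - 3 * (Q - 1) * b) * δ := mul_pos (by linarith) hδ
    by_cases hs : (2 * Q - 1) * b ≤ (2 * Q + 2) * a
    · have : 0 ≤ (Q - 1) * Q * (b - a) ^ 2 * ((2 * Q + 2) * a - (2 * Q - 1) * b) :=
        mul_nonneg (mul_nonneg (mul_nonneg (by linarith) hQ0.le) (sq_nonneg _)) (by linarith)
      linarith
    · push Not at hs
      obtain ⟨h, hh⟩ : ∃ h, h = Q * b - (Q + 1) * a := ⟨_, rfl⟩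
      have hab : a < b := by nlinarith
      have hha : h < a := by linarith
      have h2h : b < 2 * h := by rw [hh]; linarith
      have hδh : Q * a * h ≤ δ := by
        rw [he, hdb] at hec; rw [hh]; linarith
      have e1 : (Q - 1) * Q * (b - a) ^ 2 * (2 * h - b) ≤ (Q - 1) * Q * (b - a) ^ 2 * h :=
        mul_le_mul_of_nonneg_left (by linarith)
          (mul_nonneg (mul_nonneg (by linarith) hQ0.le) (sq_nonneg _))
      have e2 : (C - 3 * (Q - 1) * b) * (Q * a * h) ≤ (C - 3 * (Q - 1) * b) * δ :=
        mul_le_mul_of_nonneg_left hδh (by linarith)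
      have e3 : (Q - 1) * (b - a) ^ 2 < (C - 3 * (Q - 1) * b) * a := by linarith
      have e4 := mul_lt_mul_of_pos_right e3 (show 0 < Q * h from mul_pos hQ0 (by linarith))
      have e5 : (2 * Q + 2) * a - (2 * Q - 1) * b = - (2 * h - b) := by rw [hh]; ring
      rw [e5] at hid
      linarith
  · push Not at hx
    obtain ⟨b, hb1, hb2, hb3⟩ : ∃ b : ℝ, d ≤ (Q + 1) * b ∧ Q * b ≤ d ∧
        e = 2 * Q * b * d - Q * (Q + 1) * b ^ 2 := by
      have hD : 0 ≤ Q ^ 2 * d ^ 2 - Q * (Q + 1) * e := by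
        rw [he]
        nlinarith [mul_nonneg hQ0.le (sq_nonneg (Q * (d - (Q + 1) * a))), sq_nonneg (Q * (d - (Q + 1) * a)),
          mul_pos (mul_pos hQ0 (show 0 < Q + 1 by linarith)) hδ]
      have hr0 := Real.sqrt_nonneg (Q ^ 2 * d ^ 2 - Q * (Q + 1) * e)
      have hr2 := Real.sq_sqrt hD
      have hrd : √(Q ^ 2 * d ^ 2 - Q * (Q + 1) * e) ≤ d := by
        rw [Real.sqrt_le_left hd.le]
        nlinarith
      generalize √(Q ^ 2 * d ^ 2 - Q * (Q + 1) * e) = r at *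
      refine ⟨(Q * d + r) / (Q * (Q + 1)), ?_, ?_, ?_⟩
      · rw [← sub_nonneg]
        have : (Q + 1) * ((Q * d + r) / (Q * (Q + 1))) - d = r / Q := by field_simp; ring
        rw [this]; positivity
      · rw [← sub_nonneg]
        have : d - Q * ((Q * d + r) / (Q * (Q + 1))) = (d - r) / (Q + 1) := by field_simp; ring
        rw [this]; exact div_nonneg (by linarith) (by linarith)
      · have : 2 * Q * ((Q * d + r) / (Q * (Q + 1))) * d
            - Q * (Q + 1) * ((Q * d + r) / (Q * (Q + 1))) ^ 2
            = (Q ^ 2 * d ^ 2 - r ^ 2) / (Q * (Q + 1)) := by field_simp; ring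
        rw [this, hr2]; field_simp; ring
    refine lt_of_lt_of_le ?_ (hH b hb1 hb2 hb3)
    have hb0 : 0 < b := by
      by_contra hc; push Not at hc; nlinarith
    have hkb := key2 b hb0 (by linarith)
    obtain ⟨w, hw⟩ : ∃ w, w = (Q + 1) * (a + b) - 2 * d := ⟨_, rfl⟩
    have hδw : δ = Q * ((b - a) * w) := by rw [hw]; linarith
    have hbw : 0 < (b - a) * w := by
      rw [hδw] at hδ; exact (mul_pos_iff_of_pos_left hQ0).1 hδ
    have hab : a < b := by
      by_contra hc; push Not at hc
      have : 0 ≤ w := by rw [hw]; nlinarith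
      nlinarith [mul_nonneg (sub_nonneg.2 hc) this]
    have hw0 : 0 < w := (mul_pos_iff_of_pos_left (by linarith)).1 hbw
    have hc1 : a * ((Q + 1) * (b - a)) ≤ w * (a + 2 * (b - a)) := by
      have : Q * (a * (d - (Q + 1) * a)) ≤ Q * ((b - a) * w) := by
        rw [← hδw]; rw [he] at hec; linarith
      have := le_of_mul_le_mul_left this hQ0
      rw [hw] at this ⊢; linarith
    have hid : Q * (Q - 1) * b ^ 2 * (3 * d - 2 * (Q + 1) * b)
        - (Q * (Q - 1) * a ^ 2 * (3 * d - 2 * (Q + 1) * a) - C * δ)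
        = Q * (b - a) * (C * w - (Q - 1) * ((Q + 1) / 2 * (b - a) ^ 2 + 3 / 2 * w * (a + b))) := by
      rw [hδw]
      have hd2 : d = ((Q + 1) * (a + b) - w) / 2 := by rw [hw]; ring
      rw [hd2]; ring
    have hfin : 0 < C * w - (Q - 1) * ((Q + 1) / 2 * (b - a) ^ 2 + 3 / 2 * w * (a + b)) := by
      have e1 : (Q - 1) * (b - a) * (a * ((Q + 1) * (b - a)))
          ≤ (Q - 1) * (b - a) * (w * (a + 2 * (b - a))) :=
        mul_le_mul_of_nonneg_left hc1 (mul_nonneg (by linarith) (by linarith))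
      have e2 : (Q - 1) * (b ^ 2 + 2 * a ^ 2) < C * a := by
        refine lt_of_le_of_lt ?_ hkb
        refine mul_le_mul_of_nonneg_left ?_ (by linarith)
        nlinarith
      have e3 := mul_lt_mul_of_pos_right e2 hw0
      have : 0 < a * (C * w - (Q - 1) * ((Q + 1) / 2 * (b - a) ^ 2 + 3 / 2 * w * (a + b))) := by
        linarith
      exact (mul_pos_iff_of_pos_left ha0).1 this
    have := mul_pos (mul_pos hQ0 (sub_pos.2 hab)) hfin
    linarith

/-! ### Scaling the vertex weights -/

theorem edge_scale {ι : Type*} [Fintype ι] (A : ι → ι → ℝ) (x : ι → ℝ) (c : ℝ) :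
    edge A (fun i => c * x i) = c ^ 2 * edge A x := by
  simp only [edge, mul_sum]
  exact sum_congr rfl fun i _ => sum_congr rfl fun j _ => by ring

theorem tri_scale {ι : Type*} [Fintype ι] (A : ι → ι → ℝ) (x : ι → ℝ) (c : ℝ) :
    tri A (fun i => c * x i) = c ^ 3 * tri A x := by
  simp only [tri, mul_sum]
  exact sum_congr rfl fun i _ => sum_congr rfl fun j _ => sum_congr rfl fun k _ => by ring

/-! ### The minimum-triangle theorem for weighted graphs -/

/-- The minimum-triangle theorem on the interval of edge densities from `(s - 1) / s` to
`s / (s + 1)`: the triangle density is at least that of the complete `(s + 1)`-partite graph of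
the same edge density with `s` parts of size `a` and one part of size `1 - s * a ≤ a`. -/
def Razborov (s : ℕ) : Prop :=
  ∀ (n : ℕ) (A : Fin n → Fin n → ℝ) (x : Fin n → ℝ), Valid A x → ∑ i, x i = 1 →
    ∀ a : ℝ, 1 ≤ ((s : ℝ) + 1) * a → (s : ℝ) * a ≤ 1 →
      edge A x = 2 * s * a - s * (s + 1) * a ^ 2 →
      (s : ℝ) * (s - 1) * a ^ 2 * (3 - 2 * (s + 1) * a) ≤ tri A x

/-- The minimum-triangle theorem for total vertex weight `d`. -/
theorem Razborov.scaled {s : ℕ} (hs : Razborov s) {n : ℕ} {A : Fin n → Fin n → ℝ}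
    {x : Fin n → ℝ} (h : Valid A x) {d : ℝ} (hd : 0 < d) (hx : ∑ i, x i = d) (b : ℝ)
    (h1 : d ≤ ((s : ℝ) + 1) * b) (h2 : (s : ℝ) * b ≤ d)
    (he : edge A x = 2 * s * b * d - s * (s + 1) * b ^ 2) :
    (s : ℝ) * (s - 1) * b ^ 2 * (3 * d - 2 * (s + 1) * b) ≤ tri A x := by
  have key := hs n A (fun i => d⁻¹ * x i)
    ⟨h.symm, h.nonneg, h.le_one, fun i => mul_nonneg (inv_nonneg.2 hd.le) (h.wt i)⟩
    (by rw [← mul_sum, hx, inv_mul_cancel₀ hd.ne']) (b / d)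
    (by rw [← mul_div_assoc, le_div_iff₀ hd]; linarith)
    (by rw [← mul_div_assoc, div_le_iff₀ hd]; linarith)
    (by rw [edge_scale, he]; field_simp)
  rw [tri_scale] at key
  have h3 := mul_le_mul_of_nonneg_left key (pow_pos hd 3).le
  have e1 : d ^ 3 * (d⁻¹ ^ 3 * tri A x) = tri A x := by field_simp
  have e2 : d ^ 3 * ((s : ℝ) * (s - 1) * (b / d) ^ 2 * (3 - 2 * (s + 1) * (b / d)))
      = (s : ℝ) * (s - 1) * b ^ 2 * (3 * d - 2 * (s + 1) * b) := by field_simp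
  rwa [e1, e2] at h3

theorem tri_nonneg {ι : Type*} [Fintype ι] {A : ι → ι → ℝ} {x : ι → ℝ} (h : Valid A x) :
    0 ≤ tri A x := by
  refine sum_nonneg fun i _ => sum_nonneg fun j _ => sum_nonneg fun k _ => ?_
  have := h.nonneg i j
  have := h.nonneg i k
  have := h.nonneg j k
  have := h.wt i
  have := h.wt j
  have := h.wt k
  positivity

theorem Valid.link {ι : Type*} {A : ι → ι → ℝ} {x : ι → ℝ} (h : Valid A x) (v : ι) :
    Valid A (fun j => A v j * x j) :=
  ⟨h.symm, h.nonneg, h.le_one, fun j => mul_nonneg (h.nonneg v j) (h.wt j)⟩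

/-- The weighted graphs on `n` vertices form a compact set, so `tri - Φ ∘ edge` attains its
minimum under the edge density constraint. -/
theorem exists_minimizer {n : ℕ} {Φ : ℝ → ℝ} (hΦ : Continuous Φ) (lo hi : ℝ)
    (A₀ : Fin n → Fin n → ℝ) (x₀ : Fin n → ℝ) (h₀ : Valid A₀ x₀) (hm₀ : ∑ i, x₀ i = 1)
    (hlo : lo ≤ edge A₀ x₀) (hhi : edge A₀ x₀ ≤ hi) :
    ∃ (A : Fin n → Fin n → ℝ) (x : Fin n → ℝ), Valid A x ∧ ∑ i, x i = 1 ∧ lo ≤ edge A x ∧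
      edge A x ≤ hi ∧ ∀ (A' : Fin n → Fin n → ℝ) (x' : Fin n → ℝ), Valid A' x' →
        ∑ i, x' i = 1 → lo ≤ edge A' x' → edge A' x' ≤ hi →
        tri A x - Φ (edge A x) ≤ tri A' x' - Φ (edge A' x') := by
  let S : Set ((Fin n → Fin n → ℝ) × (Fin n → ℝ)) :=
    {p | Valid p.1 p.2 ∧ ∑ i, p.2 i = 1 ∧ lo ≤ edge p.1 p.2 ∧ edge p.1 p.2 ≤ hi}
  have cE : Continuous fun p : (Fin n → Fin n → ℝ) × (Fin n → ℝ) => edge p.1 p.2 := by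
    unfold edge; fun_prop
  have cT : Continuous fun p : (Fin n → Fin n → ℝ) × (Fin n → ℝ) => tri p.1 p.2 := by
    unfold tri; fun_prop
  have hV : {p : (Fin n → Fin n → ℝ) × (Fin n → ℝ) | Valid p.1 p.2} =
      (⋂ i, ⋂ j, {p | p.1 i j = p.1 j i}) ∩ (⋂ i, ⋂ j, {p | 0 ≤ p.1 i j}) ∩
        (⋂ i, ⋂ j, {p | p.1 i j ≤ 1}) ∩ ⋂ i, {p | 0 ≤ p.2 i} := by
    ext p
    simp only [Set.mem_ofPred_eq, Set.mem_inter_iff, Set.mem_iInter]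
    exact ⟨fun h => ⟨⟨⟨h.symm, h.nonneg⟩, h.le_one⟩, h.wt⟩,
      fun h => ⟨h.1.1.1, h.1.1.2, h.1.2, h.2⟩⟩
  have cV : IsClosed {p : (Fin n → Fin n → ℝ) × (Fin n → ℝ) | Valid p.1 p.2} := by
    rw [hV]
    refine ((IsClosed.inter ?_ ?_).inter ?_).inter ?_
    · exact isClosed_iInter fun i => isClosed_iInter fun j =>
        isClosed_eq (by fun_prop) (by fun_prop)
    · exact isClosed_iInter fun i => isClosed_iInter fun j =>
        isClosed_le (by fun_prop) (by fun_prop)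
    · exact isClosed_iInter fun i => isClosed_iInter fun j =>
        isClosed_le (by fun_prop) (by fun_prop)
    · exact isClosed_iInter fun i => isClosed_le (by fun_prop) (by fun_prop)
  have hclosed : IsClosed S :=
    cV.inter ((isClosed_eq (by fun_prop) continuous_const).inter
      ((isClosed_le continuous_const cE).inter (isClosed_le cE continuous_const)))
  have hsub : S ⊆ Set.Icc 0 1 ×ˢ Set.Icc 0 1 := by
    rintro ⟨A, x⟩ ⟨hv, hm, -, -⟩
    refine ⟨⟨fun i j => hv.nonneg i j, fun i j => hv.le_one i j⟩, fun i => hv.wt i, fun i => ?_⟩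
    have := single_le_sum (f := x) (fun j _ => hv.wt j) (mem_univ i)
    exact this.trans hm.le
  have hcomp : IsCompact S := (isCompact_Icc.prod isCompact_Icc).of_isClosed_subset hclosed hsub
  have hcont : ContinuousOn (fun p : (Fin n → Fin n → ℝ) × (Fin n → ℝ) =>
      tri p.1 p.2 - Φ (edge p.1 p.2)) S := (cT.sub (hΦ.comp cE)).continuousOn
  have hne : S.Nonempty := ⟨(A₀, x₀), h₀, hm₀, hlo, hhi⟩
  obtain ⟨p, ⟨hv, hm, hl, hh⟩, hmin⟩ := hcomp.exists_isMinOn hne hcont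
  exact ⟨p.1, p.2, hv, hm, hl, hh, fun A' x' h1 h2 h3 h4 =>
    isMinOn_iff.1 hmin (A', x') ⟨h1, h2, h3, h4⟩⟩

/-- The size of the `s` larger parts in the complete `(s + 1)`-partite graph of edge density `P`:
the larger root `a` of `2 s a - s (s + 1) a ^ 2 = P`. -/
noncomputable def partSize (s P : ℝ) : ℝ := (s + √(s ^ 2 - s * (s + 1) * P)) / (s * (s + 1))

/-- The triangle density of that extremal graph, as a function of the edge density `P`. -/
noncomputable def scallop (s P : ℝ) : ℝ :=
  s * (s - 1) * partSize s P ^ 2 * (3 - 2 * (s + 1) * partSize s P)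

theorem continuous_scallop (s : ℝ) : Continuous (scallop s) := by
  unfold scallop partSize; fun_prop

theorem partSize_eq {s a : ℝ} (hs : 0 < s) (ha : 1 ≤ (s + 1) * a) :
    partSize s (2 * s * a - s * (s + 1) * a ^ 2) = a := by
  have h : s ^ 2 - s * (s + 1) * (2 * s * a - s * (s + 1) * a ^ 2)
      = (s * ((s + 1) * a - 1)) ^ 2 := by ring
  rw [partSize, h, Real.sqrt_sq (mul_nonneg hs.le (by linarith))]
  field_simp
  ring

theorem exists_partSize {s P : ℝ} (hs : 0 < s) (hlo : s - 1 ≤ s * P) (hhi : (s + 1) * P ≤ s) :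
    ∃ a, 1 ≤ (s + 1) * a ∧ s * a ≤ 1 ∧ P = 2 * s * a - s * (s + 1) * a ^ 2 := by
  have hD : 0 ≤ s ^ 2 - s * (s + 1) * P := by nlinarith
  have hr2 := Real.sq_sqrt hD
  have hr0 := Real.sqrt_nonneg (s ^ 2 - s * (s + 1) * P)
  have hr1 : √(s ^ 2 - s * (s + 1) * P) ≤ 1 := by
    rw [Real.sqrt_le_left zero_le_one]; nlinarith
  generalize √(s ^ 2 - s * (s + 1) * P) = r at *
  refine ⟨(s + r) / (s * (s + 1)), ?_, ?_, ?_⟩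
  · have : (s + 1) * ((s + r) / (s * (s + 1))) - 1 = r / s := by field_simp; ring
    have : 0 ≤ r / s := by positivity
    linarith
  · have : 1 - s * ((s + r) / (s * (s + 1))) = (1 - r) / (s + 1) := by field_simp; ring
    have : 0 ≤ (1 - r) / (s + 1) := div_nonneg (by linarith) (by linarith)
    linarith
  · have : 2 * s * ((s + r) / (s * (s + 1))) - s * (s + 1) * ((s + r) / (s * (s + 1))) ^ 2
        = (s ^ 2 - r ^ 2) / (s * (s + 1)) := by field_simp; ring
    rw [this, hr2]; field_simp; ring

theorem hasDerivAt_scallop {s a : ℝ} (hs : 0 < s) (ha : 1 < (s + 1) * a) :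
    HasDerivAt (scallop s) (3 * ((s - 1) * a)) (2 * s * a - s * (s + 1) * a ^ 2) := by
  have h : s ^ 2 - s * (s + 1) * (2 * s * a - s * (s + 1) * a ^ 2)
      = (s * ((s + 1) * a - 1)) ^ 2 := by ring
  have hr : 0 < s * ((s + 1) * a - 1) := mul_pos hs (by linarith)
  have d1 : HasDerivAt (fun P => s ^ 2 - s * (s + 1) * P) (-(s * (s + 1)))
      (2 * s * a - s * (s + 1) * a ^ 2) := by
    simpa using ((hasDerivAt_id (2 * s * a - s * (s + 1) * a ^ 2)).const_mul
      (s * (s + 1))).const_sub (s ^ 2)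
  have d2 := d1.sqrt (by rw [h]; positivity)
  rw [h, Real.sqrt_sq hr.le] at d2
  have d3 : HasDerivAt (partSize s) _ _ := (d2.const_add s).div_const (s * (s + 1))
  have d4 := ((d3.pow 2).const_mul (s * (s - 1))).mul ((d3.const_mul (2 * (s + 1))).const_sub 3)
  simp only [Pi.pow_apply] at d4
  refine HasDerivAt.congr_deriv (f := scallop s) d4 ?_
  rw [partSize_eq hs ha.le]
  have h1 : (s + 1) * a - 1 ≠ 0 := by linarith
  have h2 : s + 1 ≠ 0 := by linarith
  field_simp
  ring

/-- The induction step. A graph below the scallop yields a minimizer below it, which is stationary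
by Goodman's bound at the two end points. `Stationary.kfour_le` bounds its `kfour` from above;
summing `vertex_ineq` over all links bounds it from below by something larger. -/
theorem razborov_step {q : ℕ} (hq : 1 ≤ q) (ih : Razborov q) : Razborov (q + 1) := by
  intro n A₀ x₀ h₀ hm₀ a₀ ha1 ha2 he₀
  push_cast at *
  have hqR : (1 : ℝ) ≤ q := by exact_mod_cast hq
  set s : ℝ := (q : ℝ) + 1 with hs
  have hs0 : 0 < s := by linarith
  have hs1 : 0 < s + 1 := by linarith
  have hlo₀ : (s - 1) / s ≤ edge A₀ x₀ := by
    rw [he₀, div_le_iff₀ hs0]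
    nlinarith [mul_nonneg (sub_nonneg.2 ha2)
      (add_nonneg (mul_nonneg hs0.le (sub_nonneg.2 ha1)) zero_le_one)]
  have hhi₀ : edge A₀ x₀ ≤ s / (s + 1) := by
    rw [he₀, le_div_iff₀ hs1]; nlinarith [mul_nonneg hs0.le (sq_nonneg ((s + 1) * a₀ - 1))]
  obtain ⟨A, x, hv, hm, hl, hh, hmin⟩ := exists_minimizer (continuous_scallop s)
    ((s - 1) / s) (s / (s + 1)) A₀ x₀ h₀ hm₀ hlo₀ hhi₀
  have h00 := hmin A₀ x₀ h₀ hm₀ hlo₀ hhi₀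
  have hscal₀ : scallop s (edge A₀ x₀) = s * (s - 1) * a₀ ^ 2 * (3 - 2 * (s + 1) * a₀) := by
    rw [scallop, he₀, partSize_eq hs0 ha1]
  rw [← hscal₀]
  suffices 0 ≤ tri A x - scallop s (edge A x) by linarith
  by_contra hneg
  push Not at hneg
  obtain ⟨a, h1, h2, hP⟩ := exists_partSize (P := edge A x) hs0
    (by rw [div_le_iff₀ hs0] at hl; linarith) (by rw [le_div_iff₀ hs1] at hh; linarith)
  have hscal : scallop s (edge A x) = s * (s - 1) * a ^ 2 * (3 - 2 * (s + 1) * a) := by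
    rw [scallop, hP, partSize_eq hs0 h1]
  rw [hscal] at hneg
  have hg := goodman hv
  rw [hm, hP] at hg
  -- at both ends of the interval the scallop meets Goodman's parabola
  have h1' : 1 < (s + 1) * a := by
    refine lt_of_le_of_ne h1 fun h => ?_
    have ha : a = 1 / (s + 1) := by field_simp; linarith
    rw [ha] at hg hneg
    have : s * (s - 1) * (1 / (s + 1)) ^ 2 * (3 - 2 * (s + 1) * (1 / (s + 1)))
      = (2 * s * (1 / (s + 1)) - s * (s + 1) * (1 / (s + 1)) ^ 2) *
        (2 * (2 * s * (1 / (s + 1)) - s * (s + 1) * (1 / (s + 1)) ^ 2) - 1 ^ 2) := by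
      field_simp; ring
    linarith
  have h2' : s * a < 1 := by
    refine lt_of_le_of_ne h2 fun h => ?_
    have ha : a = 1 / s := by field_simp; linarith
    rw [ha] at hg hneg
    have : s * (s - 1) * (1 / s) ^ 2 * (3 - 2 * (s + 1) * (1 / s))
      = (2 * s * (1 / s) - s * (s + 1) * (1 / s) ^ 2) *
        (2 * (2 * s * (1 / s) - s * (s + 1) * (1 / s) ^ 2) - 1 ^ 2) := by
      field_simp; ring
    linarith
  have S : Stationary (scallop s) ((s - 1) / s) (s / (s + 1)) ((s - 1) * a) A x := by
    refine ⟨hv, hm, ?_, ?_, ?_, hmin⟩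
    · rw [hP, div_lt_iff₀ hs0]
      nlinarith [mul_pos (sub_pos.2 h2')
        (add_pos (mul_pos hs0 (sub_pos.2 h1')) zero_lt_one)]
    · rw [hP, lt_div_iff₀ hs1]
      nlinarith [mul_pos hs0 (pow_pos (show 0 < (s + 1) * a - 1 by linarith) 2)]
    · rw [hP]; exact hasDerivAt_scallop hs0 h1'
  have hqs : s - 1 = q := by rw [hs]; ring
  have ha0 : 0 < a := by
    by_contra h; push Not at h; nlinarith
  obtain ⟨δ, hδ⟩ : ∃ δ : ℝ, δ = s * (s - 1) * a ^ 2 * (3 - 2 * (s + 1) * a) - tri A x := ⟨_, rfl⟩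
  have hδ0 : 0 < δ := by linarith
  have hT : tri A x = (q + 1) * q * a ^ 2 * (3 - 2 * (q + 2) * a) - δ := by
    rw [hδ, hqs, hs]; ring
  have hP' : edge A x = 2 * (q + 1) * a - (q + 1) * (q + 2) * a ^ 2 := by rw [hP, hs]; ring
  have hdeg1 : ∀ v, vdeg A x v ≤ 1 := fun v =>
    (sum_le_sum fun j _ => mul_le_of_le_one_left (hv.wt j) (hv.le_one v j)).trans hm.le
  have hdeg0 : ∀ v, 0 ≤ vdeg A x v := fun v =>
    sum_nonneg fun j _ => mul_nonneg (hv.nonneg v j) (hv.wt j)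
  -- the lower bound for the number of triangles in the link of a vertex of positive weight
  have hvert : ∀ v, x v ≠ 0 →
      (q : ℝ) * (q - 1) * a ^ 2 * (3 * vdeg A x v - 2 * (q + 1) * a)
      - (3 * (q * a) - 2 + 3 * (2 * (q + 1) * a - (q + 1) * (q + 2) * a ^ 2)) * δ
      < tri A (fun j => A v j * x j) := by
    intro v hxv
    have hvt : vtri A x v = 2 * (q * a) * vdeg A x v - q * (q + 1) * a ^ 2 - δ := by
      rw [S.vtri_eq v hxv, hP', hT, hqs]; ring
    have hvt0 : 0 ≤ vtri A x v := by
      rw [← edge_link]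
      exact sum_nonneg fun i _ => sum_nonneg fun j _ =>
        mul_nonneg (hv.nonneg i j) (mul_nonneg ((hv.link v).wt i) ((hv.link v).wt j))
    have hd0 : 0 < vdeg A x v := by
      refine lt_of_le_of_ne (hdeg0 v) fun h => ?_
      rw [← h] at hvt
      have : 0 ≤ (q : ℝ) * (q + 1) * a ^ 2 := by positivity
      linarith
    have hgl := goodman (hv.link v)
    rw [edge_link] at hgl
    refine vertex_ineq q hq a δ (vdeg A x v) (vtri A x v) _ (by rw [hs] at h1'; linarith)
      h2' hδ0 hd0 (hdeg1 v) hvt ?_ hgl ?_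
    · have := S.vtri_le v hxv
      rwa [hqs] at this
    · intro b hb1 hb2 hb3
      exact ih.scaled (hv.link v) hd0 rfl b hb1 hb2 (by rw [edge_link, hb3])
  have hsum : (q : ℝ) * (q - 1) * a ^ 2 * (3 * edge A x - 2 * (q + 1) * a)
      - (3 * (q * a) - 2 + 3 * (2 * (q + 1) * a - (q + 1) * (q + 2) * a ^ 2)) * δ
      < kfour A x := by
    have e1 : (q : ℝ) * (q - 1) * a ^ 2 * (3 * edge A x - 2 * (q + 1) * a)
      - (3 * (q * a) - 2 + 3 * (2 * (q + 1) * a - (q + 1) * (q + 2) * a ^ 2)) * δ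
      = ∑ v, x v * ((q : ℝ) * (q - 1) * a ^ 2 * (3 * vdeg A x v - 2 * (q + 1) * a)
      - (3 * (q * a) - 2 + 3 * (2 * (q + 1) * a - (q + 1) * (q + 2) * a ^ 2)) * δ) := by
      have : ∀ v, x v * ((q : ℝ) * (q - 1) * a ^ 2 * (3 * vdeg A x v - 2 * (q + 1) * a)
        - (3 * (q * a) - 2 + 3 * (2 * (q + 1) * a - (q + 1) * (q + 2) * a ^ 2)) * δ)
        = 3 * (q : ℝ) * (q - 1) * a ^ 2 * (x v * vdeg A x v)
        + (- ((q : ℝ) * (q - 1) * a ^ 2 * (2 * (q + 1) * a))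
        - (3 * (q * a) - 2 + 3 * (2 * (q + 1) * a - (q + 1) * (q + 2) * a ^ 2)) * δ) * x v := by
        intro v; ring
      simp only [this, sum_add_distrib, ← mul_sum]
      rw [hm, ← edge_eq]; ring
    rw [e1, kfour]
    obtain ⟨v, -, hxv⟩ : ∃ v ∈ univ, x v ≠ 0 := by
      refine exists_ne_zero_of_sum_ne_zero ?_
      rw [hm]; norm_num
    refine sum_lt_sum (fun w _ => ?_) ⟨v, mem_univ v, ?_⟩
    · by_cases hw : x w = 0
      · simp [hw]
      · exact mul_le_mul_of_nonneg_left (hvert w hw).le (hv.wt w)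
    · exact mul_lt_mul_of_pos_left (hvert v hxv) (lt_of_le_of_ne (hv.wt v) (Ne.symm hxv))
  have hk := S.kfour_le
  rw [hqs, hT, hP'] at hk
  rw [hP'] at hsum
  linarith

theorem razborov {s : ℕ} (hs : 1 ≤ s) : Razborov s := by
  induction s, hs using Nat.le_induction with
  | base =>
    intro n A x h _ a _ _ _
    simpa using tri_nonneg h
  | succ q hq ih => exact razborov_step hq ih

/-! ### Approximation of graphons by weighted graphs -/

/-- Lebesgue measure on the unit interval. -/
noncomputable abbrev unitMeasure : Measure ℝ := volume.restrict (Set.Icc (0 : ℝ) 1)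

instance : IsProbabilityMeasure unitMeasure := ⟨by simp [unitMeasure]⟩

theorem integral_step (n : ℕ) (hn : 0 < n) (h : ℕ → ℝ) :
    ∫ x, h ⌊(n : ℝ) * x⌋₊ ∂unitMeasure = ∑ i : Fin n, h i * (1 / n) := by
  have hn' : (0 : ℝ) < n := by exact_mod_cast hn
  have hcell : ∀ k : ℕ, Set.EqOn (fun x : ℝ => h ⌊x⌋₊) (fun _ => h k)
      (Set.Ico (k : ℝ) ((k + 1 : ℕ) : ℝ)) := by
    intro k x hx
    have : ⌊x⌋₊ = k := by
      rw [Nat.floor_eq_iff ((Nat.cast_nonneg k).trans hx.1)]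
      exact ⟨hx.1, by simpa using hx.2⟩
    simp only [this]
  have hle : ∀ k : ℕ, (k : ℝ) ≤ ((k + 1 : ℕ) : ℝ) := fun k => by push_cast; linarith
  have hInt : ∀ k < n, IntervalIntegrable (fun x : ℝ => h ⌊x⌋₊) volume (k : ℝ) ((k + 1 : ℕ) : ℝ) := by
    intro k _
    rw [intervalIntegrable_iff_integrableOn_Ico_of_le (hle k)]
    exact (integrableOn_congr_fun (hcell k) measurableSet_Ico).2 (integrableOn_const (by simp))
  have hval : ∀ k : ℕ, ∫ x in (k : ℝ)..((k + 1 : ℕ) : ℝ), h ⌊x⌋₊ = h k := by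
    intro k
    rw [intervalIntegral.integral_of_le (hle k), ← integral_Ico_eq_integral_Ioc,
      setIntegral_congr_fun measurableSet_Ico (hcell k)]
    simp
  have hsum := intervalIntegral.sum_integral_adjacent_intervals
    (a := fun k : ℕ => (k : ℝ)) (f := fun x : ℝ => h ⌊x⌋₊) (μ := volume) hInt
  rw [unitMeasure, integral_Icc_eq_integral_Ioc, ← intervalIntegral.integral_of_le zero_le_one,
    intervalIntegral.integral_comp_mul_left (fun x => h ⌊x⌋₊) hn'.ne']
  simp only [hval] at hsum
  rw [← sum_mul, Fin.sum_univ_eq_sum_range (fun i => h i) n, hsum]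
  simp [mul_comm]

theorem integrable_of_mem_Icc {α : Type*} [MeasurableSpace α] {μ : Measure α}
    [IsFiniteMeasure μ] {f : α → ℝ} (hf : Measurable f) (h : ∀ a, f a ∈ Set.Icc (0 : ℝ) 1) :
    Integrable f μ :=
  Integrable.of_mem_Icc 0 1 hf.aemeasurable (ae_of_all _ h)

/-- Fubini for the unit cube. -/
theorem integral3_eq {f : ℝ × ℝ × ℝ → ℝ}
    (hf : Integrable f (unitMeasure.prod (unitMeasure.prod unitMeasure))) :
    ∫ p, f p ∂(unitMeasure.prod (unitMeasure.prod unitMeasure)) =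
      ∫ x, ∫ y, ∫ z, f (x, y, z) ∂unitMeasure ∂unitMeasure ∂unitMeasure := by
  rw [integral_prod f hf]
  refine integral_congr_ae ?_
  filter_upwards [hf.prod_right_ae] with x hx
  exact integral_prod (fun p : ℝ × ℝ => f (x, p)) hx

/-- Triple integrals of functions that differ pointwise by a sum of pairwise errors `D` differ by at
most three times the integral of `D`. -/
theorem integral3_sub_le {f g : ℝ → ℝ → ℝ → ℝ} {D : ℝ → ℝ → ℝ}
    (hf : Measurable fun p : ℝ × ℝ × ℝ => f p.1 p.2.1 p.2.2)
    (hg : Measurable fun p : ℝ × ℝ × ℝ => g p.1 p.2.1 p.2.2)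
    (hD : Measurable fun p : ℝ × ℝ => D p.1 p.2)
    (hf1 : ∀ x y z, f x y z ∈ Set.Icc (0 : ℝ) 1) (hg1 : ∀ x y z, g x y z ∈ Set.Icc (0 : ℝ) 1)
    (hD1 : ∀ x y, D x y ∈ Set.Icc (0 : ℝ) 1)
    (h : ∀ x y z, |f x y z - g x y z| ≤ D x y + D x z + D y z) :
    |(∫ x, ∫ y, ∫ z, f x y z ∂unitMeasure ∂unitMeasure ∂unitMeasure)
      - ∫ x, ∫ y, ∫ z, g x y z ∂unitMeasure ∂unitMeasure ∂unitMeasure|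
      ≤ 3 * ∫ p, D p.1 p.2 ∂(unitMeasure.prod unitMeasure) := by
  set μ3 := unitMeasure.prod (unitMeasure.prod unitMeasure) with hμ3
  have If : Integrable (fun p : ℝ × ℝ × ℝ => f p.1 p.2.1 p.2.2) μ3 :=
    integrable_of_mem_Icc hf fun p => hf1 _ _ _
  have Ig : Integrable (fun p : ℝ × ℝ × ℝ => g p.1 p.2.1 p.2.2) μ3 :=
    integrable_of_mem_Icc hg fun p => hg1 _ _ _
  have I2 : Integrable (fun p : ℝ × ℝ => D p.1 p.2) (unitMeasure.prod unitMeasure) :=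
    integrable_of_mem_Icc hD fun p => hD1 _ _
  have J1 : Integrable (fun p : ℝ × ℝ × ℝ => D p.1 p.2.1) μ3 :=
    integrable_of_mem_Icc (hD.comp (f := fun p : ℝ × ℝ × ℝ => (p.1, p.2.1)) (by fun_prop))
      fun p => hD1 _ _
  have J2 : Integrable (fun p : ℝ × ℝ × ℝ => D p.1 p.2.2) μ3 :=
    integrable_of_mem_Icc (hD.comp (f := fun p : ℝ × ℝ × ℝ => (p.1, p.2.2)) (by fun_prop))
      fun p => hD1 _ _
  have J3 : Integrable (fun p : ℝ × ℝ × ℝ => D p.2.1 p.2.2) μ3 :=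
    integrable_of_mem_Icc (hD.comp (f := fun p : ℝ × ℝ × ℝ => (p.2.1, p.2.2)) (by fun_prop))
      fun p => hD1 _ _
  have e1 : ∫ p, D p.1 p.2.1 ∂μ3 = ∫ p, D p.1 p.2 ∂(unitMeasure.prod unitMeasure) := by
    rw [integral3_eq J1, integral_prod _ I2]; simp
  have e2 : ∫ p, D p.1 p.2.2 ∂μ3 = ∫ p, D p.1 p.2 ∂(unitMeasure.prod unitMeasure) := by
    rw [integral3_eq J2, integral_prod _ I2]; simp
  have e3 : ∫ p, D p.2.1 p.2.2 ∂μ3 = ∫ p, D p.1 p.2 ∂(unitMeasure.prod unitMeasure) := by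
    rw [integral3_eq J3, integral_prod _ I2]; simp
  rw [← integral3_eq If, ← integral3_eq Ig, ← integral_sub If Ig]
  refine (abs_integral_le_integral_abs).trans ?_
  have : ∫ p, |f p.1 p.2.1 p.2.2 - g p.1 p.2.1 p.2.2| ∂μ3 ≤
      ∫ p, (D p.1 p.2.1 + D p.1 p.2.2 + D p.2.1 p.2.2) ∂μ3 :=
    integral_mono (If.sub Ig).abs ((J1.add J2).add J3) fun p => h _ _ _
  refine this.trans (le_of_eq ?_)
  have hs : ∫ p, (D p.1 p.2.1 + D p.1 p.2.2 + D p.2.1 p.2.2) ∂μ3 =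
      ∫ p, D p.1 p.2.1 ∂μ3 + ∫ p, D p.1 p.2.2 ∂μ3 + ∫ p, D p.2.1 p.2.2 ∂μ3 := by
    rw [← integral_add J1 J2]
    exact integral_add (J1.add J2) J3
  rw [hs, e1, e2, e3]
  ring

theorem abs_mul3_sub_le {a b c a' b' c' : ℝ} (hb : b ∈ Set.Icc (0 : ℝ) 1)
    (hc : c ∈ Set.Icc (0 : ℝ) 1) (ha' : a' ∈ Set.Icc (0 : ℝ) 1) (hb' : b' ∈ Set.Icc (0 : ℝ) 1) :
    |a * b * c - a' * b' * c'| ≤ |a - a'| + |b - b'| + |c - c'| := by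
  have e : a * b * c - a' * b' * c' = (a - a') * (b * c) + (b - b') * (a' * c)
      + (c - c') * (a' * b') := by ring
  have aux : ∀ u p r : ℝ, p ∈ Set.Icc (0 : ℝ) 1 → r ∈ Set.Icc (0 : ℝ) 1 →
      |u * (p * r)| ≤ |u| := by
    intro u p r hp hr
    rw [abs_mul, abs_of_nonneg (mul_nonneg hp.1 hr.1)]
    exact mul_le_of_le_one_right (abs_nonneg u) (mul_le_one₀ hp.2 hr.1 hr.2)
  rw [e]
  refine (abs_add_three _ _ _).trans ?_
  exact add_le_add (add_le_add (aux _ _ _ hb hc) (aux _ _ _ ha' hc)) (aux _ _ _ ha' hb')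

theorem mul3_mem {a b c : ℝ} (ha : a ∈ Set.Icc (0 : ℝ) 1) (hb : b ∈ Set.Icc (0 : ℝ) 1)
    (hc : c ∈ Set.Icc (0 : ℝ) 1) : a * b * c ∈ Set.Icc (0 : ℝ) 1 :=
  ⟨mul_nonneg (mul_nonneg ha.1 hb.1) hc.1,
    mul_le_one₀ (mul_le_one₀ ha.2 hb.1 hb.2) hc.1 hc.2⟩

/-- A graphon is within `ε` in `L¹` of a symmetric step function on an equal grid: approximate it
by a uniformly continuous function, sample at the grid points, symmetrize and clip to `[0, 1]`. -/
theorem exists_step_approx (G : Graphon) {ε : ℝ} (hε : 0 < ε) :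
    ∃ (n : ℕ) (_ : 0 < n) (B : ℕ → ℕ → ℝ), (∀ i j, B i j ∈ Set.Icc (0 : ℝ) 1) ∧
      (∀ i j, B i j = B j i) ∧
      ∫ p, |G.W p.1 p.2 - B ⌊(n : ℝ) * p.1⌋₊ ⌊(n : ℝ) * p.2⌋₊| ∂(unitMeasure.prod unitMeasure)
        ≤ ε := by
  have IW : Integrable (fun p : ℝ × ℝ => G.W p.1 p.2) (unitMeasure.prod unitMeasure) :=
    integrable_of_mem_Icc G.measurable fun p => G.mem_Icc _ _
  obtain ⟨g, hgc, hgi, hgcont, hgint⟩ :=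
    IW.exists_hasCompactSupport_integral_sub_le (half_pos hε)
  have huc := hgc.uniformContinuous_of_continuous hgcont
  rw [Metric.uniformContinuous_iff] at huc
  obtain ⟨η, hη, hηg⟩ := huc (ε / 2) (half_pos hε)
  obtain ⟨m, hm⟩ := exists_nat_one_div_lt hη
  set n := m + 1 with hn
  have hn0 : (0 : ℝ) < n := by rw [hn]; positivity
  have hnη : 1 / (n : ℝ) < η := by rw [hn]; push_cast; exact hm
  set clip : ℝ → ℝ := fun u => max 0 (min 1 u) with hclip
  have clip_mem : ∀ u, clip u ∈ Set.Icc (0 : ℝ) 1 := fun u =>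
    ⟨le_max_left _ _, max_le zero_le_one (min_le_left _ _)⟩
  have clip_sub : ∀ w u, w ∈ Set.Icc (0 : ℝ) 1 → |w - clip u| ≤ |w - u| := by
    intro w u hw
    have h1 : clip w = w := by simp [hclip, hw.1, hw.2]
    calc |w - clip u| = |max 0 (min 1 w) - max 0 (min 1 u)| := by
          rw [← h1]; simp only [hclip]; simp
      _ ≤ |min 1 w - min 1 u| := by
          simpa [max_comm] using abs_max_sub_max_le_abs (min 1 w) (min 1 u) 0
      _ ≤ |w - u| := by
          have := abs_min_sub_min_le_max 1 w 1 u
          simpa using this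
  set B : ℕ → ℕ → ℝ := fun i j =>
    clip ((g ((i : ℝ) / n, (j : ℝ) / n) + g ((j : ℝ) / n, (i : ℝ) / n)) / 2) with hB
  refine ⟨n, Nat.succ_pos m, B, fun i j => clip_mem _, fun i j => by simp only [hB, add_comm], ?_⟩
  set U : ℝ × ℝ → ℝ := fun p => |G.W p.1 p.2 - g p| with hU
  have IU : Integrable U (unitMeasure.prod unitMeasure) := (IW.sub hgint).abs
  have IUs : Integrable (fun p => U p.swap) (unitMeasure.prod unitMeasure) := IU.swap
  have hUε : ∫ p, U p ∂(unitMeasure.prod unitMeasure) ≤ ε / 2 := hgi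
  have hUs : ∫ p, U p.swap ∂(unitMeasure.prod unitMeasure) ≤ ε / 2 := by
    rw [integral_prod_swap]; exact hUε
  -- the grid point below `x` is within `1 / n` of `x`
  have hfl : ∀ x : ℝ, 0 ≤ x → dist x ((⌊(n : ℝ) * x⌋₊ : ℝ) / n) < η := by
    intro x hx
    have h1 := Nat.floor_le (mul_nonneg hn0.le hx)
    have h2 := Nat.lt_floor_add_one ((n : ℝ) * x)
    have h3 : ((⌊(n : ℝ) * x⌋₊ : ℝ) / n) ≤ x := by rw [div_le_iff₀ hn0]; linarith
    rw [Real.dist_eq, abs_of_nonneg (by linarith)]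
    refine lt_of_le_of_lt ?_ hnη
    have : x - (⌊(n : ℝ) * x⌋₊ : ℝ) / n = (n * x - ⌊(n : ℝ) * x⌋₊) / n := by field_simp
    rw [this]
    gcongr
    linarith
  have hae : ∀ᵐ p ∂(unitMeasure.prod unitMeasure), (0 : ℝ) ≤ p.1 ∧ (0 : ℝ) ≤ p.2 := by
    rw [unitMeasure, Measure.prod_restrict]
    filter_upwards [ae_restrict_mem (measurableSet_Icc.prod measurableSet_Icc)] with p hp
    exact ⟨hp.1.1, hp.2.1⟩
  have hbound : ∀ᵐ p ∂(unitMeasure.prod unitMeasure),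
      |G.W p.1 p.2 - B ⌊(n : ℝ) * p.1⌋₊ ⌊(n : ℝ) * p.2⌋₊|
        ≤ (U p + U p.swap) / 2 + ε / 2 := by
    filter_upwards [hae] with p hp
    set i := ⌊(n : ℝ) * p.1⌋₊
    set j := ⌊(n : ℝ) * p.2⌋₊
    have d1 := hfl p.1 hp.1
    have d2 := hfl p.2 hp.2
    have h1 : |g p - g ((i : ℝ) / n, (j : ℝ) / n)| < ε / 2 := by
      rw [← Real.dist_eq]
      exact hηg (by rw [Prod.dist_eq]; exact max_lt d1 d2)
    have h2 : |g p.swap - g ((j : ℝ) / n, (i : ℝ) / n)| < ε / 2 := by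
      rw [← Real.dist_eq]
      exact hηg (by rw [Prod.dist_eq]; exact max_lt d2 d1)
    refine (clip_sub _ _ (G.mem_Icc _ _)).trans ?_
    have h3 : U p.swap = |G.W p.1 p.2 - g p.swap| := by
      simp only [hU, Prod.fst_swap, Prod.snd_swap]; rw [G.symm]
    have h4 : U p = |G.W p.1 p.2 - g p| := rfl
    rw [h3, h4]
    rw [abs_le]
    have a1 := abs_lt.1 h1
    have a2 := abs_lt.1 h2
    have a3 := neg_abs_le (G.W p.1 p.2 - g p)
    have a4 := le_abs_self (G.W p.1 p.2 - g p)
    have a5 := neg_abs_le (G.W p.1 p.2 - g p.swap)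
    have a6 := le_abs_self (G.W p.1 p.2 - g p.swap)
    constructor <;> linarith
  have IR : Integrable (fun p => (U p + U p.swap) / 2 + ε / 2) (unitMeasure.prod unitMeasure) :=
    ((IU.add IUs).div_const 2).add (integrable_const _)
  refine (integral_mono_of_nonneg (ae_of_all _ fun p => abs_nonneg _) IR hbound).trans ?_
  have hs : ∫ p, ((U p + U p.swap) / 2 + ε / 2) ∂(unitMeasure.prod unitMeasure) =
      (∫ p, U p ∂(unitMeasure.prod unitMeasure)
        + ∫ p, U p.swap ∂(unitMeasure.prod unitMeasure)) / 2 + ε / 2 := by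
    rw [← integral_add IU IUs, ← integral_div]
    refine (integral_add ((IU.add IUs).div_const 2) (integrable_const _)).trans ?_
    simp
  rw [hs]
  linarith

theorem integral3_step (n : ℕ) (hn : 0 < n) (h : ℕ → ℕ → ℕ → ℝ) :
    ∫ x, ∫ y, ∫ z, h ⌊(n : ℝ) * x⌋₊ ⌊(n : ℝ) * y⌋₊ ⌊(n : ℝ) * z⌋₊
      ∂unitMeasure ∂unitMeasure ∂unitMeasure =
      ∑ i : Fin n, ∑ j : Fin n, ∑ k : Fin n, h i j k * (1 / n * (1 / n) * (1 / n)) := by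
  have e1 : ∀ i j, ∫ z, h i j ⌊(n : ℝ) * z⌋₊ ∂unitMeasure
      = ∑ k : Fin n, h i j k * (1 / (n : ℝ)) := fun i j => integral_step n hn (h i j)
  have e2 : ∀ i, ∫ y, (∑ k : Fin n, h i ⌊(n : ℝ) * y⌋₊ k * (1 / (n : ℝ))) ∂unitMeasure
      = ∑ j : Fin n, (∑ k : Fin n, h i j k * (1 / (n : ℝ))) * (1 / (n : ℝ)) := fun i =>
    integral_step n hn (fun j => ∑ k : Fin n, h i j k * (1 / (n : ℝ)))
  simp only [e1, e2]
  rw [integral_step n hn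
    (fun i => ∑ j : Fin n, (∑ k : Fin n, h i j k * (1 / (n : ℝ))) * (1 / (n : ℝ)))]
  simp only [sum_mul]
  exact sum_congr rfl fun i _ => sum_congr rfl fun j _ => sum_congr rfl fun k _ => by ring

/-- The cherry and triangle densities of a graphon are approximated by those of finite weighted
graphs. -/
theorem exists_weighted_graph (G : Graphon) {ε : ℝ} (hε : 0 < ε) :
    ∃ (n : ℕ) (A : Fin n → Fin n → ℝ) (x : Fin n → ℝ), Valid A x ∧ ∑ i, x i = 1 ∧
      |d2 G - 3 * (cherry A x - tri A x)| ≤ ε ∧ |d3 G - tri A x| ≤ ε := by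
  obtain ⟨n, hn, B, hB, hBs, hInt⟩ := exists_step_approx G (show 0 < ε / 9 by linarith)
  have hn' : (n : ℝ) ≠ 0 := by exact_mod_cast hn.ne'
  have hW : ∀ u v : ℝ × ℝ × ℝ → ℝ, Measurable u → Measurable v →
      Measurable fun p => G.W (u p) (v p) := fun u v hu hv => G.measurable.comp (hu.prodMk hv)
  have hfl : Measurable fun x : ℝ => ⌊(n : ℝ) * x⌋₊ :=
    Nat.measurable_floor.comp (measurable_const.mul measurable_id)
  have hBm : Measurable fun p : ℕ × ℕ => B p.1 p.2 := measurable_of_countable _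
  have hS : ∀ u v : ℝ × ℝ × ℝ → ℝ, Measurable u → Measurable v →
      Measurable fun p => B ⌊(n : ℝ) * u p⌋₊ ⌊(n : ℝ) * v p⌋₊ := fun u v hu hv =>
    hBm.comp ((hfl.comp hu).prodMk (hfl.comp hv))
  have m1 : Measurable fun p : ℝ × ℝ × ℝ => p.1 := by fun_prop
  have m2 : Measurable fun p : ℝ × ℝ × ℝ => p.2.1 := by fun_prop
  have m3 : Measurable fun p : ℝ × ℝ × ℝ => p.2.2 := by fun_prop
  have hD : Measurable fun p : ℝ × ℝ =>
      |G.W p.1 p.2 - B ⌊(n : ℝ) * p.1⌋₊ ⌊(n : ℝ) * p.2⌋₊| := by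
    have h1 : Measurable fun p : ℝ × ℝ => B ⌊(n : ℝ) * p.1⌋₊ ⌊(n : ℝ) * p.2⌋₊ :=
      hBm.comp ((hfl.comp measurable_fst).prodMk (hfl.comp measurable_snd))
    have h2 : Measurable fun p : ℝ × ℝ => G.W p.1 p.2 := G.measurable
    exact (h2.sub h1).abs
  have hD1 : ∀ x y : ℝ, |G.W x y - B ⌊(n : ℝ) * x⌋₊ ⌊(n : ℝ) * y⌋₊| ∈ Set.Icc (0 : ℝ) 1 := by
    intro x y
    refine ⟨abs_nonneg _, abs_le.2 ⟨?_, ?_⟩⟩ <;>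
      linarith [(G.mem_Icc x y).1, (G.mem_Icc x y).2, (hB ⌊(n : ℝ) * x⌋₊ ⌊(n : ℝ) * y⌋₊).1,
        (hB ⌊(n : ℝ) * x⌋₊ ⌊(n : ℝ) * y⌋₊).2]
  have one_sub_mem : ∀ {u : ℝ}, u ∈ Set.Icc (0 : ℝ) 1 → 1 - u ∈ Set.Icc (0 : ℝ) 1 :=
    fun hu => ⟨by linarith [hu.2], by linarith [hu.1]⟩
  have c2 := integral3_sub_le
    (f := fun x y z => G.W x y * G.W x z * (1 - G.W y z))
    (g := fun x y z => B ⌊(n : ℝ) * x⌋₊ ⌊(n : ℝ) * y⌋₊ * B ⌊(n : ℝ) * x⌋₊ ⌊(n : ℝ) * z⌋₊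
      * (1 - B ⌊(n : ℝ) * y⌋₊ ⌊(n : ℝ) * z⌋₊))
    (D := fun x y => |G.W x y - B ⌊(n : ℝ) * x⌋₊ ⌊(n : ℝ) * y⌋₊|)
    (((hW _ _ m1 m2).mul (hW _ _ m1 m3)).mul (measurable_const.sub (hW _ _ m2 m3)))
    (((hS _ _ m1 m2).mul (hS _ _ m1 m3)).mul (measurable_const.sub (hS _ _ m2 m3)))
    hD (fun x y z => mul3_mem (G.mem_Icc _ _) (G.mem_Icc _ _) (one_sub_mem (G.mem_Icc _ _)))
    (fun x y z => mul3_mem (hB _ _) (hB _ _) (one_sub_mem (hB _ _))) hD1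
    (fun x y z => by
      refine (abs_mul3_sub_le (G.mem_Icc _ _) (one_sub_mem (G.mem_Icc _ _)) (hB _ _)
        (hB _ _)).trans (le_of_eq ?_)
      rw [show (1 - G.W y z) - (1 - B ⌊(n : ℝ) * y⌋₊ ⌊(n : ℝ) * z⌋₊)
        = -(G.W y z - B ⌊(n : ℝ) * y⌋₊ ⌊(n : ℝ) * z⌋₊) by ring, abs_neg])
  have c3 := integral3_sub_le
    (f := fun x y z => G.W x y * G.W y z * G.W x z)
    (g := fun x y z => B ⌊(n : ℝ) * x⌋₊ ⌊(n : ℝ) * y⌋₊ * B ⌊(n : ℝ) * y⌋₊ ⌊(n : ℝ) * z⌋₊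
      * B ⌊(n : ℝ) * x⌋₊ ⌊(n : ℝ) * z⌋₊)
    (D := fun x y => |G.W x y - B ⌊(n : ℝ) * x⌋₊ ⌊(n : ℝ) * y⌋₊|)
    (((hW _ _ m1 m2).mul (hW _ _ m2 m3)).mul (hW _ _ m1 m3))
    (((hS _ _ m1 m2).mul (hS _ _ m2 m3)).mul (hS _ _ m1 m3))
    hD (fun x y z => mul3_mem (G.mem_Icc _ _) (G.mem_Icc _ _) (G.mem_Icc _ _))
    (fun x y z => mul3_mem (hB _ _) (hB _ _) (hB _ _)) hD1
    (fun x y z => by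
      refine (abs_mul3_sub_le (G.mem_Icc _ _) (G.mem_Icc _ _) (hB _ _)
        (hB _ _)).trans (le_of_eq ?_)
      ring)
  rw [integral3_step n hn (fun i j k => B i j * B i k * (1 - B j k))] at c2
  rw [integral3_step n hn (fun i j k => B i j * B j k * B i k)] at c3
  have t3 : ∑ i : Fin n, ∑ j : Fin n, ∑ k : Fin n, B i j * B j k * B i k
      * (1 / (n : ℝ) * (1 / n) * (1 / n))
      = tri (fun i j : Fin n => B i j) (fun _ => 1 / (n : ℝ)) := by
    simp only [tri]
    exact sum_congr rfl fun i _ => sum_congr rfl fun j _ => sum_congr rfl fun k _ => by ring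
  have t2 : ∑ i : Fin n, ∑ j : Fin n, ∑ k : Fin n, B i j * B i k * (1 - B j k)
      * (1 / (n : ℝ) * (1 / n) * (1 / n))
      = cherry (fun i j : Fin n => B i j) (fun _ => 1 / (n : ℝ))
        - tri (fun i j : Fin n => B i j) (fun _ => 1 / (n : ℝ)) := by
    rw [← cherry_eq]
    simp only [tri, ← sum_sub_distrib]
    exact sum_congr rfl fun i _ => sum_congr rfl fun j _ => sum_congr rfl fun k _ => by ring
  rw [t3] at c3
  rw [t2] at c2
  refine ⟨n, fun i j => B i j, fun _ => 1 / (n : ℝ),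
    ⟨fun i j => hBs _ _, fun i j => (hB _ _).1, fun i j => (hB _ _).2, fun _ => by positivity⟩,
    by simp [hn'], ?_, ?_⟩
  · have : d2 G = 3 * ∫ x, ∫ y, ∫ z, G.W x y * G.W x z * (1 - G.W y z)
        ∂unitMeasure ∂unitMeasure ∂unitMeasure := rfl
    rw [this, ← mul_sub, abs_mul, abs_of_pos (by norm_num : (0 : ℝ) < 3)]
    linarith
  · have : d3 G = ∫ x, ∫ y, ∫ z, G.W x y * G.W y z * G.W x z
        ∂unitMeasure ∂unitMeasure ∂unitMeasure := rfl
    rw [this]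
    linarith

/-- A consequence of the minimum-triangle theorem for edge densities above `e`: multiplying all
edge weights by `e / edge A x` gives a graph of edge density exactly `e`. -/
theorem tri_mul_cube_le {s : ℕ} (hs : 1 ≤ s) {n : ℕ} {A : Fin n → Fin n → ℝ} {x : Fin n → ℝ}
    (h : Valid A x) (hx : ∑ i, x i = 1) {a : ℝ} (h1 : 1 ≤ ((s : ℝ) + 1) * a)
    (h2 : (s : ℝ) * a ≤ 1) {e : ℝ} (he : e = 2 * s * a - s * (s + 1) * a ^ 2) (he0 : 0 < e)
    (hle : e ≤ edge A x) :
    (s : ℝ) * (s - 1) * a ^ 2 * (3 - 2 * (s + 1) * a) * edge A x ^ 3 ≤ tri A x * e ^ 3 := by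
  have hP : 0 < edge A x := he0.trans_le hle
  set θ : ℝ := e / edge A x with hθ
  have hθ0 : 0 ≤ θ := by positivity
  have hθ1 : θ ≤ 1 := (div_le_one hP).2 hle
  have hE : edge (fun i j => θ * A i j) x = θ * edge A x := by
    simp only [edge, mul_sum]
    exact sum_congr rfl fun i _ => sum_congr rfl fun j _ => by ring
  have hT : tri (fun i j => θ * A i j) x = θ ^ 3 * tri A x := by
    simp only [tri, mul_sum]
    exact sum_congr rfl fun i _ => sum_congr rfl fun j _ => sum_congr rfl fun k _ => by ring
  have key := razborov hs n (fun i j => θ * A i j) x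
    ⟨fun i j => by rw [h.symm], fun i j => mul_nonneg hθ0 (h.nonneg i j),
      fun i j => mul_le_one₀ hθ1 (h.nonneg i j) (h.le_one i j), h.wt⟩ hx a h1 h2
    (by rw [hE, hθ, div_mul_cancel₀ _ hP.ne', he])
  rw [hT] at key
  have := mul_le_mul_of_nonneg_right key (pow_pos hP 3).le
  have e1 : θ ^ 3 * tri A x * edge A x ^ 3 = tri A x * e ^ 3 := by
    rw [hθ]; field_simp
  rwa [e1] at this

end TriDensity

theorem cherry_bound_given_triangle (k : ℕ) (hk : 2 ≤ k) (z e t : ℝ)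
    (hz : z ∈ Set.Ioc (0 : ℝ) (1 / (k : ℝ)))
    (he : e = (1 - z) * ((k : ℝ) * z + (k : ℝ) - 2) / ((k : ℝ) - 1))
    (ht : t = (1 - z) ^ 2 * ((k : ℝ) - 2) * (2 * z * (k : ℝ) + (k : ℝ) - 3) / ((k : ℝ) - 1) ^ 2)
    (hhalf : 1 / 2 ≤ e)
    (G : Graphon) (h3 : d3 G = t) :
    d2 G ≤ (3 / 2) * (e - t) := by
  obtain ⟨s, rfl⟩ : ∃ s, k = s + 1 := ⟨k - 1, by omega⟩
  have hs : 1 ≤ s := by omega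
  have hsR : (1 : ℝ) ≤ s := by exact_mod_cast hs
  have hs0 : (s : ℝ) ≠ 0 := by linarith
  push_cast at hz he ht
  rw [add_sub_cancel_right] at he ht
  obtain ⟨hz0, hz1⟩ := hz
  rw [le_div_iff₀ (by linarith)] at hz1
  -- the common size of the `s` large parts
  obtain ⟨a, ha⟩ : ∃ a : ℝ, a = (1 - z) / s := ⟨_, rfl⟩
  have hsa : (s : ℝ) * a = 1 - z := by rw [ha]; field_simp
  have h1 : 1 ≤ ((s : ℝ) + 1) * a := by
    have : ((s : ℝ) + 1) * a - 1 = (1 - z * (s + 1)) / s := by rw [ha]; field_simp; ring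
    have h' : 0 ≤ (1 - z * (s + 1)) / (s : ℝ) := div_nonneg (by linarith) (by linarith)
    linarith
  have h2 : (s : ℝ) * a ≤ 1 := by rw [hsa]; linarith
  have he' : e = 2 * s * a - s * (s + 1) * a ^ 2 := by
    rw [he, ha]; field_simp; ring
  have ht' : t = (s : ℝ) * (s - 1) * a ^ 2 * (3 - 2 * (s + 1) * a) := by
    rw [ht, ha]; field_simp; ring
  have he1 : e ≤ 1 := by
    rw [he']
    nlinarith [sq_nonneg (1 - s * a), mul_nonneg (show (0 : ℝ) ≤ s by linarith) (sq_nonneg a)]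
  by_contra hcon
  push Not at hcon
  obtain ⟨η, hη⟩ : ∃ η : ℝ, η = (d2 G - (3 / 2) * (e - t)) / 3 := ⟨_, rfl⟩
  have hη0 : 0 < η := by rw [hη]; linarith
  -- an approximation with error at most `η / 2` has edge density at least `e + η`
  have hedge : ∀ ε : ℝ, 0 < ε → ε ≤ η / 2 → ∃ (n : ℕ) (A : Fin n → Fin n → ℝ) (x : Fin n → ℝ),
      TriDensity.Valid A x ∧ ∑ i, x i = 1 ∧ TriDensity.tri A x ≤ t + ε ∧
        e + η ≤ TriDensity.edge A x := by
    intro ε hε hεη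
    obtain ⟨n, A, x, hv, hx, c2, c3⟩ := TriDensity.exists_weighted_graph G hε
    refine ⟨n, A, x, hv, hx, ?_, ?_⟩
    · rw [h3] at c3
      linarith [(abs_le.1 c3).1]
    · have hg := TriDensity.goodman_aux hv
      rw [hx] at hg
      rw [h3] at c3
      linarith [(abs_le.1 c3).1, (abs_le.1 c3).2, (abs_le.1 c2).1, (abs_le.1 c2).2]
  -- for `t ≤ 0` Goodman's bound is positive since `e ≥ 1 / 2`; otherwise the scaled
  -- minimum-triangle theorem makes the triangle density exceed `t` by a factor above `1 + η`
  rcases le_or_gt t 0 with htn | htp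
  · obtain ⟨n, A, x, hv, hx, hT, hP⟩ := hedge (η / 2) (by linarith) le_rfl
    have hg := TriDensity.goodman hv
    rw [hx] at hg
    nlinarith
  · obtain ⟨n, A, x, hv, hx, hT, hP⟩ := hedge (min (η / 2) (t * η))
      (lt_min (by linarith) (mul_pos htp hη0)) (min_le_left _ _)
    have hT' : TriDensity.tri A x ≤ t + t * η := hT.trans (by linarith [min_le_right (η / 2) (t * η)])
    have hc := TriDensity.tri_mul_cube_le hs hv hx h1 h2 he' (by linarith) (by linarith)
    rw [← ht'] at hc
    have e0 : 0 < e := by linarith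
    have g1 : t * (e + η) ^ 3 ≤ t * TriDensity.edge A x ^ 3 :=
      mul_le_mul_of_nonneg_left (pow_le_pow_left₀ (by linarith) hP 3) htp.le
    have g2 : TriDensity.tri A x * e ^ 3 ≤ (t + t * η) * e ^ 3 :=
      mul_le_mul_of_nonneg_right hT' (by positivity)
    have g3 : t * (e + η) ^ 3 ≤ t * ((1 + η) * e ^ 3) := by linarith
    have g4 := le_of_mul_le_mul_left g3 htp
    have g5 : η * e ^ 3 ≤ η * e ^ 2 :=
      mul_le_mul_of_nonneg_left (pow_le_pow_of_le_one e0.le he1 (by norm_num)) hη0.le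
    nlinarith [mul_pos hη0 (pow_pos e0 2), mul_pos (pow_pos hη0 2) e0, pow_pos hη0 3]
end

section
/- Let k ≥ 2 be an integer and z ∈ (0, 1/k] a real number, and set e(k,z) = (1−z)(kz + k − 2)/(k−1) and t(k,z) = (1−z)²(k−2)(2zk + k − 3)/(k−1)². Assume e(k,z) ≥ 1/2. Then for every real number c with 0 ≤ c ≤ (3/2)·(e(k,z) − t(k,z)) there exists a graphon W with d₃(W) = t(k,z) and d₂(W) = c. -/
/-!
Blow up a complete multipartite graph. Let `q` be the part sizes of the complete `k`-partite
graph, `S₂ = ∑ q²`, `S₃ = ∑ q³`. For `s, u ∈ [0,1]` take the graphon in which a fraction `1 - s` of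
the vertices is isolated, and the remaining fraction `s` is split proportionally to `q`, with edge
density `1` between different parts and `1 - u` inside each part. Isolated vertices lie in no
triangle and no cherry, so
`d₃ = s³ T(u)` with `T(u) = 1 - 3uS₂ + 3u²S₃ - u³S₃`, and
`d₂ = s³ D(u)` with `D(u) = 3u(S₂ - 2uS₃ + u²S₃)`.

At `u = 1` these are the densities of the complete `k`-partite graph: `T(1) = t` and
`D(1) = (3/2)(e - t)`. If `t > 0` then `T(u) ≥ t` allows the choice `s³ = t / T(u)`, which keeps
`d₃ = t`, while `d₂ = t D(u) / T(u)` moves continuously from `0` at `u = 0` to `D(1)` at `u = 1`; the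
intermediate value theorem yields every `c` in between. If `t = 0`, take `u = 1` and only vary `s`.

Step graphons are obtained from a measurable map `[0,1] → ι` with prescribed (finite) law, which turns
the integrals into finite sums.
-/

open MeasureTheory Real

/-! ### Step graphons -/

/-- Every probability vector on a finite type is the law of a function on `[0,1]`; the function is
extended to all of `ℝ` since graphons are defined there. -/
lemma exists_map_with_weights {ι : Type*} [Fintype ι] [Nonempty ι] [MeasurableSpace ι]
    [MeasurableSingletonClass ι] (p : ι → ℝ) (hp : ∀ i, 0 ≤ p i) (hsum : ∑ i, p i = 1) :
    ∃ φ : ℝ → ι, Measurable φ ∧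
      ∀ g : ι → ℝ, ∫ x in Set.Icc (0 : ℝ) 1, g (φ x) = ∑ i, p i * g i := by
  let μ : Measure ι := ∑ i, ENNReal.ofReal (p i) • Measure.dirac i
  have hμ : IsProbabilityMeasure μ := by
    constructor
    simp only [μ, Measure.coe_finsetSum, Measure.coe_smul, Finset.sum_apply, Pi.smul_apply,
      measure_univ, smul_eq_mul, mul_one]
    rw [← ENNReal.ofReal_sum_of_nonneg (fun i _ => hp i), hsum, ENNReal.ofReal_one]
  obtain ⟨f, hf, hmap⟩ := μ.exists_measurable_map_eq
  refine ⟨fun x => f (Set.projIcc 0 1 zero_le_one x),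
    hf.comp continuous_projIcc.measurable, fun g => ?_⟩
  have h1 : ∫ x in Set.Icc (0 : ℝ) 1, g (f (Set.projIcc 0 1 zero_le_one x))
      = ∫ x : Set.Icc (0 : ℝ) 1, g (f x) := by
    rw [← integral_subtype_comap measurableSet_Icc
      (fun x => g (f (Set.projIcc 0 1 zero_le_one x)))]
    simp only [Set.projIcc_val]
    rfl
  have hg : Measurable g := measurable_of_finite g
  have h2 : ∫ x : Set.Icc (0 : ℝ) 1, g (f x) = ∫ i, g i ∂μ := by
    rw [← hmap, integral_map hf.aemeasurable hg.aestronglyMeasurable]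
  rw [h1, h2, integral_finsetSum_measure (fun i _ => ?_)]
  · refine Finset.sum_congr rfl fun i _ => ?_
    rw [integral_smul_measure, integral_dirac, ENNReal.toReal_ofReal (hp i), smul_eq_mul]
  · exact (integrable_dirac (by simp)).smul_measure ENNReal.ofReal_ne_top

/-- For the step graphon with part sizes `p` and densities `A`, the integrals are finite sums. -/
lemma exists_step_graphon {ι : Type*} [Fintype ι] [Nonempty ι] (p : ι → ℝ) (hp : ∀ i, 0 ≤ p i)
    (hsum : ∑ i, p i = 1) (A : ι → ι → ℝ) (hA : ∀ i j, A i j ∈ Set.Icc (0 : ℝ) 1)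
    (hsymm : ∀ i j, A i j = A j i) :
    ∃ G : Graphon,
      d3 G = ∑ i, p i * ∑ j, p j * ∑ l, p l * (A i j * A j l * A i l) ∧
      d2 G = 3 * ∑ i, p i * ∑ j, p j * ∑ l, p l * (A i j * A i l * (1 - A j l)) := by
  let _ : MeasurableSpace ι := ⊤
  have _ : MeasurableSingletonClass ι := ⟨fun _ => trivial⟩
  obtain ⟨φ, hφ, hint⟩ := exists_map_with_weights p hp hsum
  have hmeas : Measurable (Function.uncurry fun x y => A (φ x) (φ y)) := by
    have h := measurable_of_finite (Function.uncurry A)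
    exact h.comp ((hφ.comp measurable_fst).prodMk (hφ.comp measurable_snd))
  have triple : ∀ B : ι → ι → ι → ℝ,
      ∫ x in Set.Icc (0 : ℝ) 1, ∫ y in Set.Icc (0 : ℝ) 1, ∫ z in Set.Icc (0 : ℝ) 1,
        B (φ x) (φ y) (φ z) = ∑ i, p i * ∑ j, p j * ∑ l, p l * B i j l := by
    intro B
    have e1 : ∀ x y, ∫ z in Set.Icc (0 : ℝ) 1, B (φ x) (φ y) (φ z)
        = ∑ l, p l * B (φ x) (φ y) l := fun x y => hint (B (φ x) (φ y))
    have e2 : ∀ x, ∫ y in Set.Icc (0 : ℝ) 1, ∑ l, p l * B (φ x) (φ y) l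
        = ∑ j, p j * ∑ l, p l * B (φ x) j l :=
      fun x => hint fun j => ∑ l, p l * B (φ x) j l
    simp only [e1, e2]
    exact hint fun i => ∑ j, p j * ∑ l, p l * B i j l
  refine ⟨⟨fun x y => A (φ x) (φ y), hmeas, fun x y => hA _ _, fun x y => hsymm _ _⟩, ?_, ?_⟩
  · exact triple fun i j l => A i j * A j l * A i l
  · exact congrArg (3 * ·) (triple fun i j l => A i j * A i l * (1 - A j l))

/-! ### Densities of the two-parameter family -/

section Sums

variable {ι : Type*} [Fintype ι] [DecidableEq ι] (q : ι → ℝ)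

lemma sum_pair (hq : ∑ i, q i = 1) (u : ℝ) (i j : ι) :
    ∑ l, q l * ((if j = l then 1 - u else 1) * (if i = l then 1 - u else 1))
      = 1 - u * q j - u * q i + (if i = j then u ^ 2 * q i else 0) := by
  have h : ∀ l, q l * ((if j = l then 1 - u else 1) * (if i = l then 1 - u else 1))
      = q l - (if j = l then u * q l else 0) - (if i = l then u * q l else 0)
        + (if i = l then (if i = j then u ^ 2 * q l else 0) else 0) := by
    intro l
    by_cases h1 : j = l <;> by_cases h2 : i = l
    · subst h1; subst h2; simp; ring
    · subst h1; simp [h2]; ring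
    · subst h2; simp [h1, Ne.symm h1]; ring
    · simp [h1, h2]
  simp only [h, Finset.sum_add_distrib, Finset.sum_sub_distrib, hq, Finset.sum_ite_eq,
    Finset.mem_univ, if_true]

/-- Triangle density of the blow-up with density `1 - u` inside the parts. -/
lemma sum_triangle (hq : ∑ i, q i = 1) (u : ℝ) :
    ∑ i, q i * ∑ j, q j * ∑ l, q l * ((if i = j then 1 - u else 1) *
        (if j = l then 1 - u else 1) * (if i = l then 1 - u else 1))
      = 1 - 3 * u * ∑ i, q i ^ 2 + (3 * u ^ 2 - u ^ 3) * ∑ i, q i ^ 3 := by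
  have h1 : ∀ i j, ∑ l, q l * ((if i = j then 1 - u else 1) *
        (if j = l then 1 - u else 1) * (if i = l then 1 - u else 1))
      = (if i = j then 1 - u else 1) *
        (1 - u * q j - u * q i + (if i = j then u ^ 2 * q i else 0)) := by
    intro i j
    rw [← sum_pair q hq u i j, Finset.mul_sum]
    exact Finset.sum_congr rfl fun l _ => by ring
  have h2 : ∀ i, ∑ j, q j * ((if i = j then 1 - u else 1) *
        (1 - u * q j - u * q i + (if i = j then u ^ 2 * q i else 0)))
      = 1 - u * ∑ j, q j ^ 2 - 2 * u * q i + (3 * u ^ 2 - u ^ 3) * q i ^ 2 := by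
    intro i
    have h : ∀ j, q j * ((if i = j then 1 - u else 1) *
        (1 - u * q j - u * q i + (if i = j then u ^ 2 * q i else 0)))
        = (1 - u * q i) * q j - u * q j ^ 2
          + (if i = j then - u * q j * (1 - 2 * u * q j) + (1 - u) * u ^ 2 * q j ^ 2 else 0) := by
      intro j
      by_cases h1 : i = j
      · subst h1; simp; ring
      · simp [h1]; ring
    simp only [h, Finset.sum_add_distrib, Finset.sum_sub_distrib, ← Finset.mul_sum, hq,
      Finset.sum_ite_eq, Finset.mem_univ, if_true]
    ring
  have h3 : ∀ i, q i * (1 - u * ∑ j, q j ^ 2 - 2 * u * q i + (3 * u ^ 2 - u ^ 3) * q i ^ 2)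
      = (1 - u * ∑ j, q j ^ 2) * q i - 2 * u * q i ^ 2 + (3 * u ^ 2 - u ^ 3) * q i ^ 3 :=
    fun i => by ring
  simp only [h1, h2, h3, Finset.sum_add_distrib, Finset.sum_sub_distrib, ← Finset.mul_sum, hq]
  ring

/-- One third of the cherry density of the blow-up with density `1 - u` inside the parts. -/
lemma sum_cherry (hq : ∑ i, q i = 1) (u : ℝ) :
    ∑ i, q i * ∑ j, q j * ∑ l, q l * ((if i = j then 1 - u else 1) *
        (if i = l then 1 - u else 1) * (1 - (if j = l then 1 - u else 1)))
      = u * (∑ i, q i ^ 2 - (2 * u - u ^ 2) * ∑ i, q i ^ 3) := by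
  have h1 : ∀ i j, ∑ l, q l * ((if i = j then 1 - u else 1) *
        (if i = l then 1 - u else 1) * (1 - (if j = l then 1 - u else 1)))
      = u * q j - (if i = j then u * (2 * u - u ^ 2) * q j else 0) := by
    intro i j
    have h : ∀ l, q l * ((if i = j then 1 - u else 1) *
        (if i = l then 1 - u else 1) * (1 - (if j = l then 1 - u else 1)))
        = if j = l then q l * ((if i = j then 1 - u else 1) *
        (if i = l then 1 - u else 1) * u) else 0 := by
      intro l
      by_cases h1 : j = l
      · simp [h1]
      · simp [h1]
    simp only [h, Finset.sum_ite_eq, Finset.mem_univ, if_true]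
    by_cases h1 : i = j
    · simp [h1]; ring
    · simp [h1]; ring
  have h2 : ∀ i, ∑ j, q j * (u * q j - (if i = j then u * (2 * u - u ^ 2) * q j else 0))
      = u * ∑ j, q j ^ 2 - u * (2 * u - u ^ 2) * q i ^ 2 := by
    intro i
    have h : ∀ j, q j * (u * q j - (if i = j then u * (2 * u - u ^ 2) * q j else 0))
        = u * q j ^ 2 - (if i = j then u * (2 * u - u ^ 2) * q j ^ 2 else 0) := by
      intro j
      split_ifs <;> ring
    simp only [h, Finset.sum_sub_distrib, ← Finset.mul_sum,
      Finset.sum_ite_eq, Finset.mem_univ, if_true]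
  have h3 : ∀ i, q i * (u * ∑ j, q j ^ 2 - u * (2 * u - u ^ 2) * q i ^ 2)
      = (u * ∑ j, q j ^ 2) * q i - u * (2 * u - u ^ 2) * q i ^ 3 :=
    fun i => by ring
  simp only [h1, h2, h3, Finset.sum_sub_distrib, ← Finset.mul_sum, hq]
  ring

/-- The two-parameter family: `Option.none` indexes the isolated vertices, of total measure
`1 - s`. -/
lemma exists_family_graphon (hq0 : ∀ i, 0 ≤ q i) (hq : ∑ i, q i = 1) (s u : ℝ)
    (hs : s ∈ Set.Icc (0 : ℝ) 1) (hu : u ∈ Set.Icc (0 : ℝ) 1) :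
    ∃ G : Graphon,
      d3 G = s ^ 3 * (1 - 3 * u * ∑ i, q i ^ 2 + (3 * u ^ 2 - u ^ 3) * ∑ i, q i ^ 3) ∧
      d2 G = s ^ 3 * (3 * (u * (∑ i, q i ^ 2 - (2 * u - u ^ 2) * ∑ i, q i ^ 3))) := by
  obtain ⟨hs0, hs1⟩ := hs
  obtain ⟨hu0, hu1⟩ := hu
  let p : Option ι → ℝ := fun o => o.elim (1 - s) fun i => s * q i
  let A : Option ι → Option ι → ℝ := fun o o' =>
    o.elim 0 fun i => o'.elim 0 fun j => if i = j then 1 - u else 1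
  obtain ⟨G, h3, h2⟩ := exists_step_graphon p
    (by rintro (_ | i)
        · simpa [p] using hs1
        · simpa [p] using mul_nonneg hs0 (hq0 i))
    (by simp [p, Fintype.sum_option, ← Finset.mul_sum, hq]) A
    (by rintro (_ | i) (_ | j) <;> simp only [A, Option.elim_none, Option.elim_some] <;>
          (try split_ifs) <;> constructor <;> linarith)
    (by rintro (_ | i) (_ | j) <;> simp [A, eq_comm])
  -- Each of the three vertices contributes one factor `s`.
  have scale : ∀ B : ι → ι → ι → ℝ,
      ∑ i, s * q i * ∑ j, s * q j * ∑ l, s * q l * B i j l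
        = s ^ 3 * ∑ i, q i * ∑ j, q j * ∑ l, q l * B i j l := by
    intro B
    simp only [mul_assoc, ← Finset.mul_sum]
    simp only [mul_left_comm _ s, ← Finset.mul_sum]
    ring
  refine ⟨G, ?_, ?_⟩
  · rw [h3, ← sum_triangle q hq u, ← scale]
    simp only [p, A, Fintype.sum_option, Option.elim_none, Option.elim_some, zero_mul, mul_zero,
      Finset.sum_const_zero, zero_add]
  · rw [h2, ← sum_cherry q hq u, mul_left_comm, ← scale]
    simp only [p, A, Fintype.sum_option, Option.elim_none, Option.elim_some, zero_mul, mul_zero,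
      Finset.sum_const_zero, zero_add]

end Sums

/-! ### Choice of the parameters -/

lemma exists_cube_root (r : ℝ) (h0 : 0 ≤ r) (h1 : r ≤ 1) :
    ∃ s ∈ Set.Icc (0 : ℝ) 1, s ^ 3 = r := by
  have h := intermediate_value_Icc (f := fun s : ℝ => s ^ 3) (zero_le_one' ℝ)
    (by fun_prop)
  obtain ⟨s, hs, hsr⟩ := h (show r ∈ _ by simpa using ⟨h0, h1⟩)
  exact ⟨s, hs, hsr⟩

/-- Along the family, `s` and `u` can be chosen to fix the triangle density at its value `t` for
`s = u = 1` and to make the cherry density any number between `0` and its value there. -/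
lemma exists_parameters (S₂ S₃ t c : ℝ) (h3 : 0 ≤ S₃) (h32 : S₃ ≤ S₂)
    (ht : t = 1 - 3 * S₂ + 2 * S₃) (ht0 : 0 ≤ t) (hc0 : 0 ≤ c) (hc : c ≤ 3 * (S₂ - S₃)) :
    ∃ s ∈ Set.Icc (0 : ℝ) 1, ∃ u ∈ Set.Icc (0 : ℝ) 1,
      s ^ 3 * (1 - 3 * u * S₂ + (3 * u ^ 2 - u ^ 3) * S₃) = t ∧
      s ^ 3 * (3 * (u * (S₂ - (2 * u - u ^ 2) * S₃))) = c := by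
  rcases ht0.eq_or_lt with h | hpos
  · have hr : c / (3 * (S₂ - S₃)) ≤ 1 := div_le_one_of_le₀ hc (by linarith)
    obtain ⟨s, hs, hsr⟩ := exists_cube_root _ (div_nonneg hc0 (by linarith)) hr
    refine ⟨s, hs, 1, by simp, ?_, ?_⟩
    · linear_combination -s ^ 3 * ht - (s ^ 3 - 1) * h
    · rw [hsr]
      by_cases hD : S₂ - S₃ = 0
      · have : c = 0 := by rw [hD] at hc; linarith
        simp [this]
      · field_simp
        ring
  · have hT : ∀ u ∈ Set.Icc (0 : ℝ) 1, t ≤ 1 - 3 * u * S₂ + (3 * u ^ 2 - u ^ 3) * S₃ := by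
      rintro u ⟨hu0, hu1⟩
      have hid : 1 - 3 * u * S₂ + (3 * u ^ 2 - u ^ 3) * S₃ - t
          = (1 - u) * (3 * (S₂ - S₃) + S₃ * (1 - u) ^ 2) := by rw [ht]; ring
      have : 0 ≤ (1 - u) * (3 * (S₂ - S₃) + S₃ * (1 - u) ^ 2) :=
        mul_nonneg (by linarith) (add_nonneg (by linarith) (by positivity))
      linarith
    have hcont : ContinuousOn (fun u : ℝ =>
        t / (1 - 3 * u * S₂ + (3 * u ^ 2 - u ^ 3) * S₃) *
          (3 * (u * (S₂ - (2 * u - u ^ 2) * S₃)))) (Set.Icc 0 1) := by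
      refine ContinuousOn.mul (ContinuousOn.div (by fun_prop) (by fun_prop) ?_) (by fun_prop)
      intro u hu
      have := hT u hu
      linarith
    obtain ⟨u, hu, huc⟩ := intermediate_value_Icc zero_le_one hcont (show c ∈ _ by
      have e1 : 1 - 3 * 1 * S₂ + (3 * 1 ^ 2 - 1 ^ 3) * S₃ = t := by rw [ht]; ring
      simp only [e1, div_self hpos.ne']
      constructor
      · simpa using hc0
      · linarith)
    have hTu : 0 < 1 - 3 * u * S₂ + (3 * u ^ 2 - u ^ 3) * S₃ := hpos.trans_le (hT u hu)
    obtain ⟨s, hs, hsr⟩ := exists_cube_root _ (div_nonneg hpos.le hTu.le)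
      (div_le_one_of_le₀ (hT u hu) hTu.le)
    refine ⟨s, hs, u, hu, ?_, ?_⟩
    · rw [hsr, div_mul_cancel₀ _ hTu.ne']
    · rw [hsr]
      exact huc

theorem cherry_values_attained (k : ℕ) (hk : 2 ≤ k) (z e t : ℝ)
    (hz : z ∈ Set.Ioc (0 : ℝ) (1 / (k : ℝ)))
    (he : e = (1 - z) * ((k : ℝ) * z + (k : ℝ) - 2) / ((k : ℝ) - 1))
    (ht : t = (1 - z) ^ 2 * ((k : ℝ) - 2) * (2 * z * (k : ℝ) + (k : ℝ) - 3) / ((k : ℝ) - 1) ^ 2)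
    (hhalf : 1 / 2 ≤ e)
    (c : ℝ) (hc0 : 0 ≤ c) (hc1 : c ≤ (3 / 2) * (e - t)) :
    ∃ G : Graphon, d3 G = t ∧ d2 G = c := by
  obtain ⟨n, rfl⟩ : ∃ n, k = n + 1 := ⟨k - 1, by omega⟩
  have hn : (1 : ℝ) ≤ n := by exact_mod_cast (by omega : 1 ≤ n)
  have hn0 : (n : ℝ) ≠ 0 := by linarith
  obtain ⟨hz0, hz1⟩ := hz
  push_cast at he ht hz1
  have hzlt : z ≤ 1 := hz1.trans (div_le_one_of_le₀ (by linarith) (by linarith))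
  -- The part sizes: `none` is the exceptional part.
  let q : Option (Fin n) → ℝ := fun o => o.elim z fun _ => (1 - z) / n
  have hq0 : ∀ i, 0 ≤ q i := by
    rintro (_ | i)
    · exact hz0.le
    · exact div_nonneg (by linarith) (by linarith)
  have hq : ∑ i, q i = 1 := by
    simp [q, Fintype.sum_option]
    field_simp
    ring
  have hq1 : ∀ i, q i ≤ 1 := fun i =>
    hq ▸ Finset.single_le_sum (f := q) (fun j _ => hq0 j) (Finset.mem_univ i)
  have hS2 : ∑ i, q i ^ 2 = z ^ 2 + n * ((1 - z) / n) ^ 2 := by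
    simp [q, Fintype.sum_option]
  have hS3 : ∑ i, q i ^ 3 = z ^ 3 + n * ((1 - z) / n) ^ 3 := by
    simp [q, Fintype.sum_option]
  have heS : e = 1 - ∑ i, q i ^ 2 := by
    rw [he, hS2, add_sub_cancel_right]
    field_simp
    ring
  have htS : t = 1 - 3 * ∑ i, q i ^ 2 + 2 * ∑ i, q i ^ 3 := by
    rw [ht, hS2, hS3, add_sub_cancel_right]
    field_simp
    ring
  have ht0 : 0 ≤ t := by
    rw [ht]
    refine div_nonneg ?_ (sq_nonneg _)
    rcases (show n = 1 ∨ 2 ≤ n by omega) with rfl | h2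
    · norm_num
    · have h2' : (2 : ℝ) ≤ n := by exact_mod_cast h2
      refine mul_nonneg (mul_nonneg (sq_nonneg _) (by linarith)) ?_
      have : 0 ≤ 2 * z * ((n : ℝ) + 1) := by positivity
      linarith
  obtain ⟨s, hs, u, hu, h3, h2⟩ := exists_parameters (∑ i, q i ^ 2) (∑ i, q i ^ 3) t c
    (Finset.sum_nonneg fun i _ => pow_nonneg (hq0 i) 3)
    (Finset.sum_le_sum fun i _ => pow_le_pow_of_le_one (hq0 i) (hq1 i) (by norm_num))
    htS ht0 hc0 (by linarith)
  obtain ⟨G, hG3, hG2⟩ := exists_family_graphon q hq0 hq s u hs hu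
  exact ⟨G, hG3.trans h3, hG2.trans h2⟩
end

section
/- Let k ≥ 2 be an integer and z ∈ (0, 1/k] a real number. Every graphon W whose edge density equals (1−z)(kz + k − 2)/(k−1) has triangle density d₃(W) ≥ (1−z)²(k−2)(2zk + k − 3)/(k−1)². -/
/-!
Razborov's lower bound on the triangle density, proved through weighted graphs.

Write `m = k - 2` and let `c = (1 - z) / (m + 1)` be the size of the large parts of the extremal
complete `k`-partite graph. In terms of `c` the extremal curve is
`e = 2 (m + 1) c - (m + 1)(m + 2) c²`, `t = m (2 c e - (m + 1) c²)`. For fixed `c` the latter is a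
line in the `(e, t)` plane, and `weighted_bound` states that a finite weighted graph whose edge
density is at least the value of the curve at `c` lies on or above this line. The proof is by induction on `m`.

Suppose the bound fails. Through each point below the parabola `(m + 1) t = m e²` take the line with the
larger parameter `c`, and give the point the level `(e - 2 (m + 1) c) / c²`; a counterexample has level
above `-(m + 1)(m + 2)`. By compactness there is a weighted graph of maximal level, and Goodman's bound
shows that the maximum is interior (`exists_extremal`). With `μ = m c`, the first-order conditions are
* `t_i = 2 μ d_i - m (m + 1) c²` at every vertex `i` of positive weight, where `d_i` is its degree
  and `t_i` the edge density of its (unnormalised) link (`IsWG.vertex_condition`);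
* the codegree along every edge is at most `μ` (`IsWG.edge_condition`).

Count copies of `K₄`, as the sum of the triangle densities of the links. From above,
inclusion–exclusion over the vertices outside a triangle (`IsWG.sum_wT_link_le`) is combined with the second condition,
multiplied by the weight of the common non-neighbours of the edge (`IsWG.edge_multiplier`). From below,
each link is bounded by the induction hypothesis, or by Goodman's bound if its degree is small
(`goodman_link_bound`). The upper bound minus the lower bound is
`-m c (e - 2 (m + 1) c + (m + 1)(m + 2) c²)`, which is negative: a contradiction.

A graphon is an a.e. limit of continuous kernels, which are pointwise limits of kernels factoring through
finite-valued maps, that is, of weighted graphs; dominated convergence transfers the bound for every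
parameter above `c` (`hasTriangleBound_kernel`), and the parameter then tends to `c`.
-/

open MeasureTheory Real

namespace TriangleDensity

/-! ### Weighted graphs -/

section Finite

variable {ι : Type*} [Fintype ι]

/-- The edge density of the graph with vertex weights `x` and edge weights `A`. Loops are allowed. -/
def wE (x : ι → ℝ) (A : ι → ι → ℝ) : ℝ := ∑ i, ∑ j, x i * x j * A i j

/-- The triangle density of the weighted graph `(x, A)`. -/
def wT (x : ι → ℝ) (A : ι → ι → ℝ) : ℝ :=
  ∑ i, ∑ j, ∑ k, x i * x j * x k * (A i j * A j k * A i k)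

/-- The degree of `i` in the weighted graph `(x, A)`. -/
def wD (x : ι → ℝ) (A : ι → ι → ℝ) (i : ι) : ℝ := ∑ j, x j * A i j

/-- The codegree of `i` and `j`: the total weight of their common neighbours. -/
def wC (x : ι → ℝ) (A : ι → ι → ℝ) (i j : ι) : ℝ := ∑ k, x k * (A i k * A j k)

/-- The link of `i`: the vertex weights `x` restricted to the neighbourhood of `i`. It is not
normalised; its total weight is the degree of `i`. -/
def link (x : ι → ℝ) (A : ι → ι → ℝ) (i : ι) : ι → ℝ := fun j => x j * A i j

/-- `(x, A)` is a weighted graph: `x` is a probability vector, and `A` is symmetric with entries in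
`[0,1]`. -/
structure IsWG (x : ι → ℝ) (A : ι → ι → ℝ) : Prop where
  nonneg : ∀ i, 0 ≤ x i
  sum_one : ∑ i, x i = 1
  edge_nonneg : ∀ i j, 0 ≤ A i j
  edge_le : ∀ i j, A i j ≤ 1
  symm : ∀ i j, A i j = A j i

variable {x : ι → ℝ} {A : ι → ι → ℝ}

lemma wE_eq_sum_wD : wE x A = ∑ i, x i * wD x A i := by
  simp only [wE, wD, Finset.mul_sum, mul_assoc]

lemma sum_link (i : ι) : ∑ j, link x A i j = wD x A i := rfl

lemma wC_comm (i j : ι) : wC x A i j = wC x A j i := by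
  simp only [wC, mul_comm (A i _)]

lemma wE_link (i : ι) :
    wE (link x A i) A = ∑ j, x j * A i j * wC x A i j := by
  simp only [wE, link, wC, Finset.mul_sum]
  refine Finset.sum_congr rfl fun j _ => Finset.sum_congr rfl fun k _ => by ring

lemma wT_eq_sum_wC :
    wT x A = ∑ i, ∑ j, x i * x j * A i j * wC x A i j := by
  simp only [wT, wC, Finset.mul_sum]
  refine Finset.sum_congr rfl fun i _ => Finset.sum_congr rfl fun j _ =>
    Finset.sum_congr rfl fun k _ => by ring

lemma wT_eq_sum_link :
    wT x A = ∑ i, x i * wE (link x A i) A := by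
  simp only [wT_eq_sum_wC, wE_link, Finset.mul_sum]
  refine Finset.sum_congr rfl fun i _ => Finset.sum_congr rfl fun j _ => by ring

lemma IsWG.wT_nonneg (h : IsWG x A) : 0 ≤ wT x A := by
  unfold wT
  refine Finset.sum_nonneg fun i _ => Finset.sum_nonneg fun j _ => Finset.sum_nonneg fun k _ => ?_
  have := h.nonneg i; have := h.nonneg j; have := h.nonneg k
  have := h.edge_nonneg i j; have := h.edge_nonneg j k; have := h.edge_nonneg i k
  positivity

lemma IsWG.wD_nonneg (h : IsWG x A) (i : ι) : 0 ≤ wD x A i :=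
  Finset.sum_nonneg fun j _ => mul_nonneg (h.nonneg j) (h.edge_nonneg i j)

/-- Inclusion–exclusion for two neighbourhoods: the right-hand side is the total weight of the
common non-neighbours of `i` and `j`. -/
lemma IsWG.codegree (h : IsWG x A) (i j : ι) :
    0 ≤ 1 - wD x A i - wD x A j + wC x A i j := by
  have : 1 - wD x A i - wD x A j + wC x A i j =
      ∑ k, x k * ((1 - A i k) * (1 - A j k)) := by
    conv_lhs => rw [← h.sum_one]
    simp only [wD, wC, ← Finset.sum_sub_distrib, ← Finset.sum_add_distrib]
    refine Finset.sum_congr rfl fun k _ => by ring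
  rw [this]
  exact Finset.sum_nonneg fun k _ => mul_nonneg (h.nonneg k)
    (mul_nonneg (sub_nonneg.2 (h.edge_le i k)) (sub_nonneg.2 (h.edge_le j k)))

lemma sum_swap_edge (hs : ∀ i j, A i j = A j i) (g : ι → ℝ) :
    ∑ i, ∑ j, x i * x j * A i j * g j = ∑ i, ∑ j, x i * x j * A i j * g i := by
  rw [Finset.sum_comm]
  refine Finset.sum_congr rfl fun i _ => Finset.sum_congr rfl fun j _ => ?_
  rw [hs j i]; ring

lemma sum_edge_fst (g : ι → ℝ) :
    ∑ i, ∑ j, x i * x j * A i j * g i = ∑ i, x i * g i * wD x A i := by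
  simp only [wD, Finset.mul_sum]
  refine Finset.sum_congr rfl fun i _ => Finset.sum_congr rfl fun j _ => by ring

/-- Goodman's bound: sum `codegree` over the edges and apply Cauchy–Schwarz to the degrees. -/
lemma IsWG.goodman (h : IsWG x A) : wE x A * (2 * wE x A - 1) ≤ wT x A := by
  have h1 : ∑ i, ∑ j, x i * x j * A i j * (wD x A i + wD x A j - 1) ≤ wT x A := by
    rw [wT_eq_sum_wC]
    refine Finset.sum_le_sum fun i _ => Finset.sum_le_sum fun j _ => ?_
    refine mul_le_mul_of_nonneg_left (by linarith [h.codegree i j]) ?_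
    exact mul_nonneg (mul_nonneg (h.nonneg i) (h.nonneg j)) (h.edge_nonneg i j)
  have h2 : ∑ i, ∑ j, x i * x j * A i j * (wD x A i + wD x A j - 1) =
      2 * (∑ i, x i * wD x A i * wD x A i) - wE x A := by
    rw [two_mul]
    nth_rewrite 1 [← sum_edge_fst, ← sum_swap_edge h.symm]
    rw [← sum_edge_fst, wE]
    simp only [← Finset.sum_sub_distrib, ← Finset.sum_add_distrib]
    refine Finset.sum_congr rfl fun i _ => Finset.sum_congr rfl fun j _ => by ring
  have h3 : 0 ≤ ∑ i, x i * (wD x A i - wE x A) ^ 2 :=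
    Finset.sum_nonneg fun i _ => mul_nonneg (h.nonneg i) (sq_nonneg _)
  have h4 : ∑ i, x i * (wD x A i - wE x A) ^ 2 =
      (∑ i, x i * wD x A i * wD x A i) - wE x A ^ 2 := by
    have : ∑ i, x i * (wD x A i - wE x A) ^ 2 = (∑ i, x i * wD x A i * wD x A i)
        - 2 * wE x A * (∑ i, x i * wD x A i) + wE x A ^ 2 * ∑ i, x i := by
      simp only [Finset.mul_sum, ← Finset.sum_sub_distrib, ← Finset.sum_add_distrib]
      refine Finset.sum_congr rfl fun i _ => by ring
    rw [this, h.sum_one, ← wE_eq_sum_wD]; ring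
  nlinarith

lemma wE_smul (r : ℝ) : wE (fun i => r * x i) A = r ^ 2 * wE x A := by
  simp only [wE, Finset.mul_sum]
  refine Finset.sum_congr rfl fun i _ => Finset.sum_congr rfl fun j _ => by ring

lemma wT_smul (r : ℝ) : wT (fun i => r * x i) A = r ^ 3 * wT x A := by
  simp only [wT, Finset.mul_sum]
  refine Finset.sum_congr rfl fun i _ => Finset.sum_congr rfl fun j _ =>
    Finset.sum_congr rfl fun k _ => by ring

/-- The link of a vertex of positive degree, normalised to total weight one. -/
lemma IsWG.normalised_link (h : IsWG x A) {i : ι} (hi : 0 < wD x A i) :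
    IsWG (fun j => (wD x A i)⁻¹ * link x A i j) A where
  nonneg j := mul_nonneg (inv_nonneg.2 hi.le) (mul_nonneg (h.nonneg j) (h.edge_nonneg i j))
  sum_one := by rw [← Finset.mul_sum, sum_link, inv_mul_cancel₀ hi.ne']
  edge_nonneg := h.edge_nonneg
  edge_le := h.edge_le
  symm := h.symm

/-- An upper bound on the `K₄` density: for each triangle, inclusion–exclusion for the three
neighbourhoods bounds the weight of the common neighbours. -/
lemma IsWG.sum_wT_link_le (h : IsWG x A) :
    ∑ i, x i * wT (link x A i) A ≤
      3 * (∑ i, ∑ j, x i * x j * A i j * wC x A i j ^ 2)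
        - 3 * (∑ i, x i * wD x A i * wE (link x A i) A) + wT x A := by
  set τ : ι → ι → ι → ℝ := fun i j k => x i * x j * x k * (A i j * A j k * A i k) with hτ
  have hQ : ∑ i, x i * wT (link x A i) A =
      ∑ i, ∑ j, ∑ k, τ i j k * ∑ l, x l * (A i l * A j l * A k l) := by
    simp only [wT, link, Finset.mul_sum, hτ]
    rw [Finset.sum_comm]
    refine Finset.sum_congr rfl fun i _ => ?_
    rw [Finset.sum_comm]
    refine Finset.sum_congr rfl fun j _ => ?_
    rw [Finset.sum_comm]
    refine Finset.sum_congr rfl fun k _ => Finset.sum_congr rfl fun l _ => ?_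
    rw [h.symm l i, h.symm l j, h.symm l k]; ring
  have hle : ∀ i j k, ∑ l, x l * (A i l * A j l * A k l) ≤
      wC x A i j + wC x A j k + wC x A i k - wD x A i - wD x A j - wD x A k + 1 := by
    intro i j k
    rw [← sub_nonneg, ← h.sum_one]
    simp only [wC, wD, ← Finset.sum_sub_distrib, ← Finset.sum_add_distrib]
    refine Finset.sum_nonneg fun l _ => ?_
    have := mul_nonneg (h.nonneg l) (mul_nonneg (mul_nonneg (sub_nonneg.2 (h.edge_le i l))
      (sub_nonneg.2 (h.edge_le j l))) (sub_nonneg.2 (h.edge_le k l)))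
    linarith
  have hτ0 : ∀ i j k, 0 ≤ τ i j k := fun i j k => by
    have := h.nonneg i; have := h.nonneg j; have := h.nonneg k
    have := h.edge_nonneg i j; have := h.edge_nonneg j k; have := h.edge_nonneg i k
    simp only [hτ]; positivity
  have hτ12 : ∀ i j k, τ i j k = τ j i k := fun i j k => by
    simp only [hτ]; rw [h.symm i j]; ring
  have hτ23 : ∀ i j k, τ i j k = τ i k j := fun i j k => by
    simp only [hτ]; rw [h.symm j k]; ring
  have hcij : ∑ i, ∑ j, ∑ k, τ i j k * wC x A i j =
      ∑ i, ∑ j, x i * x j * A i j * wC x A i j ^ 2 := by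
    refine Finset.sum_congr rfl fun i _ => Finset.sum_congr rfl fun j _ => ?_
    rw [← Finset.sum_mul, pow_two, ← mul_assoc]
    congr 1
    simp only [wC, Finset.mul_sum, hτ]
    refine Finset.sum_congr rfl fun k _ => by ring
  have hcik : ∑ i, ∑ j, ∑ k, τ i j k * wC x A i k =
      ∑ i, ∑ j, ∑ k, τ i j k * wC x A i j := by
    refine Finset.sum_congr rfl fun i _ => ?_
    rw [Finset.sum_comm]
    refine Finset.sum_congr rfl fun j _ => Finset.sum_congr rfl fun k _ => ?_
    rw [hτ23]
  have hcjk : ∑ i, ∑ j, ∑ k, τ i j k * wC x A j k =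
      ∑ i, ∑ j, ∑ k, τ i j k * wC x A i k := by
    rw [Finset.sum_comm]
    refine Finset.sum_congr rfl fun i _ => Finset.sum_congr rfl fun j _ =>
      Finset.sum_congr rfl fun k _ => ?_
    rw [hτ12]
  have hdi : ∑ i, ∑ j, ∑ k, τ i j k * wD x A i =
      ∑ i, x i * wD x A i * wE (link x A i) A := by
    simp only [wE, link, hτ, Finset.mul_sum]
    refine Finset.sum_congr rfl fun i _ => Finset.sum_congr rfl fun j _ =>
      Finset.sum_congr rfl fun k _ => by ring
  have hdj : ∑ i, ∑ j, ∑ k, τ i j k * wD x A j = ∑ i, ∑ j, ∑ k, τ i j k * wD x A i := by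
    rw [Finset.sum_comm]
    refine Finset.sum_congr rfl fun i _ => Finset.sum_congr rfl fun j _ =>
      Finset.sum_congr rfl fun k _ => ?_
    rw [hτ12]
  have hdk : ∑ i, ∑ j, ∑ k, τ i j k * wD x A k = ∑ i, ∑ j, ∑ k, τ i j k * wD x A j := by
    refine Finset.sum_congr rfl fun i _ => ?_
    rw [Finset.sum_comm]
    refine Finset.sum_congr rfl fun j _ => Finset.sum_congr rfl fun k _ => ?_
    rw [hτ23]
  calc ∑ i, x i * wT (link x A i) A
      ≤ ∑ i, ∑ j, ∑ k, τ i j k * (wC x A i j + wC x A j k + wC x A i k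
          - wD x A i - wD x A j - wD x A k + 1) := by
        rw [hQ]
        exact Finset.sum_le_sum fun i _ => Finset.sum_le_sum fun j _ =>
          Finset.sum_le_sum fun k _ => mul_le_mul_of_nonneg_left (hle i j k) (hτ0 i j k)
    _ = (∑ i, ∑ j, ∑ k, τ i j k * wC x A i j) + (∑ i, ∑ j, ∑ k, τ i j k * wC x A j k)
        + (∑ i, ∑ j, ∑ k, τ i j k * wC x A i k) - (∑ i, ∑ j, ∑ k, τ i j k * wD x A i)
        - (∑ i, ∑ j, ∑ k, τ i j k * wD x A j) - (∑ i, ∑ j, ∑ k, τ i j k * wD x A k)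
        + wT x A := by
        simp only [mul_add, mul_sub, mul_one, Finset.sum_add_distrib, Finset.sum_sub_distrib, wT, hτ]
    _ = _ := by rw [hdk, hdj, hcjk, hcik, hcij, hdi]; ring

/-- If every codegree along an edge is at most `μ`, then
`∑ x i * x j * A i j * (μ - codegree) * (weight of common non-neighbours)` is nonnegative; here it
is expanded. -/
lemma IsWG.edge_multiplier (h : IsWG x A) {μ : ℝ}
    (hμ : ∀ i j, 0 ≤ x i * x j * A i j * (μ - wC x A i j)) :
    0 ≤ μ * wE x A - wT x A + μ * wT x A - 2 * μ * (∑ i, x i * wD x A i * wD x A i)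
      + 2 * (∑ i, x i * wD x A i * wE (link x A i) A)
      - ∑ i, ∑ j, x i * x j * A i j * wC x A i j ^ 2 := by
  have h0 : 0 ≤ ∑ i, ∑ j, x i * x j * A i j * (μ - wC x A i j) *
      (1 - wD x A i - wD x A j + wC x A i j) :=
    Finset.sum_nonneg fun i _ => Finset.sum_nonneg fun j _ =>
      mul_nonneg (hμ i j) (h.codegree i j)
  have hR : ∑ i, ∑ j, x i * x j * A i j * wC x A i j * wD x A i =
      ∑ i, x i * wD x A i * wE (link x A i) A := by
    simp only [wE_link, Finset.mul_sum]
    refine Finset.sum_congr rfl fun i _ => Finset.sum_congr rfl fun j _ => by ring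
  have hR' : ∑ i, ∑ j, x i * x j * A i j * wC x A i j * wD x A j =
      ∑ i, x i * wD x A i * wE (link x A i) A := by
    rw [← hR, Finset.sum_comm]
    refine Finset.sum_congr rfl fun i _ => Finset.sum_congr rfl fun j _ => ?_
    rw [h.symm j i, wC_comm j i]; ring
  have hP := sum_edge_fst (x := x) (A := A) (wD x A)
  have hP' := (sum_swap_edge (x := x) h.symm (wD x A)).trans hP
  have hT := wT_eq_sum_wC (x := x) (A := A)
  have : ∑ i, ∑ j, x i * x j * A i j * (μ - wC x A i j) *
      (1 - wD x A i - wD x A j + wC x A i j) =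
      μ * wE x A - wT x A + μ * wT x A - μ * (∑ i, ∑ j, x i * x j * A i j * wD x A i)
      - μ * (∑ i, ∑ j, x i * x j * A i j * wD x A j)
      + (∑ i, ∑ j, x i * x j * A i j * wC x A i j * wD x A i)
      + (∑ i, ∑ j, x i * x j * A i j * wC x A i j * wD x A j)
      - ∑ i, ∑ j, x i * x j * A i j * wC x A i j ^ 2 := by
    rw [hT, wE]
    simp only [Finset.mul_sum, ← Finset.sum_sub_distrib, ← Finset.sum_add_distrib]
    refine Finset.sum_congr rfl fun i _ => Finset.sum_congr rfl fun j _ => by ring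
  rw [this, hP, hP', hR, hR'] at h0
  linarith

/-! ### First variations -/

/-- The derivative of `wE` at `(x, A)` in the direction `(v, B)`. -/
def dE' (x : ι → ℝ) (A : ι → ι → ℝ) (v : ι → ℝ) (B : ι → ι → ℝ) : ℝ :=
  2 * ∑ i, v i * wD x A i + ∑ i, ∑ j, x i * x j * B i j

/-- The derivative of `wT` at `(x, A)` in the direction `(v, B)`. -/
def dT' (x : ι → ℝ) (A : ι → ι → ℝ) (v : ι → ℝ) (B : ι → ι → ℝ) : ℝ :=
  3 * ∑ i, v i * wE (link x A i) A + 3 * ∑ i, ∑ j, x i * x j * B i j * wC x A i j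

lemma hasDerivAt_wE (hs : ∀ i j, A i j = A j i) (v : ι → ℝ) (B : ι → ι → ℝ) :
    HasDerivAt (fun s : ℝ => wE (fun i => x i + s * v i) (fun i j => A i j + s * B i j))
      (dE' x A v B) 0 := by
  have hl : ∀ a b : ℝ, HasDerivAt (fun s : ℝ => a + s * b) b 0 := fun a b => by
    simpa using ((hasDerivAt_id (0 : ℝ)).mul_const b).const_add a
  have h : HasDerivAt (fun s : ℝ => wE (fun i => x i + s * v i) (fun i j => A i j + s * B i j))
      (∑ i, ∑ j, (v i * x j * A i j + x i * v j * A i j + x i * x j * B i j)) 0 := by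
    unfold wE
    refine HasDerivAt.fun_sum fun i _ => HasDerivAt.fun_sum fun j _ => ?_
    refine (((hl (x i) (v i)).fun_mul (hl (x j) (v j))).fun_mul (hl (A i j) (B i j))).congr_deriv ?_
    ring
  refine h.congr_deriv ?_
  have h1 : ∑ i, ∑ j, v i * x j * A i j = ∑ i, v i * wD x A i := by
    simp only [wD, Finset.mul_sum, mul_assoc]
  have h2 : ∑ i, ∑ j, x i * v j * A i j = ∑ i, v i * wD x A i := by
    rw [← h1, Finset.sum_comm]
    refine Finset.sum_congr rfl fun i _ => Finset.sum_congr rfl fun j _ => ?_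
    rw [hs j i]; ring
  simp only [Finset.sum_add_distrib, h1, h2, dE']
  ring

lemma hasDerivAt_wT (hs : ∀ i j, A i j = A j i) (v : ι → ℝ) (B : ι → ι → ℝ)
    (hB : ∀ i j, B i j = B j i) :
    HasDerivAt (fun s : ℝ => wT (fun i => x i + s * v i) (fun i j => A i j + s * B i j))
      (dT' x A v B) 0 := by
  have hl : ∀ a b : ℝ, HasDerivAt (fun s : ℝ => a + s * b) b 0 := fun a b => by
    simpa using ((hasDerivAt_id (0 : ℝ)).mul_const b).const_add a
  have h : HasDerivAt (fun s : ℝ => wT (fun i => x i + s * v i) (fun i j => A i j + s * B i j))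
      (∑ i, ∑ j, ∑ k, (v i * x j * x k * (A i j * A j k * A i k)
        + v j * x i * x k * (A j i * A i k * A j k)
        + v k * x i * x j * (A k i * A i j * A k j)
        + x i * x j * x k * (B i j * A j k * A i k)
        + x k * x j * x i * (B k j * A j i * A k i)
        + x i * x k * x j * (B i k * A k j * A i j))) 0 := by
    unfold wT
    refine HasDerivAt.fun_sum fun i _ => HasDerivAt.fun_sum fun j _ => HasDerivAt.fun_sum fun k _ => ?_
    refine ((((hl (x i) (v i)).fun_mul (hl (x j) (v j))).fun_mul (hl (x k) (v k))).fun_mul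
      (((hl (A i j) (B i j)).fun_mul (hl (A j k) (B j k))).fun_mul
        (hl (A i k) (B i k)))).congr_deriv ?_
    rw [hs j i, hs k i, hs k j, hB k j]
    ring
  refine h.congr_deriv ?_
  have h1 : ∑ i, ∑ j, ∑ k, v i * x j * x k * (A i j * A j k * A i k) =
      ∑ i, v i * wE (link x A i) A := by
    simp only [wE, link, Finset.mul_sum]
    refine Finset.sum_congr rfl fun i _ => Finset.sum_congr rfl fun j _ =>
      Finset.sum_congr rfl fun k _ => by ring
  have h2 : ∑ i, ∑ j, ∑ k, v j * x i * x k * (A j i * A i k * A j k) =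
      ∑ i, v i * wE (link x A i) A := by
    rw [Finset.sum_comm, h1]
  have h3 : ∑ i, ∑ j, ∑ k, v k * x i * x j * (A k i * A i j * A k j) =
      ∑ i, v i * wE (link x A i) A := by
    rw [← h2]
    exact Finset.sum_congr rfl fun i _ => Finset.sum_comm
  have h4 : ∑ i, ∑ j, ∑ k, x i * x j * x k * (B i j * A j k * A i k) =
      ∑ i, ∑ j, x i * x j * B i j * wC x A i j := by
    simp only [wC, Finset.mul_sum]
    refine Finset.sum_congr rfl fun i _ => Finset.sum_congr rfl fun j _ =>
      Finset.sum_congr rfl fun k _ => by ring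
  have h5 : ∑ i, ∑ j, ∑ k, x i * x k * x j * (B i k * A k j * A i j) =
      ∑ i, ∑ j, x i * x j * B i j * wC x A i j := by
    rw [← h4]
    exact Finset.sum_congr rfl fun i _ => Finset.sum_comm
  have h6 : ∑ i, ∑ j, ∑ k, x k * x j * x i * (B k j * A j i * A k i) =
      ∑ i, ∑ j, x i * x j * B i j * wC x A i j := by
    rw [← h5, Finset.sum_comm]
    rw [← Finset.sum_congr rfl fun i _ => Finset.sum_comm]
    rw [Finset.sum_comm]
    exact h4.trans h5.symm
  simp only [Finset.sum_add_distrib, h1, h2, h3, h4, h5, h6, dT']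
  ring

/-- The larger root `c` of `t = m (2 c e - (m + 1) c²)`, that is, the largest parameter of
a line of this family through `(e, t)`. It is meaningful when `(m + 1) t ≤ m e²`. -/
noncomputable def cc (m e t : ℝ) : ℝ := (e + √(e ^ 2 - (m + 1) / m * t)) / (m + 1)

/-- The level `(e - 2 (m + 1) c) / c²` of the point `(e, t)`, where `c = cc m e t`. It equals
`-(m + 1)(m + 2)` exactly on the extremal curve `e = 2 (m + 1) c - (m + 1)(m + 2) c²`,
and exceeds this value at a counterexample to the bound. -/
noncomputable def aa (m e t : ℝ) : ℝ := (e - 2 * (m + 1) * cc m e t) / cc m e t ^ 2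

lemma cc_spec {m e t : ℝ} (hm : 0 < m) (h : (m + 1) * t ≤ m * e ^ 2) :
    t = m * (2 * cc m e t * e - (m + 1) * cc m e t ^ 2) ∧ e ≤ (m + 1) * cc m e t := by
  have h0 : 0 ≤ e ^ 2 - (m + 1) / m * t := by
    rw [sub_nonneg, div_mul_eq_mul_div, div_le_iff₀ hm]; linarith
  have hsq := Real.sq_sqrt h0
  have hn := Real.sqrt_nonneg (e ^ 2 - (m + 1) / m * t)
  unfold cc
  set r := √(e ^ 2 - (m + 1) / m * t)
  constructor
  · field_simp
    field_simp at hsq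
    linear_combination hsq
  · field_simp; linarith

/-- The level varies, to first order, like `3 m c e - t` up to a positive factor. -/
lemma hasDerivAt_aa {m : ℝ} (hm : 0 < m) {e t : ℝ → ℝ} {e' t' : ℝ}
    (he : HasDerivAt e e' 0) (ht : HasDerivAt t t' 0) (he0 : 0 < e 0)
    (h : (m + 1) * t 0 < m * e 0 ^ 2) :
    HasDerivAt (fun s => aa m (e s) (t s))
      ((3 * m * cc m (e 0) (t 0) * e' - t') / (m * cc m (e 0) (t 0) ^ 3)) 0 := by
  have h0 : 0 < e 0 ^ 2 - (m + 1) / m * t 0 := by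
    rw [sub_pos, div_mul_eq_mul_div, div_lt_iff₀ hm]; linarith
  have hr : HasDerivAt (fun s => √(e s ^ 2 - (m + 1) / m * t s)) _ 0 :=
    ((he.fun_pow 2).fun_sub (ht.const_mul ((m + 1) / m))).sqrt h0.ne'
  have hc : HasDerivAt (fun s => cc m (e s) (t s)) _ 0 := (he.fun_add hr).div_const (m + 1)
  have hpos : 0 < cc m (e 0) (t 0) := by
    unfold cc; positivity
  have ha : HasDerivAt (fun s => aa m (e s) (t s)) _ 0 :=
    (he.fun_sub (hc.const_mul (2 * (m + 1)))).fun_div (hc.fun_pow 2) (by positivity)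
  refine ha.congr_deriv ?_
  have hsp := Real.sqrt_pos.2 h0
  have hsq := Real.sq_sqrt h0.le
  have hce : (m + 1) * cc m (e 0) (t 0) = e 0 + √(e 0 ^ 2 - (m + 1) / m * t 0) := by
    unfold cc; field_simp
  set r := √(e 0 ^ 2 - (m + 1) / m * t 0)
  set c := cc m (e 0) (t 0)
  have her : e 0 = (m + 1) * c - r := by linarith
  rw [her]
  field_simp
  norm_num
  ring

/-! ### Existence of an extremal weighted graph -/

lemma continuous_wE : Continuous fun p : (ι → ℝ) × (ι → ι → ℝ) => wE p.1 p.2 := by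
  unfold wE; fun_prop

lemma continuous_wT : Continuous fun p : (ι → ℝ) × (ι → ι → ℝ) => wT p.1 p.2 := by
  unfold wT; fun_prop

lemma isCompact_isWG : IsCompact {p : (ι → ℝ) × (ι → ι → ℝ) | IsWG p.1 p.2} := by
  refine (isCompact_Icc (a := (0 : (ι → ℝ) × (ι → ι → ℝ))) (b := 1)).of_isClosed_subset ?_ ?_
  · have : {p : (ι → ℝ) × (ι → ι → ℝ) | IsWG p.1 p.2} =
        {p | (∀ i, 0 ≤ p.1 i) ∧ ∑ i, p.1 i = 1 ∧ (∀ i j, 0 ≤ p.2 i j) ∧ (∀ i j, p.2 i j ≤ 1) ∧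
          ∀ i j, p.2 i j = p.2 j i} := by
      ext p
      exact ⟨fun h => ⟨h.1, h.2, h.3, h.4, h.5⟩, fun h => ⟨h.1, h.2.1, h.2.2.1, h.2.2.2.1, h.2.2.2.2⟩⟩
    rw [this]
    simp only [Set.ofPred_and, Set.ofPred_forall]
    refine IsClosed.inter (isClosed_iInter fun i => isClosed_le (by fun_prop) (by fun_prop)) <|
      IsClosed.inter (isClosed_eq (by fun_prop) (by fun_prop)) <|
      IsClosed.inter (isClosed_iInter fun i => isClosed_iInter fun j =>
        isClosed_le (by fun_prop) (by fun_prop)) <|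
      IsClosed.inter (isClosed_iInter fun i => isClosed_iInter fun j =>
        isClosed_le (by fun_prop) (by fun_prop)) <|
      isClosed_iInter fun i => isClosed_iInter fun j => isClosed_eq (by fun_prop) (by fun_prop)
  · rintro ⟨x, A⟩ h
    refine ⟨⟨h.nonneg, h.edge_nonneg⟩, ⟨fun i => ?_, h.edge_le⟩⟩
    show x i ≤ 1
    rw [← h.sum_one]
    exact Finset.single_le_sum (fun j _ => h.nonneg j) (Finset.mem_univ i)

/-- A point strictly below the line with parameter `c` has `cc` larger than `c`. -/
lemma lt_cc {m e t c : ℝ} (hm : 0 < m) (h : (m + 1) * t ≤ m * e ^ 2)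
    (ht : t < m * (2 * c * e - (m + 1) * c ^ 2)) : c < cc m e t := by
  obtain ⟨h1, h2⟩ := cc_spec hm h
  set d := cc m e t
  by_contra hcd
  rw [not_lt] at hcd
  rw [h1] at ht
  have := lt_of_mul_lt_mul_left ht hm.le
  nlinarith [mul_nonneg (sub_nonneg.2 hcd) (sub_nonneg.2 h2), sq_nonneg (c - d)]

lemma below_parabola {m e t c : ℝ} (hm : 0 < m) (ht : t < m * (2 * c * e - (m + 1) * c ^ 2)) :
    (m + 1) * t < m * e ^ 2 := by
  nlinarith [mul_nonneg hm.le (sq_nonneg (e - (m + 1) * c))]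

/-- A weighted graph with level above `-(m + 1)(m + 2)` lies neither at the two ends of the interval
`m / (m + 1) ≤ e ≤ (m + 1) / (m + 2)` nor on the parabola `(m + 1) t = m e²`, by Goodman's bound. -/
lemma interior_of_extremal {m e t c : ℝ} (hm : 0 < m) (hc : 0 < c) (hlo : m ≤ e * (m + 1))
    (hhi : e * (m + 2) ≤ m + 1) (hpar : (m + 1) * t ≤ m * e ^ 2)
    (ht : t = m * (2 * c * e - (m + 1) * c ^ 2)) (hec : e ≤ (m + 1) * c)
    (hbig : 2 * (m + 1) * c - (m + 1) * (m + 2) * c ^ 2 < e) (hgood : e * (2 * e - 1) ≤ t) :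
    (m + 1) * t < m * e ^ 2 ∧ e * (m + 2) < m + 1 ∧ m < e * (m + 1) := by
  have hm1 : 0 < m + 1 := by linarith
  have hi1 : (m + 1) * t < m * e ^ 2 := by
    refine lt_of_le_of_ne hpar fun heq => ?_
    have h1 : ((m + 1) * c - e) ^ 2 = 0 := by
      rw [ht] at heq
      have : m * ((m + 1) * c - e) ^ 2 = 0 := by linarith
      simpa [hm.ne'] using this
    have h2 : e = (m + 1) * c := by linarith [pow_eq_zero_iff (two_ne_zero) |>.1 h1]
    rw [h2] at hbig hhi
    have h3 : 0 < (m + 1) * c * ((m + 2) * c - 1) := by linarith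
    have h4 := pos_of_mul_pos_right h3 (by positivity)
    nlinarith
  refine ⟨hi1, lt_of_le_of_ne hhi fun heq => ?_, lt_of_le_of_ne hlo fun heq => ?_⟩
  · have h1 : m * e = (m + 1) * (2 * e - 1) := by linarith
    have h2 : m * e ^ 2 = (m + 1) * (e * (2 * e - 1)) := by
      rw [pow_two, ← mul_assoc, h1]; ring
    have h3 := mul_le_mul_of_nonneg_left hgood hm1.le
    linarith
  · have heq' : e = m / (m + 1) := by field_simp; linarith
    have hcge : m ≤ (m + 1) ^ 2 * c := by
      rw [heq', div_le_iff₀ hm1] at hec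
      linarith
    have hk : m * ((m - 1) / (m + 1) ^ 2) ≤ m * (2 * c * e - (m + 1) * c ^ 2) := by
      rw [← ht]
      refine le_trans (le_of_eq ?_) hgood
      rw [heq']; field_simp; ring
    have hk := le_of_mul_le_mul_left hk hm
    have hk2 : ((m + 1) * c - 1) * ((m + 1) ^ 2 * c - (m - 1)) ≤ 0 := by
      rw [heq', ← sub_nonneg] at hk
      have h1 : 2 * c * (m / (m + 1)) - (m + 1) * c ^ 2 - (m - 1) / (m + 1) ^ 2 =
        -(((m + 1) * c - 1) * ((m + 1) ^ 2 * c - (m - 1))) / (m + 1) ^ 2 := by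
        field_simp; ring
      rw [h1, le_div_iff₀ (by positivity)] at hk
      linarith
    have hcle : (m + 1) * c - 1 ≤ 0 := by
      by_contra hcon
      rw [not_le] at hcon
      have := mul_pos hcon (show 0 < (m + 1) ^ 2 * c - (m - 1) by linarith)
      linarith
    have h1 : 0 < ((m + 1) * c - 1) * ((m + 1) * (m + 2) * c - m) := by
      rw [heq', lt_div_iff₀ hm1] at hbig
      linarith
    have h2 : 0 ≤ (m + 1) * (m + 2) * c - m := by
      have := mul_pos hm1 hc
      linarith
    have := mul_nonpos_of_nonpos_of_nonneg hcle h2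
    linarith

/-- A point violating the bound at `c` has level above `-(m + 1)(m + 2)`; here `d` stands for `cc`. -/
lemma level_lt {m e c d : ℝ} (hm : 0 < m) (hc : 1 ≤ c * (m + 2)) (hcd : c < d)
    (he : 2 * (m + 1) * c - (m + 1) * (m + 2) * c ^ 2 ≤ e) :
    -((m + 1) * (m + 2)) * d ^ 2 < e - 2 * (m + 1) * d := by
  have h1 : 0 < (m + 1) * (d - c) * ((m + 2) * (d + c) - 2) :=
    mul_pos (mul_pos (by linarith) (sub_pos.2 hcd)) (by nlinarith)
  linarith

lemma cc_pos {m e t : ℝ} (hm : 0 < m) (he : 0 < e) : 0 < cc m e t := by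
  unfold cc; positivity

/-- First-order condition along a path starting at an interior maximum of the level. -/
lemma first_order {m e₀ t₀ e' t' : ℝ} {e t : ℝ → ℝ} (hm : 0 < m) (hepos : 0 < e₀)
    (hi1 : (m + 1) * t₀ < m * e₀ ^ 2) (hi2 : e₀ * (m + 2) < m + 1) (hi3 : m < e₀ * (m + 1))
    (hE : HasDerivAt e e' 0) (hT : HasDerivAt t t' 0) (he0 : e 0 = e₀) (ht0 : t 0 = t₀)
    (hmax : ∀ s ∈ Set.Ioc (0 : ℝ) (1 / 2), m ≤ e s * (m + 1) → e s * (m + 2) ≤ m + 1 →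
      (m + 1) * t s ≤ m * e s ^ 2 → aa m (e s) (t s) ≤ aa m e₀ t₀) :
    3 * m * cc m e₀ t₀ * e' ≤ t' := by
  subst he0 ht0
  have hcpos := cc_pos (t := t 0) hm hepos
  have hlim := (hasDerivAt_aa hm hE hT hepos hi1).tendsto_slope_zero_right
  have hec := hE.continuousAt
  have htc := hT.continuousAt
  have ev1 : ∀ᶠ s in nhds (0 : ℝ), m < e s * (m + 1) :=
    (hec.mul_const (m + 1)).eventually_const_lt hi3
  have ev2 : ∀ᶠ s in nhds (0 : ℝ), e s * (m + 2) < m + 1 :=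
    (hec.mul_const (m + 2)).eventually_lt_const hi2
  have ev3 : ∀ᶠ s in nhds (0 : ℝ), (m + 1) * t s < m * e s ^ 2 :=
    (htc.const_mul (m + 1)).eventually_lt ((hec.pow 2).const_mul m) hi1
  have ev4 : ∀ᶠ s in nhdsWithin (0 : ℝ) (Set.Ioi 0), s ∈ Set.Ioc (0 : ℝ) (1 / 2) :=
    Ioc_mem_nhdsGT (by norm_num)
  have hle := le_of_tendsto (b := 0) hlim (by
    filter_upwards [ev1.filter_mono nhdsWithin_le_nhds, ev2.filter_mono nhdsWithin_le_nhds,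
      ev3.filter_mono nhdsWithin_le_nhds, ev4] with s h1 h2 h3 h4
    have h5 := hmax s h4 h1.le h2.le h3.le
    rw [zero_add, smul_eq_mul]
    exact mul_nonpos_of_nonneg_of_nonpos (inv_nonneg.2 h4.1.le) (sub_nonpos.2 h5))
  rw [div_le_iff₀ (by positivity), zero_mul] at hle
  linarith

/-- A counterexample has its edge density between those of the balanced complete `(m + 1)`- and
`(m + 2)`-partite graphs. -/
lemma IsWG.density_bounds {m : ℝ} (hm : 0 < m) (h : IsWG x A) {c : ℝ}
    (hc : 1 ≤ c * (m + 2)) (hc' : c * (m + 1) ≤ 1)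
    (he : 2 * (m + 1) * c - (m + 1) * (m + 2) * c ^ 2 ≤ wE x A)
    (hlt : (m + 1) * wT x A < m * wE x A ^ 2) :
    m / (m + 1) ≤ wE x A ∧ wE x A ≤ (m + 1) / (m + 2) := by
  have hm1 : 0 < m + 1 := by linarith
  have hm2 : 0 < m + 2 := by linarith
  have hg := h.goodman
  have hlo : m / (m + 1) ≤ wE x A := by
    rw [div_le_iff₀ hm1]
    nlinarith [mul_nonneg (sub_nonneg.2 hc') (sub_nonneg.2 hc)]
  refine ⟨hlo, ?_⟩
  have hepos : 0 < wE x A := lt_of_lt_of_le (by positivity) hlo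
  rw [le_div_iff₀ hm2]
  have : (m + 1) * (2 * wE x A - 1) < m * wE x A := by
    refine lt_of_mul_lt_mul_left (a := wE x A) ?_ hepos.le
    have := mul_le_mul_of_nonneg_left hg hm1.le
    linarith
  linarith

lemma exists_max_level {m : ℝ} (hm : 0 < m) (h : IsWG x A) (hlo : m / (m + 1) ≤ wE x A)
    (hhi : wE x A ≤ (m + 1) / (m + 2)) (hpar : (m + 1) * wT x A ≤ m * wE x A ^ 2) :
    ∃ (y : ι → ℝ) (B : ι → ι → ℝ), IsWG y B ∧ m / (m + 1) ≤ wE y B ∧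
      wE y B ≤ (m + 1) / (m + 2) ∧ (m + 1) * wT y B ≤ m * wE y B ^ 2 ∧
      ∀ (y' : ι → ℝ) (B' : ι → ι → ℝ), IsWG y' B' → m / (m + 1) ≤ wE y' B' →
        wE y' B' ≤ (m + 1) / (m + 2) → (m + 1) * wT y' B' ≤ m * wE y' B' ^ 2 →
        aa m (wE y' B') (wT y' B') ≤ aa m (wE y B) (wT y B) := by
  have hm1 : 0 < m + 1 := by linarith
  set K : Set ((ι → ℝ) × (ι → ι → ℝ)) := {p | IsWG p.1 p.2} ∩ {p | m / (m + 1) ≤ wE p.1 p.2 ∧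
    wE p.1 p.2 ≤ (m + 1) / (m + 2) ∧ (m + 1) * wT p.1 p.2 ≤ m * wE p.1 p.2 ^ 2} with hK
  have hKc : IsCompact K := by
    refine isCompact_isWG.inter_right ?_
    simp only [Set.ofPred_and]
    exact (isClosed_le continuous_const continuous_wE).inter
      ((isClosed_le continuous_wE continuous_const).inter
      (isClosed_le (continuous_const.mul continuous_wT)
        (continuous_const.mul (continuous_wE.pow 2))))
  have hcont : ContinuousOn (fun p : (ι → ℝ) × (ι → ι → ℝ) => aa m (wE p.1 p.2) (wT p.1 p.2)) K := by
    have hcc : Continuous fun p : (ι → ℝ) × (ι → ι → ℝ) => cc m (wE p.1 p.2) (wT p.1 p.2) := by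
      unfold cc
      exact (continuous_wE.add (Real.continuous_sqrt.comp
        ((continuous_wE.pow 2).sub (continuous_const.mul continuous_wT)))).div_const _
    refine (continuous_wE.sub (continuous_const.mul hcc)).continuousOn.div (hcc.pow 2).continuousOn
      ?_
    rintro p ⟨_, h1, _, h3⟩
    exact pow_ne_zero _ (cc_pos hm (lt_of_lt_of_le (by positivity) h1)).ne'
  obtain ⟨⟨y, B⟩, ⟨hy, h1, h2, h3⟩, hmax⟩ :=
    hKc.exists_isMaxOn ⟨(x, A), h, hlo, hhi, hpar⟩ hcont
  exact ⟨y, B, hy, h1, h2, h3, fun y' B' g1 g2 g3 g4 =>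
    isMaxOn_iff.1 hmax (y', B') ⟨g1, g2, g3, g4⟩⟩

/-- A counterexample to the bound yields one of maximal level, at which the first-order condition
holds in every feasible direction. -/
lemma exists_extremal {m : ℝ} (hm : 0 < m) (h : IsWG x A) {c₁ : ℝ}
    (hc₁ : 1 / (m + 2) ≤ c₁) (hc₁' : c₁ ≤ 1 / (m + 1))
    (he : 2 * (m + 1) * c₁ - (m + 1) * (m + 2) * c₁ ^ 2 ≤ wE x A)
    (ht : wT x A < m * (2 * c₁ * wE x A - (m + 1) * c₁ ^ 2)) :
    ∃ (y : ι → ℝ) (B : ι → ι → ℝ) (c : ℝ), IsWG y B ∧ 0 < c ∧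
      wT y B = m * (2 * c * wE y B - (m + 1) * c ^ 2) ∧
      2 * (m + 1) * c - (m + 1) * (m + 2) * c ^ 2 < wE y B ∧
      ∀ (v : ι → ℝ) (V : ι → ι → ℝ), (∀ i j, V i j = V j i) →
        (∀ s ∈ Set.Ioc (0 : ℝ) (1 / 2),
          IsWG (fun i => y i + s * v i) (fun i j => B i j + s * V i j)) →
        3 * m * c * dE' y B v V ≤ dT' y B v V := by
  have hm1 : 0 < m + 1 := by linarith
  have hm2 : 0 < m + 2 := by linarith
  rw [div_le_iff₀ hm2] at hc₁
  rw [le_div_iff₀ hm1] at hc₁'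
  have hlt := below_parabola hm ht
  obtain ⟨hlo₁, hhi₁⟩ := h.density_bounds hm hc₁ hc₁' he hlt
  obtain ⟨y, B, hy, hlo, hhi, hpar, hmax⟩ := exists_max_level hm h hlo₁ hhi₁ hlt.le
  have hepos : 0 < wE y B := lt_of_lt_of_le (by positivity) hlo
  have hcpos := cc_pos (t := wT y B) hm hepos
  have hle := hmax x A h hlo₁ hhi₁ hlt.le
  obtain ⟨hsp1, hsp2⟩ := cc_spec hm hpar
  have hbig : 2 * (m + 1) * cc m (wE y B) (wT y B) -
      (m + 1) * (m + 2) * cc m (wE y B) (wT y B) ^ 2 < wE y B := by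
    have h1 : -((m + 1) * (m + 2)) < aa m (wE x A) (wT x A) := by
      have h0 := cc_pos (t := wT x A) hm (lt_of_lt_of_le (by positivity) hlo₁)
      rw [aa, lt_div_iff₀ (by positivity)]
      exact level_lt hm hc₁ (lt_cc hm hlt.le ht) he
    have h3 := h1.trans_le hle
    rw [aa, lt_div_iff₀ (by positivity)] at h3
    linarith
  rw [div_le_iff₀ hm1] at hlo
  rw [le_div_iff₀ hm2] at hhi
  obtain ⟨hi1, hi2, hi3⟩ := interior_of_extremal hm hcpos hlo hhi hpar hsp1 hsp2 hbig hy.goodman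
  refine ⟨y, B, _, hy, hcpos, hsp1, hbig, fun v V hV hfeas => ?_⟩
  have hE := hasDerivAt_wE (x := y) hy.symm v V
  have hT := hasDerivAt_wT (x := y) hy.symm v V hV
  have he0 : wE (fun i => y i + 0 * v i) (fun i j => B i j + 0 * V i j) = wE y B := by simp
  have ht0 : wT (fun i => y i + 0 * v i) (fun i j => B i j + 0 * V i j) = wT y B := by simp
  exact first_order hm hepos hi1 hi2 hi3 hE hT he0 ht0 fun s hs h1 h2 h3 =>
    hmax _ _ (hfeas s hs) (by rw [div_le_iff₀ hm1]; exact h1) (by rw [le_div_iff₀ hm2]; exact h2) h3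

/-! ### Consequences of extremality -/

/-- Stationarity under moving weight towards a vertex: `t_p - 2 μ d_p` is the same at all vertices of
positive weight. -/
lemma IsWG.vertex_condition (h : IsWG x A) {μ : ℝ}
    (hvar : ∀ (v : ι → ℝ) (V : ι → ι → ℝ), (∀ i j, V i j = V j i) →
        (∀ s ∈ Set.Ioc (0 : ℝ) (1 / 2),
          IsWG (fun i => x i + s * v i) (fun i j => A i j + s * V i j)) →
        3 * μ * dE' x A v V ≤ dT' x A v V) (p : ι) :
    x p * (wE (link x A p) A - 2 * μ * wD x A p - (wT x A - 2 * μ * wE x A)) = 0 := by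
  classical
  have key : ∀ q, 0 ≤ wE (link x A q) A - 2 * μ * wD x A q - (wT x A - 2 * μ * wE x A) := by
    intro q
    have hs : ∀ g : ι → ℝ, ∑ i, ((if i = q then 1 else 0) - x i) * g i = g q - ∑ i, x i * g i := by
      intro g
      simp [sub_mul, Finset.sum_sub_distrib]
    have := hvar (fun i => (if i = q then 1 else 0) - x i) (fun _ _ => 0) (fun _ _ => rfl) ?_
    · simp only [dE', dT', hs, ← wE_eq_sum_wD, ← wT_eq_sum_link, mul_zero, zero_mul,
        Finset.sum_const_zero, add_zero] at this
      linarith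
    · rintro s ⟨hs0, hs1⟩
      refine ⟨fun i => ?_, ?_, ?_, ?_, ?_⟩
      · have := h.nonneg i
        split_ifs <;> nlinarith
      · simp only [Finset.sum_add_distrib, ← Finset.mul_sum, Finset.sum_sub_distrib, h.sum_one]
        simp
      · simpa using h.edge_nonneg
      · simpa using h.edge_le
      · simpa using h.symm
  have hsum : ∑ q, x q * (wE (link x A q) A - 2 * μ * wD x A q - (wT x A - 2 * μ * wE x A)) = 0 := by
    have : ∑ q, x q * (wE (link x A q) A - 2 * μ * wD x A q - (wT x A - 2 * μ * wE x A)) =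
        (∑ q, x q * wE (link x A q) A) - 2 * μ * (∑ q, x q * wD x A q)
          - (wT x A - 2 * μ * wE x A) * ∑ q, x q := by
      simp only [Finset.mul_sum, ← Finset.sum_sub_distrib]
      exact Finset.sum_congr rfl fun q _ => by ring
    rw [this, h.sum_one, ← wE_eq_sum_wD, ← wT_eq_sum_link]; ring
  exact (Finset.sum_eq_zero_iff_of_nonneg fun q _ => mul_nonneg (h.nonneg q) (key q)).1 hsum p
    (Finset.mem_univ p)

/-- Stationarity under deleting an edge: the codegree along every edge is at most `μ`. -/
lemma IsWG.edge_condition (h : IsWG x A) {μ : ℝ}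
    (hvar : ∀ (v : ι → ℝ) (V : ι → ι → ℝ), (∀ i j, V i j = V j i) →
        (∀ s ∈ Set.Ioc (0 : ℝ) (1 / 2),
          IsWG (fun i => x i + s * v i) (fun i j => A i j + s * V i j)) →
        3 * μ * dE' x A v V ≤ dT' x A v V) (p q : ι) :
    0 ≤ x p * x q * A p q * (μ - wC x A p q) := by
  classical
  set δ : ι → ι → ℝ := fun a b => if a = b then 1 else 0 with hδ
  have hδ01 : ∀ a b, δ a b = 0 ∨ (δ a b = 1 ∧ a = b) := by
    intro a b
    simp only [hδ]; split_ifs with hab <;> simp [hab]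
  have hs : ∀ g : ι → ι → ℝ, ∑ i, ∑ j, x i * x j * (-A p q * (δ i p * δ j q + δ i q * δ j p)) * g i j
      = -A p q * (x p * x q * g p q + x q * x p * g q p) := by
    intro g
    have h1 : ∀ a b, ∑ i, ∑ j, δ i a * (δ j b * (x i * x j * g i j)) = x a * x b * g a b := by
      intro a b
      simp only [← Finset.mul_sum]
      simp [hδ]
    rw [← h1 p q, ← h1 q p]
    simp only [Finset.mul_sum, ← Finset.sum_add_distrib]
    exact Finset.sum_congr rfl fun i _ => Finset.sum_congr rfl fun j _ => by ring
  have := hvar (fun _ => 0) (fun i j => -A p q * (δ i p * δ j q + δ i q * δ j p))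
    (fun i j => by ring) ?_
  · have h1 := hs (wC x A)
    have h2 := hs (fun _ _ => 1)
    simp only [mul_one] at h2
    simp only [dE', dT', zero_mul, Finset.sum_const_zero, mul_zero, zero_add, h1, h2,
      wC_comm q p] at this
    linarith
  · rintro s ⟨hs0, hs1⟩
    have hpq := h.edge_nonneg p q
    have hδ0 : ∀ a b, 0 ≤ δ a b := fun a b => by
      simp only [hδ]; split_ifs <;> norm_num
    refine ⟨by simpa using h.nonneg, by simpa using h.sum_one, fun i j => ?_, fun i j => ?_,
      fun i j => ?_⟩
    · have hij := h.edge_nonneg i j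
      have h1 : δ i p * δ j q * A p q ≤ A i j := by
        rcases hδ01 i p with h1 | ⟨h1, rfl⟩
        · simpa [h1]
        · rcases hδ01 j q with h2 | ⟨h2, rfl⟩
          · simpa [h2]
          · simp [h1, h2]
      have h2 : δ i q * δ j p * A p q ≤ A i j := by
        rcases hδ01 i q with g1 | ⟨g1, rfl⟩
        · simpa [g1]
        · rcases hδ01 j p with g2 | ⟨g2, rfl⟩
          · simpa [g2]
          · simp [g1, g2, h.symm j i]
      have h3 : s * ((δ i p * δ j q + δ i q * δ j p) * A p q) ≤ s * (2 * A i j) :=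
        mul_le_mul_of_nonneg_left (by linarith) hs0.le
      have h4 : s * (2 * A i j) ≤ 1 / 2 * (2 * A i j) :=
        mul_le_mul_of_nonneg_right hs1 (by linarith)
      linarith
    · have := h.edge_le i j
      have h3 : 0 ≤ s * ((δ i p * δ j q + δ i q * δ j p) * A p q) :=
        mul_nonneg hs0.le (mul_nonneg (add_nonneg (mul_nonneg (hδ0 _ _) (hδ0 _ _))
          (mul_nonneg (hδ0 _ _) (hδ0 _ _))) hpq)
      linarith
    · rw [h.symm i j]; ring

/-! ### The bound for weighted graphs -/

/-- The lower bound on the triangles of a link with `D`, `E`, `T` its total weight, edges and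
triangles, when the degree `D` is too small for the induction hypothesis. `hT` is the homogeneous
form of Goodman's bound. -/
lemma goodman_link_bound {m c D E T : ℝ} (hm : 0 < m) (hc : 0 < c) (hD : 0 < D) (hDm : D ≤ m * c)
    (hE : E = 2 * m * c * D - m * (m + 1) * c ^ 2) (hT : E * (2 * E - D ^ 2) ≤ D * T) :
    (m - 1) * m * c ^ 2 * (3 * D - 2 * (m + 1) * c) ≤ T := by
  refine le_of_mul_le_mul_left (le_trans ?_ hT) hD
  have : E * (2 * E - D ^ 2) - D * ((m - 1) * m * c ^ 2 * (3 * D - 2 * (m + 1) * c)) =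
      2 * m * c * (m * c - D) * (c + (m * c - D)) ^ 2 := by
    rw [hE]; ring
  have : 0 ≤ 2 * m * c * (m * c - D) * (c + (m * c - D)) ^ 2 :=
    mul_nonneg (mul_nonneg (by positivity) (sub_nonneg.2 hDm)) (sq_nonneg _)
  linarith

/-- The triangle bound for weighted graphs, by induction on `m`: every edge density above the
extremal curve at parameter `c` forces `(e, t)` above the line with parameter `c`. -/
theorem weighted_bound (m : ℕ) : ∀ (x : ι → ℝ) (A : ι → ι → ℝ), IsWG x A → ∀ c : ℝ,
    1 / ((m : ℝ) + 2) ≤ c → c ≤ 1 / ((m : ℝ) + 1) →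
    2 * ((m : ℝ) + 1) * c - ((m : ℝ) + 1) * (m + 2) * c ^ 2 ≤ wE x A →
    m * (2 * c * wE x A - (m + 1) * c ^ 2) ≤ wT x A := by
  induction m with
  | zero =>
    intro x A h c _ _ _
    simpa using h.wT_nonneg
  | succ n ih =>
    intro x₁ A₁ h₁ c₁ hc₁ hc₁' he₁
    by_contra hcon
    rw [not_le] at hcon
    have hn : (n : ℝ) = ((n + 1 : ℕ) : ℝ) - 1 := by push_cast; ring
    have hm : (0 : ℝ) < ((n + 1 : ℕ) : ℝ) := by positivity
    rw [hn] at ih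
    generalize ((n + 1 : ℕ) : ℝ) = m at *
    obtain ⟨x, A, c, h, hc, ht, he, hvar⟩ := exists_extremal hm h₁ hc₁ hc₁' he₁ hcon
    have hvar' : ∀ (v : ι → ℝ) (V : ι → ι → ℝ), (∀ i j, V i j = V j i) →
        (∀ s ∈ Set.Ioc (0 : ℝ) (1 / 2),
          IsWG (fun i => x i + s * v i) (fun i j => A i j + s * V i j)) →
        3 * (m * c) * dE' x A v V ≤ dT' x A v V := by
      intro v V h1 h2
      rw [← mul_assoc]; exact hvar v V h1 h2
    have hV := h.vertex_condition hvar'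
    have hEd := h.edge_condition hvar'
    have hQ := h.sum_wT_link_le
    have hM := h.edge_multiplier hEd
    -- with `μ = m c`: `t_i = 2 μ d_i - m (m + 1) c²` for every vertex of positive weight
    have hti : ∀ i, 0 < x i →
        wE (link x A i) A = 2 * m * c * wD x A i - m * (m + 1) * c ^ 2 := by
      intro i hi
      have := (mul_eq_zero.1 (hV i)).resolve_left hi.ne'
      rw [ht] at this
      linarith
    have hti' : ∀ i, 0 < x i → wE (link x A i) A ≤ m * c * wD x A i := by
      intro i hi
      rw [wE_link, wD, Finset.mul_sum]
      refine Finset.sum_le_sum fun j _ => ?_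
      have h1 : 0 ≤ x i * (x j * A i j * (m * c - wC x A i j)) := by
        linarith [hEd i j]
      have := nonneg_of_mul_nonneg_right h1 hi
      linarith
    -- every link contains many triangles
    have hlow : ∀ i, x i * ((m - 1) * m * c ^ 2 * (3 * wD x A i - 2 * (m + 1) * c)) ≤
        x i * wT (link x A i) A := by
      intro i
      rcases (h.nonneg i).eq_or_lt with hi | hi
      · simp [← hi]
      refine mul_le_mul_of_nonneg_left ?_ hi.le
      have h1 := hti i hi
      have h2 := hti' i hi
      have hD0 := h.wD_nonneg i
      have hD : 0 < wD x A i := by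
        refine lt_of_le_of_ne hD0 fun h0 => ?_
        have : wE (link x A i) A = 0 := by
          refine le_antisymm (by rw [← h0] at h2; linarith) ?_
          unfold wE link
          exact Finset.sum_nonneg fun j _ => Finset.sum_nonneg fun k _ =>
            mul_nonneg (mul_nonneg (mul_nonneg (h.nonneg _) (h.edge_nonneg _ _))
              (mul_nonneg (h.nonneg _) (h.edge_nonneg _ _))) (h.edge_nonneg _ _)
        rw [← h0, this] at h1
        have : 0 < m * (m + 1) * c ^ 2 := by positivity
        linarith
      have hL := h.normalised_link hD
      have hLE := wE_smul (x := link x A i) (A := A) (wD x A i)⁻¹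
      have hLT := wT_smul (x := link x A i) (A := A) (wD x A i)⁻¹
      set D := wD x A i
      set E := wE (link x A i) A
      set T := wT (link x A i) A
      have hDle : D ≤ (m + 1) * c := by
        have : 0 ≤ m * c * ((m + 1) * c - D) := by linarith
        linarith [nonneg_of_mul_nonneg_right this (by positivity)]
      rcases le_total D (m * c) with hDm | hDm
      · refine goodman_link_bound hm hc hD hDm h1 ?_
        have hg := hL.goodman
        rw [hLE, hLT] at hg
        have hg := mul_le_mul_of_nonneg_left hg (pow_pos hD 4).le
        field_simp at hg
        linarith
      -- for `m c ≤ D ≤ (m + 1) c` the normalised link satisfies the induction hypothesis at `c / D`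
      · have hi := ih _ A hL (c / D) ?_ ?_ ?_
        · rw [hLE, hLT] at hi
          have hi := mul_le_mul_of_nonneg_left hi (pow_pos hD 3).le
          field_simp at hi
          refine le_trans (le_of_eq ?_) hi
          rw [h1]; ring
        · rw [div_le_div_iff₀ (by linarith) hD]; linarith
        · rw [div_le_div_iff₀ hD (by linarith)]; linarith
        · rw [hLE, h1]
          field_simp
          linarith
    have hQlow := Finset.sum_le_sum fun i (_ : i ∈ Finset.univ) => hlow i
    have hlin : ∑ i, x i * ((m - 1) * m * c ^ 2 * (3 * wD x A i - 2 * (m + 1) * c)) =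
        (m - 1) * m * c ^ 2 * (3 * wE x A - 2 * (m + 1) * c) := by
      have : ∑ i, x i * ((m - 1) * m * c ^ 2 * (3 * wD x A i - 2 * (m + 1) * c)) =
          (m - 1) * m * c ^ 2 * (3 * (∑ i, x i * wD x A i) - 2 * (m + 1) * c * ∑ i, x i) := by
        simp only [Finset.mul_sum, ← Finset.sum_sub_distrib]
        exact Finset.sum_congr rfl fun i _ => by ring
      rw [this, h.sum_one, ← wE_eq_sum_wD, mul_one]
    have hR : ∑ i, x i * wD x A i * wE (link x A i) A =
        2 * (m * c) * (∑ i, x i * wD x A i * wD x A i) - m * (m + 1) * c ^ 2 * wE x A := by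
      rw [wE_eq_sum_wD (x := x)]
      simp only [Finset.mul_sum, ← Finset.sum_sub_distrib]
      refine Finset.sum_congr rfl fun i _ => ?_
      rcases (h.nonneg i).eq_or_lt with hi | hi
      · simp [← hi]
      · rw [hti i hi]; ring
    rw [hlin] at hQlow
    rw [hR] at hQ hM
    have hfin : 0 < m * c * (wE x A - (2 * (m + 1) * c - (m + 1) * (m + 2) * c ^ 2)) :=
      mul_pos (by positivity) (sub_pos.2 he)
    -- the upper bound `hQ + 3 hM` on the `K₄` density minus the lower bound `hQlow` is the negative
    -- of the right-hand side of `hfin`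
    rw [ht] at hQ hM
    linarith

end Finite

/-! ### Passing from weighted graphs to graphons -/

section Kernel

open Filter Topology

variable {μ : Measure ℝ} [IsProbabilityMeasure μ]

/-- The edge density of a kernel `W` with respect to `μ`, as an iterated integral. -/
noncomputable def kE (μ : Measure ℝ) (W : ℝ → ℝ → ℝ) : ℝ := ∫ x, ∫ y, W x y ∂μ ∂μ

/-- The triangle density of a kernel `W` with respect to `μ`, as an iterated integral. -/
noncomputable def kT (μ : Measure ℝ) (W : ℝ → ℝ → ℝ) : ℝ :=
  ∫ x, ∫ y, ∫ z, W x y * W y z * W x z ∂μ ∂μ ∂μ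

/-- A symmetric measurable kernel with values in `[0,1]`. -/
structure IsKernel (W : ℝ → ℝ → ℝ) : Prop where
  measurable : Measurable (Function.uncurry W)
  nonneg : ∀ x y, 0 ≤ W x y
  le_one : ∀ x y, W x y ≤ 1
  symm : ∀ x y, W x y = W y x

/-- The inequality of `weighted_bound` for kernels, with a strict lower bound on the edge density,
so that the property is closed under limits of the two densities. -/
def HasTriangleBound (μ : Measure ℝ) (m : ℕ) (W : ℝ → ℝ → ℝ) : Prop :=
  ∀ c : ℝ, 1 / ((m : ℝ) + 2) ≤ c → c ≤ 1 / ((m : ℝ) + 1) →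
    2 * ((m : ℝ) + 1) * c - ((m : ℝ) + 1) * (m + 2) * c ^ 2 < kE μ W →
    m * (2 * c * kE μ W - (m + 1) * c ^ 2) ≤ kT μ W

lemma norm_integral_le_one {f : ℝ → ℝ} (hf : ∀ x, ‖f x‖ ≤ 1) : ‖∫ x, f x ∂μ‖ ≤ 1 := by
  simpa using norm_integral_le_of_norm_le_const (μ := μ) (C := 1) (Eventually.of_forall hf)

lemma tendsto_integral_le_one {f : ℕ → ℝ → ℝ} {g : ℝ → ℝ} (hf : ∀ n, StronglyMeasurable (f n))
    (h1 : ∀ n x, ‖f n x‖ ≤ 1) (h : ∀ᵐ x ∂μ, Tendsto (fun n => f n x) atTop (𝓝 (g x))) :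
    Tendsto (fun n => ∫ x, f n x ∂μ) atTop (𝓝 (∫ x, g x ∂μ)) :=
  tendsto_integral_of_dominated_convergence (fun _ => 1) (fun n => (hf n).aestronglyMeasurable)
    (integrable_const _) (fun n => Eventually.of_forall (h1 n)) h

lemma IsKernel.norm_le {W : ℝ → ℝ → ℝ} (h : IsKernel W) (x y : ℝ) : ‖W x y‖ ≤ 1 := by
  rw [Real.norm_of_nonneg (h.nonneg x y)]; exact h.le_one x y

lemma IsKernel.norm_triangle_le {W : ℝ → ℝ → ℝ} (h : IsKernel W) (x y z : ℝ) :
    ‖W x y * W y z * W x z‖ ≤ 1 := by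
  rw [norm_mul, norm_mul]
  exact mul_le_one₀ (mul_le_one₀ (h.norm_le _ _) (norm_nonneg _) (h.norm_le _ _)) (norm_nonneg _)
    (h.norm_le _ _)

lemma IsKernel.measurable_comp {W : ℝ → ℝ → ℝ} (h : IsKernel W) {α : Type*} [MeasurableSpace α]
    {f g : α → ℝ} (hf : Measurable f) (hg : Measurable g) : Measurable fun a => W (f a) (g a) :=
  h.measurable.comp (hf.prodMk hg)

lemma IsKernel.stronglyMeasurable_triangle {W : ℝ → ℝ → ℝ} (h : IsKernel W) :
    StronglyMeasurable fun p : (ℝ × ℝ) × ℝ => W p.1.1 p.1.2 * W p.1.2 p.2 * W p.1.1 p.2 :=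
  (((h.measurable_comp (by fun_prop) (by fun_prop)).mul
    (h.measurable_comp (by fun_prop) (by fun_prop))).mul
    (h.measurable_comp (by fun_prop) (by fun_prop))).stronglyMeasurable

lemma IsKernel.stronglyMeasurable_inner {W : ℝ → ℝ → ℝ} (h : IsKernel W) :
    StronglyMeasurable fun p : ℝ × ℝ => ∫ z, W p.1 p.2 * W p.2 z * W p.1 z ∂μ :=
  StronglyMeasurable.integral_prod_right
    (f := fun (p : ℝ × ℝ) z => W p.1 p.2 * W p.2 z * W p.1 z) h.stronglyMeasurable_triangle

lemma tendsto_kE {W : ℕ → ℝ → ℝ → ℝ} {V : ℝ → ℝ → ℝ} (hW : ∀ n, IsKernel (W n))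
    (h : ∀ᵐ x ∂μ, ∀ᵐ y ∂μ, Tendsto (fun n => W n x y) atTop (𝓝 (V x y))) :
    Tendsto (fun n => kE μ (W n)) atTop (𝓝 (kE μ V)) := by
  refine tendsto_integral_le_one
    (fun n => StronglyMeasurable.integral_prod_right (hW n).measurable.stronglyMeasurable)
    (fun n x => norm_integral_le_one ((hW n).norm_le x)) ?_
  filter_upwards [h] with x hx
  exact tendsto_integral_le_one
    (fun n => ((hW n).measurable_comp measurable_const measurable_id).stronglyMeasurable)
    (fun n => (hW n).norm_le x) hx

lemma tendsto_kT {W : ℕ → ℝ → ℝ → ℝ} {V : ℝ → ℝ → ℝ} (hW : ∀ n, IsKernel (W n))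
    (h : ∀ᵐ x ∂μ, ∀ᵐ y ∂μ, Tendsto (fun n => W n x y) atTop (𝓝 (V x y))) :
    Tendsto (fun n => kT μ (W n)) atTop (𝓝 (kT μ V)) := by
  refine tendsto_integral_le_one
    (fun n => StronglyMeasurable.integral_prod_right
      (f := fun x y => ∫ z, W n x y * W n y z * W n x z ∂μ) (hW n).stronglyMeasurable_inner)
    (fun n x => norm_integral_le_one fun y =>
      norm_integral_le_one fun z => (hW n).norm_triangle_le x y z) ?_
  filter_upwards [h] with x hx
  refine tendsto_integral_le_one
    (fun n => (hW n).stronglyMeasurable_inner.comp_measurable measurable_prodMk_left)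
    (fun n y => norm_integral_le_one fun z => (hW n).norm_triangle_le x y z) ?_
  filter_upwards [hx, h] with y hxy hy
  refine tendsto_integral_le_one
    (fun n => (hW n).stronglyMeasurable_triangle.comp_measurable
      (measurable_prodMk_left (x := (x, y))))
    (fun n => (hW n).norm_triangle_le x y) ?_
  filter_upwards [hx, hy] with z hxz hyz
  exact (hxy.mul hyz).mul hxz

lemma HasTriangleBound.of_tendsto {m : ℕ} {W : ℕ → ℝ → ℝ → ℝ} {V : ℝ → ℝ → ℝ} (hW : ∀ n, IsKernel (W n))
    (h : ∀ᵐ x ∂μ, ∀ᵐ y ∂μ, Tendsto (fun n => W n x y) atTop (𝓝 (V x y)))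
    (hb : ∀ n, HasTriangleBound μ m (W n)) : HasTriangleBound μ m V := by
  intro c hc hc' he
  have hE := tendsto_kE hW h
  refine le_of_tendsto_of_tendsto (((hE.const_mul (2 * c)).sub_const _).const_mul _)
    (tendsto_kT hW h) ?_
  filter_upwards [hE.eventually (lt_mem_nhds he)] with n hn
  exact hb n c hc hc' hn

lemma integral_comp_simpleFunc (s : SimpleFunc ℝ ℝ) (f : ℝ → ℝ) :
    ∫ x, f (s x) ∂μ = ∑ r : s.range, μ.real (s ⁻¹' {(r : ℝ)}) * f r := by
  have : ∀ x, f (s x) =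
      ∑ r : s.range, (s ⁻¹' {(r : ℝ)}).indicator (fun _ => f r) x := by
    intro x
    rw [Finset.sum_eq_single_of_mem (⟨s x, s.mem_range_self x⟩ : s.range) (Finset.mem_univ _)]
    · simp
    · intro r _ hr
      refine Set.indicator_of_notMem (fun hx => hr ?_) _
      exact Subtype.ext (by simpa using (Set.mem_singleton_iff.1 hx).symm)
  simp_rw [this]
  rw [integral_finsetSum _ fun r _ => (integrable_const _).indicator (s.measurableSet_fiber _)]
  exact Finset.sum_congr rfl fun r _ => by
    rw [integral_indicator_const _ (s.measurableSet_fiber _), smul_eq_mul]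

/-- A kernel that factors through a finite-valued map is a weighted graph on its values. -/
lemma hasTriangleBound_step (m : ℕ) (s : SimpleFunc ℝ ℝ) {g : ℝ → ℝ → ℝ} (hg : IsKernel g) :
    HasTriangleBound μ m (fun x y => g (s x) (s y)) := by
  intro c hc hc' he
  have hE : kE μ (fun x y => g (s x) (s y)) =
      wE (fun r : s.range => μ.real (s ⁻¹' {(r : ℝ)})) (fun r t => g r t) := by
    simp only [kE, wE]
    rw [integral_comp_simpleFunc s fun a => ∫ y, g a (s y) ∂μ]
    refine Finset.sum_congr rfl fun r _ => ?_
    rw [integral_comp_simpleFunc s fun b => g r b, Finset.mul_sum]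
    exact Finset.sum_congr rfl fun t _ => by ring
  have hT : kT μ (fun x y => g (s x) (s y)) =
      wT (fun r : s.range => μ.real (s ⁻¹' {(r : ℝ)})) (fun r t => g r t) := by
    simp only [kT, wT]
    rw [integral_comp_simpleFunc s fun a =>
      ∫ y, ∫ z, g a (s y) * g (s y) (s z) * g a (s z) ∂μ ∂μ]
    refine Finset.sum_congr rfl fun r _ => ?_
    rw [integral_comp_simpleFunc s fun b => ∫ z, g r b * g b (s z) * g r (s z) ∂μ, Finset.mul_sum]
    refine Finset.sum_congr rfl fun t _ => ?_
    rw [integral_comp_simpleFunc s fun b => g r t * g t b * g r b, Finset.mul_sum, Finset.mul_sum]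
    exact Finset.sum_congr rfl fun u _ => by ring
  have hWG : IsWG (fun r : s.range => μ.real (s ⁻¹' {(r : ℝ)})) (fun r t => g r t) := by
    refine ⟨fun _ => measureReal_nonneg, ?_, fun _ _ => hg.nonneg _ _, fun _ _ => hg.le_one _ _,
      fun _ _ => hg.symm _ _⟩
    have := integral_comp_simpleFunc (μ := μ) s fun _ => 1
    simpa using this.symm
  rw [hE] at he ⊢
  rw [hT]
  exact weighted_bound m _ _ hWG c hc hc' he.le

lemma hasTriangleBound_continuous (m : ℕ) {g : ℝ → ℝ → ℝ} (hg : IsKernel g)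
    (hc : Continuous (Function.uncurry g)) : HasTriangleBound μ m g := by
  have hid : StronglyMeasurable (id : ℝ → ℝ) := stronglyMeasurable_id
  refine HasTriangleBound.of_tendsto (W := fun n x y => g (hid.approx n x) (hid.approx n y))
    (fun n => ⟨hg.measurable_comp ((hid.approx n).measurable.comp measurable_fst)
      ((hid.approx n).measurable.comp measurable_snd), fun _ _ => hg.nonneg _ _,
      fun _ _ => hg.le_one _ _, fun _ _ => hg.symm _ _⟩) ?_ (fun n => hasTriangleBound_step m _ hg)
  refine Eventually.of_forall fun x => Eventually.of_forall fun y => ?_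
  exact (hc.tendsto (x, y)).comp ((hid.tendsto_approx x).prodMk_nhds (hid.tendsto_approx y))

/-- Every kernel is an a.e. limit of continuous kernels: density of continuous functions in `L¹`,
followed by clamping to `[0,1]` and symmetrisation. -/
lemma hasTriangleBound_kernel (m : ℕ) {W : ℝ → ℝ → ℝ} (hW : IsKernel W) : HasTriangleBound μ m W := by
  have hL : MemLp (Function.uncurry W) 1 (μ.prod μ) :=
    MemLp.of_bound hW.measurable.aestronglyMeasurable 1
      (Eventually.of_forall fun p => hW.norm_le p.1 p.2)
  have hex : ∀ n : ℕ, ∃ g : BoundedContinuousFunction (ℝ × ℝ) ℝ,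
      eLpNorm (Function.uncurry W - ⇑g) 1 (μ.prod μ) ≤ ((n : ENNReal) + 1)⁻¹ := fun n => by
    obtain ⟨g, hg, -⟩ := hL.exists_boundedContinuous_eLpNorm_sub_le ENNReal.one_ne_top
      (ε := ((n : ENNReal) + 1)⁻¹) (by simp)
    exact ⟨g, hg⟩
  choose g hg using hex
  have hlim : Tendsto (fun n => eLpNorm (⇑(g n) - Function.uncurry W) 1 (μ.prod μ)) atTop (𝓝 0) := by
    refine tendsto_of_tendsto_of_tendsto_of_le_of_le tendsto_const_nhds
      (h := fun n : ℕ => ((n : ENNReal) + 1)⁻¹) ?_ (fun _ => zero_le) fun n => ?_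
    · have := (tendsto_add_atTop_iff_nat 1).2 ENNReal.tendsto_inv_nat_nhds_zero
      simpa using this
    · rw [eLpNorm_sub_comm]; exact hg n
  obtain ⟨ns, -, hns⟩ := (tendstoInMeasure_of_tendsto_eLpNorm one_ne_zero
    (fun n => (g n).continuous.aestronglyMeasurable) hW.measurable.aestronglyMeasurable
    hlim).exists_seq_tendsto_ae
  have hns' := (Measure.measurePreserving_swap (μ := μ) (ν := μ)).quasiMeasurePreserving.ae hns
  have hclamp : Continuous fun t : ℝ => max 0 (min 1 t) := by fun_prop
  have hker : ∀ n, Continuous (Function.uncurry fun x y : ℝ =>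
      (max 0 (min 1 (g (ns n) (x, y))) + max 0 (min 1 (g (ns n) (y, x)))) / 2) := fun n => by
    simp only [Function.uncurry_def]
    fun_prop
  have hK : ∀ n, IsKernel (fun x y : ℝ =>
      (max 0 (min 1 (g (ns n) (x, y))) + max 0 (min 1 (g (ns n) (y, x)))) / 2) := fun n => by
    refine ⟨(hker n).measurable, fun x y => by positivity, fun x y => ?_, fun x y => by ring⟩
    have h : ∀ t : ℝ, max 0 (min 1 t) ≤ 1 := fun t => max_le zero_le_one (min_le_left _ _)
    linarith [h (g (ns n) (x, y)), h (g (ns n) (y, x))]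
  refine HasTriangleBound.of_tendsto hK ?_ fun n => hasTriangleBound_continuous m (hK n) (hker n)
  refine Measure.ae_ae_of_ae_prod (p := fun p : ℝ × ℝ => Tendsto (fun n =>
      (max 0 (min 1 (g (ns n) (p.1, p.2))) + max 0 (min 1 (g (ns n) (p.2, p.1)))) / 2)
      atTop (𝓝 (W p.1 p.2))) ?_
  filter_upwards [hns, hns'] with p h1 h2
  have h3 := ((hclamp.tendsto _).comp h1).add ((hclamp.tendsto _).comp h2) |>.div_const 2
  have h4 : (max 0 (min 1 (Function.uncurry W p)) +
      max 0 (min 1 (Function.uncurry W p.swap))) / 2 = W p.1 p.2 := by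
    simp only [Function.uncurry_def, Prod.fst_swap, Prod.snd_swap, hW.symm p.2 p.1]
    rw [min_eq_right (hW.le_one _ _), max_eq_right (hW.nonneg _ _)]
    ring
  rw [h4] at h3
  exact h3

end Kernel

end TriangleDensity

theorem razborov_triangle_bound (k : ℕ) (hk : 2 ≤ k) (z : ℝ)
    (hz : z ∈ Set.Ioc (0 : ℝ) (1 / (k : ℝ)))
    (G : Graphon)
    (he : dE G = (1 - z) * ((k : ℝ) * z + (k : ℝ) - 2) / ((k : ℝ) - 1)) :
    d3 G ≥ (1 - z) ^ 2 * ((k : ℝ) - 2) * (2 * z * (k : ℝ) + (k : ℝ) - 3) / ((k : ℝ) - 1) ^ 2 := by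
  obtain ⟨m, rfl⟩ := Nat.exists_eq_add_of_le' hk
  obtain ⟨hz0, hz1⟩ := hz
  push_cast at *
  have hm : (0 : ℝ) ≤ m := m.cast_nonneg
  have : IsProbabilityMeasure (volume.restrict (Set.Icc (0 : ℝ) 1)) := ⟨by simp⟩
  have hb := TriangleDensity.hasTriangleBound_kernel (μ := volume.restrict (Set.Icc (0 : ℝ) 1)) m (W := G.W)
    ⟨G.measurable, fun x y => (G.mem_Icc x y).1, fun x y => (G.mem_Icc x y).2, G.symm⟩
  have hM : (m : ℝ) + 2 - 1 = m + 1 := by ring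
  rw [hM] at he ⊢
  rw [le_div_iff₀ (by positivity)] at hz1
  -- the parts of the extremal graph other than the small one have measure `a`
  obtain ⟨a, ha⟩ : ∃ a, a = (1 - z) / ((m : ℝ) + 1) := ⟨_, rfl⟩
  have hz' : z = 1 - (m + 1) * a := by rw [ha]; field_simp; ring
  have ha1 : a < 1 / ((m : ℝ) + 1) := by rw [ha]; gcongr; linarith
  have ha2 : 1 / ((m : ℝ) + 2) ≤ a := by
    rw [ha, div_le_div_iff₀ (by positivity) (by positivity)]; nlinarith
  have heq : dE G = 2 * ((m : ℝ) + 1) * a - ((m : ℝ) + 1) * (m + 2) * a ^ 2 := by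
    rw [he, hz']; field_simp; ring
  have key : ∀ c ∈ Set.Ioo a (1 / ((m : ℝ) + 1)),
      m * (2 * c * dE G - (m + 1) * c ^ 2) ≤ d3 G := by
    intro c hc
    refine hb c (ha2.trans hc.1.le) hc.2.le ?_
    change _ < dE G
    rw [heq]
    -- `c ↦ 2(m+1)c - (m+1)(m+2)c²` decreases strictly on `[1/(m+2), ∞)`
    have h1 : 1 ≤ ((m : ℝ) + 2) * a := by
      rw [div_le_iff₀ (by positivity)] at ha2; linarith
    have h2 : 0 < ((m : ℝ) + 1) * (c - a) * ((m + 2) * (c + a) - 2) := by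
      have := hc.1
      refine mul_pos (mul_pos (by positivity) (by linarith)) ?_
      nlinarith
    linarith
  have hlim : Filter.Tendsto (fun c : ℝ => m * (2 * c * dE G - (m + 1) * c ^ 2))
      (nhdsWithin a (Set.Ioi a)) (nhds (m * (2 * a * dE G - (m + 1) * a ^ 2))) :=
    (Continuous.tendsto (by fun_prop) a).mono_left nhdsWithin_le_nhds
  have hfin : m * (2 * a * dE G - (m + 1) * a ^ 2) ≤ d3 G :=
    le_of_tendsto hlim (Filter.mem_of_superset (Ioo_mem_nhdsGT ha1) key)
  refine le_trans (le_of_eq ?_) hfin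
  rw [heq, hz']
  field_simp
  ring
end
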